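/- Let G be a planar simple graph of girth at least seven and maximum degree Δ(G) ≥ 190 + 2k, for some integer k ≥ 1. Then λ_{k,1}(G) ≤ Δ(G) + 2k − 1. -/

import Mathlib

open SimpleGraph

/-- A drawing of a simple graph in the plane: vertices are mapped to distinct points,
edges to arcs (injective continuous curves parametrised on `[0,1]`) joining the images of
their endpoints, whose interiors avoid the vertex points and each other. -/
structure PlaneEmbedding {V : Type*} (G : SimpleGraph V) where
  pos : V → ℝ × ℝ
  inj : Function.Injective pos
  arc : G.edgeSet → ℝ → ℝ × ℝ
  arc_cont : ∀ e, ContinuousOn (arc e) (Set.Icc 0 1)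
  arc_inj : ∀ e, Set.InjOn (arc e) (Set.Icc 0 1)
  arc_ends : ∀ e : G.edgeSet, ∃ u v : V, (e : Sym2 V) = s(u, v) ∧
      arc e 0 = pos u ∧ arc e 1 = pos v
  arc_avoid : ∀ e : G.edgeSet, ∀ t ∈ Set.Ioo (0:ℝ) 1, arc e t ∉ Set.range pos
  arc_disjoint : ∀ e f : G.edgeSet, e ≠ f → ∀ s ∈ Set.Ioo (0:ℝ) 1, ∀ t ∈ Set.Ioo (0:ℝ) 1,
      arc e s ≠ arc f t

/-- A graph is planar if it admits a drawing in the plane. -/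
def SimpleGraph.IsPlanar {V : Type*} (G : SimpleGraph V) : Prop :=
  Nonempty (PlaneEmbedding G)

/-- An `L(p,q)`-labelling: labels of adjacent vertices differ by at least `p`, and labels
of vertices at distance exactly two differ by at least `q`. -/
def SimpleGraph.IsLpqLabelling {V : Type*} (G : SimpleGraph V) (p q : ℕ) (f : V → ℤ) : Prop :=
  (∀ u v, G.Adj u v → (p : ℤ) ≤ |f u - f v|) ∧
  (∀ u v, u ≠ v → ¬ G.Adj u v → (∃ w, G.Adj u w ∧ G.Adj w v) → (q : ℤ) ≤ |f u - f v|)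

/-- `λ_{p,q}(G)`: the least `t` such that `G` has an `L(p,q)`-labelling with labels
in `{1, …, t}`. -/
noncomputable def SimpleGraph.lambdaNumber {V : Type*} (G : SimpleGraph V) (p q : ℕ) : ℕ :=
  sInf {t : ℕ | ∃ f : V → ℤ, G.IsLpqLabelling p q f ∧ ∀ v, f v ∈ Finset.Icc (1 : ℤ) (t : ℤ)}

/-!
A planar graph of girth at least seven is sparse: every nonempty set of vertices spans a subgraph of
average degree less than `14 / 5`. For this we need Euler's inequality, that a drawing with vertex
set `V` and edge set `E` has more than `|E| - |V|` faces, together with the facts that an edge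
borders at most two faces and that the edges bordering a face contain a cycle if there is another
face. Instead of the Jordan curve theorem we use continuous logarithms. By the theorem of Eilenberg
and Borsuk, a nowhere vanishing function on a compact set `K` in the plane is, up to exponentials, a
rational function with zeros and poles off `K`, and these can be moved within the components of the
complement. With few faces, some nontrivial product of the functions winding once along an edge
would therefore have a logarithm, although the cycle space is too small for that. Adding an arc to
`K` splits at most one component into at most two, and a drawn forest does not separate the plane,
since every nowhere vanishing function on it has a logarithm.

It remains to label sparse graphs. In a minimal counterexample, a vertex of degree two with both
neighbours of degree at most `13` can always be labelled last. Many vertices of low degree whose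
only other neighbour is a big hub can be relabelled simultaneously: this is a strong list colouring
problem, solved by recolouring along independent transversals, which exist by Rosenfeld's counting
argument. Hence such configurations are absent. Now start with the charge `5 d(v) - 14` at every
vertex `v`, and let the big vertices send charge `4` to each neighbour and most other vertices send
charge `4` to their neighbours of the first kind: the total charge becomes nonnegative, against the
sparsity.
-/

/-! ### Continuous logarithms -/

theorem exists_continuousOn_union {X Y : Type*} [TopologicalSpace X] [TopologicalSpace Y]
    {K L : Set X} (hK : IsClosed K) (hL : IsClosed L) {f g : X → Y} (hf : ContinuousOn f K)
    (hg : ContinuousOn g L) (hfg : Set.EqOn f g (K ∩ L)) :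
    ∃ k : X → Y, ContinuousOn k (K ∪ L) ∧ Set.EqOn k f K ∧ Set.EqOn k g L := by
  classical
  have hkf : Set.EqOn (K.piecewise f g) f K := Set.piecewise_eqOn K f g
  have hkg : Set.EqOn (K.piecewise f g) g L := fun z hz => by
    by_cases hzK : z ∈ K
    · rw [hkf hzK, hfg ⟨hzK, hz⟩]
    · exact Set.piecewise_eq_of_notMem K f g hzK
  exact ⟨K.piecewise f g, (hf.congr hkf).union_of_isClosed (hg.congr hkg) hK hL, hkf, hkg⟩

/-- `φ` has a continuous logarithm on `K`. By a theorem of Eilenberg and Borsuk, the functions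
without one detect the bounded components of the complement of a compact set in the plane. -/
def HasLogOn {X : Type*} [TopologicalSpace X] (K : Set X) (φ : X → ℂ) : Prop :=
  ∃ g : X → ℂ, ContinuousOn g K ∧ ∀ z ∈ K, φ z = Complex.exp (g z)

namespace HasLogOn

variable {X : Type*} [TopologicalSpace X] {K L : Set X} {φ ψ : X → ℂ}

theorem mono (h : HasLogOn K φ) (hL : L ⊆ K) : HasLogOn L φ := by
  obtain ⟨g, hg, he⟩ := h
  exact ⟨g, hg.mono hL, fun z hz => he z (hL hz)⟩

theorem congr (h : HasLogOn K φ) (hφ : ∀ z ∈ K, ψ z = φ z) : HasLogOn K ψ := by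
  obtain ⟨g, hg, he⟩ := h
  exact ⟨g, hg, fun z hz => (hφ z hz).trans (he z hz)⟩

theorem mul (h : HasLogOn K φ) (h' : HasLogOn K ψ) : HasLogOn K fun z => φ z * ψ z := by
  obtain ⟨g, hg, he⟩ := h
  obtain ⟨g', hg', he'⟩ := h'
  exact ⟨fun z => g z + g' z, hg.add hg', fun z hz => by
    simp only [he z hz, he' z hz, Complex.exp_add]⟩

theorem inv (h : HasLogOn K φ) : HasLogOn K fun z => (φ z)⁻¹ := by
  obtain ⟨g, hg, he⟩ := h
  exact ⟨fun z => -g z, hg.neg, fun z hz => by simp only [he z hz, Complex.exp_neg]⟩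

theorem div (h : HasLogOn K φ) (h' : HasLogOn K ψ) : HasLogOn K fun z => φ z / ψ z := by
  simpa only [div_eq_mul_inv] using h.mul h'.inv

theorem zpow (h : HasLogOn K φ) (n : ℤ) : HasLogOn K fun z => φ z ^ n := by
  obtain ⟨g, hg, he⟩ := h
  exact ⟨fun z => n * g z, continuousOn_const.mul hg, fun z hz => by
    simp only [he z hz, Complex.exp_int_mul]⟩

theorem const (K : Set X) {c : ℂ} (hc : c ≠ 0) : HasLogOn K fun _ => c :=
  ⟨fun _ => Complex.log c, continuousOn_const, fun _ _ => (Complex.exp_log hc).symm⟩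

theorem prod {ι : Type*} (s : Finset ι) {φ : ι → X → ℂ} (h : ∀ i ∈ s, HasLogOn K (φ i)) :
    HasLogOn K fun z => ∏ i ∈ s, φ i z := by
  classical
  induction s using Finset.induction_on with
  | empty => simpa using const K one_ne_zero
  | insert i s hi ih =>
    simp only [Finset.prod_insert hi]
    exact (h i (by simp)).mul (ih fun j hj => h j (by simp [hj]))

theorem of_slitPlane (hφ : ContinuousOn φ K) (h : ∀ z ∈ K, φ z ∈ Complex.slitPlane) :
    HasLogOn K φ :=
  ⟨fun z => Complex.log (φ z), hφ.clog h,
    fun z hz => (Complex.exp_log (Complex.slitPlane_ne_zero (h z hz))).symm⟩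

theorem of_norm_sub_one_lt (hφ : ContinuousOn φ K) (h : ∀ z ∈ K, ‖φ z - 1‖ < 1) :
    HasLogOn K φ :=
  of_slitPlane hφ fun z hz => by
    simpa using Complex.mem_slitPlane_of_norm_lt_one (h z hz)

theorem univ_of_simplyConnected [SimplyConnectedSpace X] [LocallyPathConnectedSpace X]
    (hφ : Continuous φ) (h0 : ∀ z, φ z ≠ 0) : HasLogOn Set.univ φ := by
  obtain ⟨x₀⟩ : Nonempty X := inferInstance
  obtain ⟨f, ⟨-, hf⟩, -⟩ := Complex.isCoveringMapOn_exp.existsUnique_continuousMap_lifts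
    (⟨φ, hφ⟩ : C(X, ℂ)) (a₀ := x₀) (e₀ := Complex.log (φ x₀)) (Complex.exp_log (h0 x₀))
    (fun x => by simpa using h0 x)
  exact ⟨f, f.continuous.continuousOn, fun z _ => (congrFun hf z).symm⟩

theorem Icc {a b : ℝ} (hab : a ≤ b) {φ : ℝ → ℂ} (hφ : ContinuousOn φ (Set.Icc a b))
    (h0 : ∀ t ∈ Set.Icc a b, φ t ≠ 0) : HasLogOn (Set.Icc a b) φ := by
  have hc : Continuous (Set.IccExtend hab ((Set.Icc a b).domRestrict φ)) :=
    (continuousOn_iff_continuous_domRestrict.1 hφ).Icc_extend'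
  have hlog := univ_of_simplyConnected hc fun t => h0 _ (Set.projIcc a b hab t).2
  refine (hlog.mono (Set.subset_univ _)).congr fun t ht => ?_
  rw [Set.IccExtend_of_mem _ _ ht]
  rfl

theorem exists_eq_at (h : HasLogOn K φ) {x : X} (hx : x ∈ K) {w : ℂ} (hw : φ x = Complex.exp w) :
    ∃ g : X → ℂ, ContinuousOn g K ∧ (∀ z ∈ K, φ z = Complex.exp (g z)) ∧ g x = w := by
  obtain ⟨g, hg, he⟩ := h
  refine ⟨fun z => g z + (w - g x), hg.add continuousOn_const, fun z hz => ?_, by ring⟩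
  rw [Complex.exp_add, Complex.exp_sub, ← hw, ← he x hx,
    div_self (he x hx ▸ Complex.exp_ne_zero _), mul_one, he z hz]

theorem union (hK : IsClosed K) (hL : IsClosed L) {g h : X → ℂ}
    (hg : ContinuousOn g K) (hgφ : ∀ z ∈ K, φ z = Complex.exp (g z))
    (hh : ContinuousOn h L) (hhφ : ∀ z ∈ L, φ z = Complex.exp (h z))
    (hgh : Set.EqOn g h (K ∩ L)) : HasLogOn (K ∪ L) φ := by
  obtain ⟨k, hk, hkg, hkh⟩ := exists_continuousOn_union hK hL hg hh hgh
  refine ⟨k, hk, ?_⟩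
  rintro z (hz | hz)
  · rw [hkg hz, hgφ z hz]
  · rw [hkh hz, hhφ z hz]

end HasLogOn

theorem exists_continuousOn_arc_inverse {X : Type*} [TopologicalSpace X] [T2Space X] {a b : ℝ}
    {γ : ℝ → X} (hγ : ContinuousOn γ (Set.Icc a b)) (hinj : Set.InjOn γ (Set.Icc a b)) :
    ∃ τ : X → ℝ, ContinuousOn τ (γ '' Set.Icc a b) ∧ ∀ t ∈ Set.Icc a b, τ (γ t) = t := by
  have hleft : ∀ t ∈ Set.Icc a b, Function.invFunOn γ (Set.Icc a b) (γ t) = t :=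
    fun t ht => hinj.leftInvOn_invFunOn ht
  refine ⟨Function.invFunOn γ (Set.Icc a b), ?_, hleft⟩
  rw [continuousOn_iff_isClosed]
  intro C hC
  refine ⟨γ '' (Set.Icc a b ∩ C), ?_, ?_⟩
  · exact ((isCompact_Icc.inter_right hC).image_of_continuousOn
      (hγ.mono Set.inter_subset_left)).isClosed
  · ext z
    constructor
    · rintro ⟨hz, t, ht, rfl⟩
      refine ⟨⟨t, ⟨ht, ?_⟩, rfl⟩, t, ht, rfl⟩
      simpa [hleft t ht] using hz
    · rintro ⟨⟨t, ⟨ht, htC⟩, rfl⟩, -⟩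
      exact ⟨by simpa [hleft t ht] using htC, t, ht, rfl⟩

theorem HasLogOn.arc {X : Type*} [TopologicalSpace X] [T2Space X] {γ : ℝ → X}
    (hγ : ContinuousOn γ (Set.Icc 0 1)) (hinj : Set.InjOn γ (Set.Icc 0 1)) {φ : X → ℂ}
    (hφ : ContinuousOn φ (γ '' Set.Icc 0 1)) (h0 : ∀ z ∈ γ '' Set.Icc 0 1, φ z ≠ 0) :
    HasLogOn (γ '' Set.Icc 0 1) φ := by
  obtain ⟨τ, hτ, hl⟩ := exists_continuousOn_arc_inverse hγ hinj
  obtain ⟨g, hg, he⟩ := HasLogOn.Icc zero_le_one (φ := fun t => φ (γ t))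
    (hφ.comp hγ (Set.mapsTo_image _ _)) (fun t ht => h0 _ ⟨t, ht, rfl⟩)
  refine ⟨fun z => g (τ z), hg.comp hτ ?_, ?_⟩
  · rintro _ ⟨t, ht, rfl⟩
    rwa [hl t ht]
  · rintro _ ⟨t, ht, rfl⟩
    simpa only [hl t ht] using he t ht

theorem exists_int_discrepancy {X : Type*} [TopologicalSpace X] {K : Set X}
    {g h : X → ℂ} (hg : ContinuousOn g K) (hh : ContinuousOn h K)
    (he : ∀ z ∈ K, Complex.exp (g z) = Complex.exp (h z)) :
    ∃ m : X → ℤ, ContinuousOn m K ∧ ∀ z ∈ K, g z = h z + m z * (2 * Real.pi * Complex.I) := by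
  have hmult : ∀ z : X, ∃ n : ℤ, z ∈ K → g z = h z + n * (2 * Real.pi * Complex.I) := by
    intro z
    by_cases hz : z ∈ K
    · obtain ⟨n, hn⟩ := Complex.exp_eq_exp_iff_exists_int.1 (he z hz)
      exact ⟨n, fun _ => hn⟩
    · exact ⟨0, fun h => absurd h hz⟩
  choose m hm using hmult
  refine ⟨m, ?_, hm⟩
  rw [Int.isClosedEmbedding_coe_real.isInducing.continuousOn_iff]
  have hc : ContinuousOn (fun z => ((g z - h z) / (2 * Real.pi * Complex.I)).re) K :=
    Complex.continuous_re.comp_continuousOn ((hg.sub hh).div_const _)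
  refine hc.congr fun z hz => ?_
  have hquot : (g z - h z) / (2 * Real.pi * Complex.I) = m z := by
    rw [hm z hz, add_sub_cancel_left, mul_div_assoc, div_self Complex.two_pi_I_ne_zero, mul_one]
  simp [hquot]

theorem sub_eq_sub_of_exp_eq_exp {X : Type*} [TopologicalSpace X] {K : Set X}
    (hK : IsPreconnected K)
    {g h : X → ℂ} (hg : ContinuousOn g K) (hh : ContinuousOn h K)
    (he : ∀ z ∈ K, Complex.exp (g z) = Complex.exp (h z)) {x y : X} (hx : x ∈ K) (hy : y ∈ K) :
    g x - h x = g y - h y := by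
  obtain ⟨m, hm, hgm⟩ := exists_int_discrepancy hg hh he
  rw [hgm x hx, hgm y hy, hK.constant hm hx hy]
  ring

/-- Products of integral powers of the functions `z - a` with `a ∈ A`: the rational functions
with leading coefficient `1` and with all zeros and poles in `A`. -/
inductive RationalWith (A : Set ℂ) : (ℂ → ℂ) → Prop
  | one : RationalWith A fun _ => 1
  | sub (a : ℂ) (ha : a ∈ A) : RationalWith A fun z => z - a
  | mul {R S : ℂ → ℂ} (hR : RationalWith A R) (hS : RationalWith A S) :
      RationalWith A fun z => R z * S z
  | inv {R : ℂ → ℂ} (hR : RationalWith A R) : RationalWith A fun z => (R z)⁻¹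

namespace RationalWith

variable {A B : Set ℂ} {R S : ℂ → ℂ}

theorem mono (hR : RationalWith A R) (h : A ⊆ B) : RationalWith B R := by
  induction hR with
  | one => exact .one
  | sub a ha => exact .sub a (h ha)
  | mul _ _ ih₁ ih₂ => exact ih₁.mul ih₂
  | inv _ ih => exact ih.inv

theorem ne_zero (hR : RationalWith A R) {z : ℂ} (hz : z ∉ A) : R z ≠ 0 := by
  induction hR with
  | one => exact one_ne_zero
  | sub a ha => exact sub_ne_zero.2 fun h => hz (h ▸ ha)
  | mul _ _ ih₁ ih₂ => exact mul_ne_zero ih₁ ih₂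
  | inv _ ih => exact inv_ne_zero ih

theorem continuousOn (hR : RationalWith A R) : ContinuousOn R Aᶜ := by
  induction hR with
  | one => exact continuousOn_const
  | sub a _ => exact continuousOn_id.sub continuousOn_const
  | mul _ _ ih₁ ih₂ => exact ih₁.mul ih₂
  | inv hR ih => exact ih.inv₀ fun z hz => hR.ne_zero hz

theorem div (hR : RationalWith A R) (hS : RationalWith A S) :
    RationalWith A fun z => R z / S z := by
  simpa only [div_eq_mul_inv] using hR.mul hS.inv

theorem zpow (hR : RationalWith A R) (n : ℤ) : RationalWith A fun z => R z ^ n := by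
  have hpow : ∀ n : ℕ, RationalWith A fun z => R z ^ n := by
    intro n
    induction n with
    | zero => simpa using one
    | succ n ih => simpa only [pow_succ] using ih.mul hR
  cases n with
  | ofNat n => simpa using hpow n
  | negSucc n => simpa only [zpow_negSucc] using (hpow (n + 1)).inv

theorem hasLogOn (hR : RationalWith A R) {K : Set ℂ}
    (h : ∀ a ∈ A, HasLogOn K fun z => z - a) : HasLogOn K R := by
  induction hR with
  | one => exact HasLogOn.const K one_ne_zero
  | sub a ha => exact h a ha
  | mul _ _ ih₁ ih₂ => exact ih₁.mul ih₂
  | inv _ ih => exact ih.inv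

end RationalWith

theorem isPreconnected_norm_gt {R : ℝ} (hR : 0 < R) : IsPreconnected {z : ℂ | R < ‖z‖} := by
  have h : {z : ℂ | R < ‖z‖} = Complex.exp '' {w : ℂ | Real.log R < w.re} := by
    ext z
    constructor
    · intro hz
      have h0 : z ≠ 0 := norm_pos_iff.1 (hR.trans hz)
      exact ⟨Complex.log z, by
        simpa [Complex.log_re] using Real.log_lt_log hR hz, Complex.exp_log h0⟩
    · rintro ⟨w, hw, rfl⟩
      simpa [Complex.norm_exp] using (Real.log_lt_iff_lt_exp hR).1 hw
  rw [h]
  exact (convex_halfSpace_re_gt _).isPreconnected.image _ Complex.continuous_exp.continuousOn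

theorem mem_component_comm {X : Type*} [TopologicalSpace X] {F : Set X} {a b : X}
    (h : b ∈ connectedComponentIn F a) : a ∈ connectedComponentIn F b := by
  rw [← connectedComponentIn_eq h]
  exact mem_connectedComponentIn (connectedComponentIn_nonempty_iff.1 ⟨b, h⟩)

theorem closure_component_subset {X : Type*} [TopologicalSpace X] [LocallyConnectedSpace X]
    {K : Set X} (hK : IsClosed K) (a : X) :
    closure (connectedComponentIn Kᶜ a) ⊆ connectedComponentIn Kᶜ a ∪ K := by
  intro x hx
  by_cases hxK : x ∈ K
  · exact Or.inr hxK
  · obtain ⟨y, hyx, hya⟩ := mem_closure_iff.1 hx _ hK.isOpen_compl.connectedComponentIn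
      (mem_connectedComponentIn hxK)
    rw [connectedComponentIn_eq hya]
    exact Or.inl (mem_component_comm hyx)

theorem norm_gt_subset_component {K : Set ℂ} {R : ℝ} (hR : 0 < R) (hKR : ∀ z ∈ K, ‖z‖ ≤ R) {c : ℂ}
    (hc : ¬ Bornology.IsBounded (connectedComponentIn Kᶜ c)) :
    {z : ℂ | R < ‖z‖} ⊆ connectedComponentIn Kᶜ c := by
  obtain ⟨z, hz, hzR⟩ : ∃ z ∈ connectedComponentIn Kᶜ c, R < ‖z‖ := by
    by_contra! h
    exact hc (isBounded_iff_forall_norm_le.2 ⟨R, h⟩)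
  rw [connectedComponentIn_eq hz]
  exact (isPreconnected_norm_gt hR).subset_connectedComponentIn hzR
    fun w hw hwK => (hKR w hwK).not_gt hw

theorem isBounded_component_or {K : Set ℂ} (hK : IsCompact K) {a b : ℂ}
    (hab : b ∉ connectedComponentIn Kᶜ a) (hb : b ∉ K) :
    Bornology.IsBounded (connectedComponentIn Kᶜ a) ∨
      Bornology.IsBounded (connectedComponentIn Kᶜ b) := by
  obtain ⟨R, hR, hKR⟩ := hK.isBounded.exists_pos_norm_le
  by_contra! hcon
  have hz : ((R + 1 : ℝ) : ℂ) ∈ {z : ℂ | R < ‖z‖} := by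
    simp only [Set.mem_ofPred_eq, Complex.norm_real, Real.norm_eq_abs]
    exact (lt_add_one R).trans_le (le_abs_self _)
  have h1 := connectedComponentIn_eq (norm_gt_subset_component hR hKR hcon.1 hz)
  have h2 := connectedComponentIn_eq (norm_gt_subset_component hR hKR hcon.2 hz)
  exact hab (by rw [h1, ← h2]; exact mem_connectedComponentIn hb)

theorem HasLogOn.sub_div_sub_of_dist_lt {K : Set ℂ} {a b : ℂ} (h : ∀ z ∈ K, dist b a < dist z b) :
    HasLogOn K fun z => (z - a) / (z - b) := by
  have hne : ∀ z ∈ K, z - b ≠ 0 := fun z hz =>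
    sub_ne_zero.2 (dist_pos.1 (dist_nonneg.trans_lt (h z hz)))
  refine HasLogOn.of_norm_sub_one_lt ((continuousOn_id.sub continuousOn_const).div
    (continuousOn_id.sub continuousOn_const) hne) fun z hz => ?_
  have hquot : (z - a) / (z - b) - 1 = (b - a) / (z - b) := by
    field_simp [hne z hz]
    ring
  rw [hquot, norm_div, div_lt_one (norm_pos_iff.2 (hne z hz)), ← dist_eq_norm, ← dist_eq_norm]
  exact h z hz

theorem HasLogOn.of_mem_component {K : Set ℂ} (hK : IsClosed K) {a b : ℂ}
    (hab : b ∈ connectedComponentIn Kᶜ a) : HasLogOn K fun z => (z - a) / (z - b) := by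
  have ha : a ∈ Kᶜ := connectedComponentIn_nonempty_iff.1 ⟨b, hab⟩
  have hsub := connectedComponentIn_subset Kᶜ a
  refine isPreconnected_connectedComponentIn.induction₂
    (fun x y => HasLogOn K fun z => (z - x) / (z - y)) ?_ ?_ ?_ (mem_connectedComponentIn ha) hab
  · intro x hx
    obtain ⟨ε, hε, hball⟩ := Metric.isOpen_iff.1 hK.isOpen_compl x (hsub hx)
    refine Filter.Eventually.filter_mono nhdsWithin_le_nhds ?_
    filter_upwards [Metric.ball_mem_nhds x (half_pos hε)] with y hy
    refine HasLogOn.sub_div_sub_of_dist_lt fun z hz => ?_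
    have hzx : ε ≤ dist z x := not_lt.1 fun h => hball (Metric.mem_ball.2 h) hz
    have htri := dist_triangle z y x
    rw [Metric.mem_ball] at hy
    linarith
  · intro x y z _ hy _ hxy hyz
    refine (hxy.mul hyz).congr fun w hw => ?_
    have : w - y ≠ 0 := sub_ne_zero.2 fun h => hsub hy (h ▸ hw)
    field_simp
  · exact fun x y _ _ h => h.inv.congr fun w _ => by simp

theorem not_hasLogOn_sphere {a : ℂ} {R : ℝ} (hR : 0 < R) {n : ℤ} (hn : n ≠ 0) :
    ¬ HasLogOn (Metric.sphere a R) fun z => (z - a) ^ n := by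
  rintro ⟨g, hg, he⟩
  have hmaps : ∀ t : ℝ, a + R * Complex.exp (t * Complex.I) ∈ Metric.sphere a R := by
    intro t
    simp [Complex.norm_exp_ofReal_mul_I, abs_of_pos hR]
  have hc : Continuous fun t : ℝ => a + R * Complex.exp (t * Complex.I) := by fun_prop
  have h := sub_eq_sub_of_exp_eq_exp (K := (Set.univ : Set ℝ)) isPreconnected_univ
    (g := fun t : ℝ => g (a + R * Complex.exp (t * Complex.I)))
    (h := fun t : ℝ => n * (Real.log R + t * Complex.I))
    (hg.comp hc.continuousOn fun t _ => hmaps t) (by fun_prop)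
    (fun t _ => by
      rw [← he _ (hmaps t), Complex.exp_int_mul, Complex.exp_add, ← Complex.ofReal_exp,
        Real.exp_log hR]
      simp only [add_sub_cancel_left])
    (Set.mem_univ 0) (Set.mem_univ (2 * Real.pi))
  simp only [Complex.ofReal_mul, Complex.ofReal_ofNat, Complex.exp_two_pi_mul_I,
    Complex.ofReal_zero, zero_mul, Complex.exp_zero] at h
  have hprod : (n : ℂ) * (2 * Real.pi * Complex.I) = 0 := by linear_combination h
  exact mul_ne_zero (Int.cast_ne_zero.2 hn) Complex.two_pi_I_ne_zero hprod

theorem HasLogOn.exists_continuous_extension {X : Type*} [TopologicalSpace X] [NormalSpace X]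
    {K U : Set X} (hK : IsClosed K) (hU : IsOpen U) (hUK : closure U ⊆ U ∪ K) {φ ψ : X → ℂ}
    (hφ : ContinuousOn φ Uᶜ) (hφ0 : ∀ z ∈ Uᶜ, φ z ≠ 0)
    (hψ : ContinuousOn ψ (closure U)) (hψ0 : ∀ z ∈ closure U, ψ z ≠ 0)
    (h : HasLogOn K fun z => φ z * ψ z) :
    ∃ S : X → ℂ, Continuous S ∧ (∀ z, S z ≠ 0) ∧ ∀ z ∈ Uᶜ, S z = φ z := by
  classical
  obtain ⟨g, hg, he⟩ := h
  obtain ⟨G, hG⟩ := ContinuousMap.exists_restrict_eq hK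
    (⟨K.domRestrict g, continuousOn_iff_continuous_domRestrict.1 hg⟩ : C(K, ℂ))
  have hGK : ∀ z ∈ K, G z = g z := fun z hz => congrArg (fun f : C(K, ℂ) => f ⟨z, hz⟩) hG
  set S : X → ℂ := (closure U).piecewise (fun z => Complex.exp (G z) / ψ z) φ
  have hScl : ∀ z ∈ closure U, S z = Complex.exp (G z) / ψ z :=
    fun z hz => Set.piecewise_eq_of_mem _ _ _ hz
  have hSU : ∀ z ∈ Uᶜ, S z = φ z := by
    intro z hz
    by_cases hzc : z ∈ closure U
    · have hzK : z ∈ K := (hUK hzc).resolve_left hz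
      rw [hScl z hzc, hGK z hzK, ← he z hzK, mul_div_assoc, div_self (hψ0 z hzc), mul_one]
    · exact Set.piecewise_eq_of_notMem _ _ _ hzc
  have hcover : closure U ∪ Uᶜ = Set.univ :=
    Set.eq_univ_of_univ_subset (Set.union_compl_self U ▸ Set.union_subset_union_left _
      subset_closure)
  refine ⟨S, ?_, fun z => ?_, hSU⟩
  · rw [← continuousOn_univ, ← hcover]
    exact ContinuousOn.union_of_isClosed (((Complex.continuous_exp.comp
      G.continuous).continuousOn.div hψ hψ0).congr hScl) (hφ.congr hSU) isClosed_closure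
      hU.isClosed_compl
  · by_cases hz : z ∈ closure U
    · rw [hScl z hz]
      exact div_ne_zero (Complex.exp_ne_zero _) (hψ0 z hz)
    · have hzU : z ∈ Uᶜ := fun h => hz (subset_closure h)
      rw [hSU z hzU]
      exact hφ0 z hzU

/-- A logarithm on `K` would let us replace the factor `(z - a) ^ n` inside the component, giving a
nowhere vanishing function on the plane that agrees with it on a large circle. -/
theorem not_hasLogOn_of_isBounded_component {K : Set ℂ} (hK : IsCompact K) {a : ℂ} (ha : a ∉ K)
    (hb : Bornology.IsBounded (connectedComponentIn Kᶜ a)) {n : ℤ} (hn : n ≠ 0) {R : ℂ → ℂ}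
    (hR : RationalWith (connectedComponentIn Kᶜ a ∪ K)ᶜ R) :
    ¬ HasLogOn K fun z => (z - a) ^ n * R z := by
  intro h
  have hcl := closure_component_subset hK.isClosed a
  have hne : ∀ z ∈ (connectedComponentIn Kᶜ a)ᶜ, z - a ≠ 0 := fun z hz =>
    sub_ne_zero.2 fun hza => hz (hza.symm ▸ mem_connectedComponentIn ha)
  obtain ⟨S, hS, hS0, hSa⟩ := h.exists_continuous_extension hK.isClosed
    hK.isClosed.isOpen_compl.connectedComponentIn hcl
    ((continuousOn_id.sub continuousOn_const).zpow₀ n fun z hz => Or.inl (hne z hz))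
    (fun z hz => zpow_ne_zero n (hne z hz))
    (hR.continuousOn.mono fun z hz => not_not_intro (hcl hz))
    (fun z hz => hR.ne_zero (not_not_intro (hcl hz)))
  obtain ⟨r, hr, hUr⟩ := hb.subset_ball_lt 0 a
  refine not_hasLogOn_sphere hr hn (((HasLogOn.univ_of_simplyConnected hS hS0).mono
    (Set.subset_univ (Metric.sphere a r))).congr fun z hz => (hSa z fun hzU => ?_).symm)
  exact (Metric.mem_ball.1 (hUr hzU)).ne (Metric.mem_sphere.1 hz)

theorem mem_component_of_hasLogOn {K : Set ℂ} (hK : IsCompact K) {a b : ℂ} (ha : a ∉ K)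
    (hb : b ∉ K) (h : HasLogOn K fun z => (z - a) / (z - b)) :
    b ∈ connectedComponentIn Kᶜ a := by
  by_contra hab
  have hba : a ∉ connectedComponentIn Kᶜ b := fun h => hab (mem_component_comm h)
  rcases isBounded_component_or hK hab hb with hbd | hbd
  · refine not_hasLogOn_of_isBounded_component hK ha hbd one_ne_zero
      (RationalWith.sub b (not_or_intro hab hb)).inv (h.congr fun z _ => ?_)
    rw [zpow_one, div_eq_mul_inv]
  · refine not_hasLogOn_of_isBounded_component hK hb hbd one_ne_zero
      (RationalWith.sub a (not_or_intro hba ha)).inv (h.inv.congr fun z _ => ?_)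
    rw [zpow_one, inv_div, div_eq_mul_inv]

theorem not_hasLogOn_of_notMem_component {K : Set ℂ} (hK : IsCompact K) {a b c : ℂ}
    (ha : a ∉ K) (hb : b ∉ K) (hc : c ∉ K) (hab : b ∉ connectedComponentIn Kᶜ a)
    (hac : c ∉ connectedComponentIn Kᶜ a) (hbc : c ∉ connectedComponentIn Kᶜ b) {m n : ℤ}
    (hm : m ≠ 0) (hn : n ≠ 0) :
    ¬ HasLogOn K fun z => ((z - a) / (z - b)) ^ m * ((z - a) / (z - c)) ^ n := by
  wlog hbd : Bornology.IsBounded (connectedComponentIn Kᶜ b) generalizing b c m n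
  · have hcd := (isBounded_component_or hK hbc hc).resolve_left hbd
    exact fun h => this hc hb hac hab (fun h => hbc (mem_component_comm h)) hn hm hcd
      (h.congr fun z _ => mul_comm _ _)
  intro h
  have hba : a ∉ connectedComponentIn Kᶜ b := fun h => hab (mem_component_comm h)
  have ha' : a ∈ (connectedComponentIn Kᶜ b ∪ K)ᶜ := not_or_intro hba ha
  have hc' : c ∈ (connectedComponentIn Kᶜ b ∪ K)ᶜ := not_or_intro hbc hc
  refine not_hasLogOn_of_isBounded_component hK hb hbd (neg_ne_zero.2 hm)
    (((RationalWith.sub a ha').zpow m).mul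
      (((RationalWith.sub a ha').div (RationalWith.sub c hc')).zpow n)) (h.congr fun z _ => ?_)
  rw [div_zpow (z - a) (z - b), zpow_neg]
  ring

theorem eq_zero_or_one_of_arc_mem {X : Type*} {K : Set X} {γ : ℝ → X}
    (hγK : ∀ t ∈ Set.Ioo (0 : ℝ) 1, γ t ∉ K) {t : ℝ} (ht : t ∈ Set.Icc (0 : ℝ) 1)
    (htK : γ t ∈ K) : t = 0 ∨ t = 1 := by
  rcases eq_or_lt_of_le ht.1 with h0 | h0
  · exact Or.inl h0.symm
  rcases eq_or_lt_of_le ht.2 with h1 | h1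
  · exact Or.inr h1
  · exact absurd htK (hγK t ⟨h0, h1⟩)

section Arc

variable {X : Type*} [TopologicalSpace X] {K : Set X} {γ : ℝ → X}

theorem exists_logs_eq_at_zero {φ : X → ℂ} (hφK : HasLogOn K φ)
    (hφγ : HasLogOn (γ '' Set.Icc 0 1) φ) (h0 : γ 0 ∈ K) (h1 : γ 1 ∈ K) :
    ∃ (g h : X → ℂ) (d : ℤ), ContinuousOn g K ∧ (∀ z ∈ K, φ z = Complex.exp (g z)) ∧
      ContinuousOn h (γ '' Set.Icc 0 1) ∧ (∀ z ∈ γ '' Set.Icc 0 1, φ z = Complex.exp (h z)) ∧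
      g (γ 0) = h (γ 0) ∧ g (γ 1) = h (γ 1) + d * (2 * Real.pi * Complex.I) := by
  obtain ⟨g, hg, hgφ⟩ := hφK
  obtain ⟨h, hh, hhφ, hgh⟩ := hφγ.exists_eq_at (Set.mem_image_of_mem γ (by simp)) (hgφ _ h0)
  obtain ⟨d, hd⟩ := Complex.exp_eq_exp_iff_exists_int.1
    ((hgφ _ h1).symm.trans (hhφ _ (Set.mem_image_of_mem γ (by simp))))
  exact ⟨g, h, d, hg, hgφ, hh, hhφ, hgh.symm, hd⟩

variable [T2Space X]

theorem exists_winding_function (hK : IsClosed K) (hγ : ContinuousOn γ (Set.Icc 0 1))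
    (hinj : Set.InjOn γ (Set.Icc 0 1)) (hγK : ∀ t ∈ Set.Ioo (0 : ℝ) 1, γ t ∉ K) :
    ∃ φ : X → ℂ, ContinuousOn φ (K ∪ γ '' Set.Icc 0 1) ∧ (∀ z ∈ K, φ z = 1) ∧
      ∀ t ∈ Set.Icc (0 : ℝ) 1, φ (γ t) = Complex.exp (t * (2 * Real.pi * Complex.I)) := by
  obtain ⟨τ, hτ, hl⟩ := exists_continuousOn_arc_inverse hγ hinj
  have hexp : ContinuousOn (fun z => Complex.exp (τ z * (2 * Real.pi * Complex.I)))
      (γ '' Set.Icc 0 1) :=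
    Complex.continuous_exp.comp_continuousOn
      ((Complex.continuous_ofReal.comp_continuousOn hτ).mul continuousOn_const)
  obtain ⟨φ, hφ, hφK, hφγ⟩ := exists_continuousOn_union hK
    (isCompact_Icc.image_of_continuousOn hγ).isClosed (f := fun _ => (1 : ℂ)) continuousOn_const
    hexp <| by
      rintro _ ⟨hzK, t, ht, rfl⟩
      rcases eq_zero_or_one_of_arc_mem hγK ht hzK with rfl | rfl <;> simp [hl _ ht]
  exact ⟨φ, hφ, fun z hz => hφK hz, fun t ht => by
    simpa only [hl t ht] using hφγ (Set.mem_image_of_mem γ ht)⟩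

theorem HasLogOn.union_arc (hK : IsClosed K) (hγ : ContinuousOn γ (Set.Icc 0 1))
    (hγK : ∀ t ∈ Set.Ioo (0 : ℝ) 1, γ t ∉ K) {φ g h : X → ℂ}
    (hg : ContinuousOn g K) (hgφ : ∀ z ∈ K, φ z = Complex.exp (g z))
    (hh : ContinuousOn h (γ '' Set.Icc 0 1))
    (hhφ : ∀ z ∈ γ '' Set.Icc 0 1, φ z = Complex.exp (h z))
    (h0 : g (γ 0) = h (γ 0)) (h1 : g (γ 1) = h (γ 1)) : HasLogOn (K ∪ γ '' Set.Icc 0 1) φ := by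
  refine HasLogOn.union hK (isCompact_Icc.image_of_continuousOn hγ).isClosed hg hgφ hh hhφ ?_
  rintro _ ⟨hzK, t, ht, rfl⟩
  rcases eq_zero_or_one_of_arc_mem hγK ht hzK with rfl | rfl
  exacts [h0, h1]

/-- The two logarithms of `φ` differ by a multiple of `2πi` at the second end point of the arc, and
so do those of `ψ`; a combination of the two functions cancels these multiples. -/
theorem HasLogOn.union_arc_or_or (hK : IsClosed K) (hγ : ContinuousOn γ (Set.Icc 0 1))
    (hγK : ∀ t ∈ Set.Ioo (0 : ℝ) 1, γ t ∉ K) (h0 : γ 0 ∈ K) (h1 : γ 1 ∈ K) {φ ψ : X → ℂ}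
    (hφK : HasLogOn K φ) (hφγ : HasLogOn (γ '' Set.Icc 0 1) φ)
    (hψK : HasLogOn K ψ) (hψγ : HasLogOn (γ '' Set.Icc 0 1) ψ) :
    HasLogOn (K ∪ γ '' Set.Icc 0 1) φ ∨ HasLogOn (K ∪ γ '' Set.Icc 0 1) ψ ∨
      ∃ m n : ℤ, m ≠ 0 ∧ n ≠ 0 ∧ HasLogOn (K ∪ γ '' Set.Icc 0 1) fun z => φ z ^ m * ψ z ^ n := by
  obtain ⟨g₁, k₁, d₁, hg₁, hgφ, hk₁, hkφ, hz₁, ho₁⟩ := exists_logs_eq_at_zero hφK hφγ h0 h1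
  obtain ⟨g₂, k₂, d₂, hg₂, hgψ, hk₂, hkψ, hz₂, ho₂⟩ := exists_logs_eq_at_zero hψK hψγ h0 h1
  by_cases hd₁ : d₁ = 0
  · exact Or.inl (HasLogOn.union_arc hK hγ hγK hg₁ hgφ hk₁ hkφ hz₁ (by simpa [hd₁] using ho₁))
  by_cases hd₂ : d₂ = 0
  · exact Or.inr (Or.inl
      (HasLogOn.union_arc hK hγ hγK hg₂ hgψ hk₂ hkψ hz₂ (by simpa [hd₂] using ho₂)))
  refine Or.inr (Or.inr ⟨d₂, -d₁, hd₂, neg_ne_zero.2 hd₁, HasLogOn.union_arc hK hγ hγK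
    (g := fun z => d₂ * g₁ z + (-d₁ : ℤ) * g₂ z) (h := fun z => d₂ * k₁ z + (-d₁ : ℤ) * k₂ z)
    ((continuousOn_const.mul hg₁).add (continuousOn_const.mul hg₂)) (fun z hz => ?_)
    ((continuousOn_const.mul hk₁).add (continuousOn_const.mul hk₂)) (fun z hz => ?_) ?_ ?_⟩)
  · rw [hgφ z hz, hgψ z hz, Complex.exp_add, Complex.exp_int_mul, Complex.exp_int_mul]
  · rw [hkφ z hz, hkψ z hz, Complex.exp_add, Complex.exp_int_mul, Complex.exp_int_mul]
  · rw [hz₁, hz₂]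
  · rw [ho₁, ho₂]
    push_cast
    ring

end Arc

/-- The points of `P` lie off `K` and meet every component of the complement of `K`. -/
def RepresentsComponents {X : Type*} [TopologicalSpace X] (K P : Set X) : Prop :=
  P ⊆ Kᶜ ∧ ∀ z ∉ K, ∃ p ∈ P, z ∈ connectedComponentIn Kᶜ p

theorem RepresentsComponents.exists_distinct {X : Type*} [TopologicalSpace X] {K P : Set X}
    (hP : RepresentsComponents K P) (hfin : P.Finite) :
    ∃ Q : Finset X, RepresentsComponents K Q ∧
      ∀ p ∈ Q, ∀ q ∈ Q, q ∈ connectedComponentIn Kᶜ p → p = q := by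
  classical
  have hne : ∃ n, ∃ Q : Finset X, RepresentsComponents K Q ∧ Q.card = n :=
    ⟨_, hfin.toFinset, by simpa using hP, rfl⟩
  obtain ⟨Q, hQ, hcard⟩ := Nat.find_spec hne
  refine ⟨Q, hQ, fun p hp q hq hpq => ?_⟩
  by_contra hpq'
  refine Nat.find_min hne (m := (Q.erase q).card)
    (by rw [← hcard]; exact Finset.card_erase_lt_of_mem hq) ⟨Q.erase q, ⟨?_, ?_⟩, rfl⟩
  · exact fun x hx => hQ.1 (Finset.mem_of_mem_erase hx)
  · intro z hz
    obtain ⟨r, hr, hzr⟩ := hQ.2 z hz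
    by_cases hrq : r = q
    · subst hrq
      exact ⟨p, by simp [hp, hpq'], by rw [connectedComponentIn_eq hpq]; exact hzr⟩
    · exact ⟨r, by simpa [hrq] using hr, hzr⟩

section PlaneArc

variable {K : Set ℂ} {γ : ℝ → ℂ}

theorem component_union_arc (hK : IsCompact K) (hγ : ContinuousOn γ (Set.Icc 0 1))
    (hinj : Set.InjOn γ (Set.Icc 0 1)) (hγK : ∀ t ∈ Set.Ioo (0 : ℝ) 1, γ t ∉ K) (h0 : γ 0 ∈ K)
    (h1 : γ 1 ∈ K) {a b c : ℂ} (ha : a ∉ K ∪ γ '' Set.Icc 0 1) (hb : b ∉ K ∪ γ '' Set.Icc 0 1)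
    (hc : c ∉ K ∪ γ '' Set.Icc 0 1)
    (hab : b ∈ connectedComponentIn Kᶜ a) (hac : c ∈ connectedComponentIn Kᶜ a) :
    b ∈ connectedComponentIn (K ∪ γ '' Set.Icc 0 1)ᶜ a ∨
      c ∈ connectedComponentIn (K ∪ γ '' Set.Icc 0 1)ᶜ a ∨
      c ∈ connectedComponentIn (K ∪ γ '' Set.Icc 0 1)ᶜ b := by
  have hM : IsCompact (K ∪ γ '' Set.Icc 0 1) := hK.union (isCompact_Icc.image_of_continuousOn hγ)
  have hne : ∀ x ∉ K ∪ γ '' Set.Icc 0 1, ∀ z ∈ γ '' Set.Icc 0 1, z - x ≠ 0 :=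
    fun x hx z hz h => hx (Or.inr (sub_eq_zero.1 h ▸ hz))
  have harc : ∀ x ∉ K ∪ γ '' Set.Icc 0 1,
      HasLogOn (γ '' Set.Icc 0 1) fun z => (z - a) / (z - x) := fun x hx =>
    HasLogOn.arc hγ hinj ((continuousOn_id.sub continuousOn_const).div
      (continuousOn_id.sub continuousOn_const) (hne x hx))
      fun z hz => div_ne_zero (hne a ha z hz) (hne x hx z hz)
  rcases HasLogOn.union_arc_or_or hK.isClosed hγ hγK h0 h1
    (HasLogOn.of_mem_component hK.isClosed hab) (harc b hb)
    (HasLogOn.of_mem_component hK.isClosed hac) (harc c hc) with h | h | ⟨m, n, hm, hn, h⟩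
  · exact Or.inl (mem_component_of_hasLogOn hM ha hb h)
  · exact Or.inr (Or.inl (mem_component_of_hasLogOn hM ha hc h))
  · by_contra! hcon
    exact not_hasLogOn_of_notMem_component hM ha hb hc hcon.1 hcon.2.1 hcon.2.2 hm hn h

theorem exists_finite_representatives_union_arc (hK : IsCompact K)
    (hγ : ContinuousOn γ (Set.Icc 0 1)) (hinj : Set.InjOn γ (Set.Icc 0 1))
    (hγK : ∀ t ∈ Set.Ioo (0 : ℝ) 1, γ t ∉ K) (h0 : γ 0 ∈ K) (h1 : γ 1 ∈ K) (p : ℂ) :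
    ∃ Q : Set ℂ, Q.Finite ∧ Q ⊆ (K ∪ γ '' Set.Icc 0 1)ᶜ ∧
      ∀ z ∉ K ∪ γ '' Set.Icc 0 1, z ∈ connectedComponentIn Kᶜ p →
        ∃ q ∈ Q, z ∈ connectedComponentIn (K ∪ γ '' Set.Icc 0 1)ᶜ q := by
  set M := K ∪ γ '' Set.Icc 0 1
  by_cases hx : ∃ x ∉ M, x ∈ connectedComponentIn Kᶜ p
  swap
  · push Not at hx
    exact ⟨∅, by simp, by simp, fun z hz hzp => absurd hzp (hx z hz)⟩
  obtain ⟨x, hxM, hxp⟩ := hx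
  by_cases hy : ∃ y ∉ M, y ∈ connectedComponentIn Kᶜ p ∧ y ∉ connectedComponentIn Mᶜ x
  swap
  · push Not at hy
    exact ⟨{x}, by simp, by simpa using hxM, fun z hz hzp => ⟨x, rfl, hy z hz hzp⟩⟩
  obtain ⟨y, hyM, hyp, hyx⟩ := hy
  refine ⟨{x, y}, by simp, ?_, fun z hz hzp => ?_⟩
  · rintro w (rfl | rfl)
    exacts [hxM, hyM]
  · rw [connectedComponentIn_eq hxp] at hyp hzp
    rcases component_union_arc hK hγ hinj hγK h0 h1 hxM hyM hz hyp hzp with h | h | h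
    · exact absurd h hyx
    · exact ⟨x, by simp, h⟩
    · exact ⟨y, by simp, h⟩

theorem RepresentsComponents.union_arc (hK : IsCompact K)
    (hγ : ContinuousOn γ (Set.Icc 0 1)) (hinj : Set.InjOn γ (Set.Icc 0 1))
    (hγK : ∀ t ∈ Set.Ioo (0 : ℝ) 1, γ t ∉ K) (h0 : γ 0 ∈ K) (h1 : γ 1 ∈ K) {P : Set ℂ}
    (hP : RepresentsComponents K P) (hfin : P.Finite) :
    ∃ Q : Set ℂ, Q.Finite ∧ RepresentsComponents (K ∪ γ '' Set.Icc 0 1) Q := by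
  choose Q hQfin hQ hQz using exists_finite_representatives_union_arc hK hγ hinj hγK h0 h1
  refine ⟨⋃ p ∈ P, Q p, hfin.biUnion fun p _ => hQfin p,
    Set.iUnion₂_subset fun p _ => hQ p, fun z hz => ?_⟩
  obtain ⟨p, hp, hzp⟩ := hP.2 z fun h => hz (Or.inl h)
  obtain ⟨q, hq, hzq⟩ := hQz p z hz hzp
  exact ⟨q, Set.mem_biUnion hp hq, hzq⟩

end PlaneArc

/-- Up to exponentials, zeros and poles can be moved within their component. -/
theorem RationalWith.exists_exponents {K : Set ℂ} (hK : IsClosed K) {P : Finset ℂ}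
    (hP : RepresentsComponents K P) {R : ℂ → ℂ} (hR : RationalWith Kᶜ R) :
    ∃ n : ℂ → ℤ, HasLogOn K fun z => R z / ∏ p ∈ P, (z - p) ^ n p := by
  classical
  have hne : ∀ p ∈ P, ∀ z ∈ K, z - p ≠ 0 := fun p hp z hz h => hP.1 hp (sub_eq_zero.1 h ▸ hz)
  induction hR with
  | one => exact ⟨0, by simpa using HasLogOn.const K one_ne_zero⟩
  | sub a ha =>
    obtain ⟨p, hp, hap⟩ := hP.2 a ha
    refine ⟨Pi.single p 1, (HasLogOn.of_mem_component hK (mem_component_comm hap)).congr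
      fun z _ => ?_⟩
    congr 1
    rw [Finset.prod_eq_single p (fun q _ hq => by simp [hq]) (fun h => absurd hp h)]
    simp
  | mul _ _ ih₁ ih₂ =>
    obtain ⟨n, hn⟩ := ih₁
    obtain ⟨m, hm⟩ := ih₂
    refine ⟨n + m, (hn.mul hm).congr fun z hz => ?_⟩
    rw [div_mul_div_comm, ← Finset.prod_mul_distrib]
    congr 1
    exact Finset.prod_congr rfl fun p hp => by rw [Pi.add_apply, zpow_add₀ (hne p hp z hz)]
  | inv _ ih =>
    obtain ⟨n, hn⟩ := ih
    refine ⟨-n, hn.inv.congr fun z _ => ?_⟩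
    simp [zpow_neg, div_eq_mul_inv, mul_comm]

/-! ### The Eilenberg–Borsuk theorem -/

theorem mem_slitPlane_of_re_nonneg {w : ℂ} (hw : w ≠ 0) (hre : 0 ≤ w.re) :
    w ∈ Complex.slitPlane := by
  rw [Complex.mem_slitPlane_iff]
  rcases hre.lt_or_eq with hlt | heq
  · exact Or.inl hlt
  · exact Or.inr fun him => hw (Complex.ext heq.symm him)

theorem log_neg_sub_pi_mul_I {w : ℂ} (hw : w.im ≠ 0) :
    Complex.log (-w) - Real.pi * Complex.I =
      Complex.log w + (if w.im < 0 then 0 else -1 : ℤ) * (2 * Real.pi * Complex.I) := by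
  simp only [Complex.log, norm_neg]
  split_ifs with hlt
  · rw [Complex.arg_neg_eq_arg_add_pi_of_im_neg hlt]
    push_cast
    ring
  · rw [Complex.arg_neg_eq_arg_sub_pi_of_im_pos (lt_of_le_of_ne (not_lt.1 hlt) hw.symm)]
    push_cast
    ring

theorem HasLogOn.sub_of_re_le {ω a : ℂ} (hω : ω ≠ 0) {K : Set ℂ} (haK : a ∉ K)
    (h : ∀ z ∈ K, (ω * z).re ≤ (ω * a).re) : HasLogOn K fun z => z - a := by
  have hlog : HasLogOn K fun z => -(ω * (z - a)) := by
    refine HasLogOn.of_slitPlane (by fun_prop) fun z hz => mem_slitPlane_of_re_nonneg ?_ ?_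
    · exact neg_ne_zero.2 (mul_ne_zero hω (sub_ne_zero.2 fun h => haK (h ▸ hz)))
    · rw [mul_sub, Complex.neg_re, Complex.sub_re]
      linarith [h z hz]
  refine (hlog.mul (HasLogOn.const K (inv_ne_zero (neg_ne_zero.2 hω)))).congr fun z _ => ?_
  field_simp

theorem HasLogOn.sub_of_le_re {ω a : ℂ} (hω : ω ≠ 0) {K : Set ℂ} (haK : a ∉ K)
    (h : ∀ z ∈ K, (ω * a).re ≤ (ω * z).re) : HasLogOn K fun z => z - a :=
  HasLogOn.sub_of_re_le (neg_ne_zero.2 hω) haK fun z hz => by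
    rw [neg_mul, neg_mul, Complex.neg_re, Complex.neg_re]
    exact neg_le_neg (h z hz)

/-- Some rational function with zeros and poles in `A` has logarithms on the two parts of `K` cut
out by the line `re (ω z) = c` which, at the point of `K` with height `y = im (ω z)` on that line,
differ by `m y` times `2πi`. -/
def HasLogJump (K A : Set ℂ) (ω : ℂ) (c : ℝ) (m : ℝ → ℤ) : Prop :=
  ∃ R g h : ℂ → ℂ, RationalWith A R ∧
    ContinuousOn g (K ∩ {z | (ω * z).re ≤ c}) ∧
    (∀ z ∈ K, (ω * z).re ≤ c → R z = Complex.exp (g z)) ∧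
    ContinuousOn h (K ∩ {z | c ≤ (ω * z).re}) ∧
    (∀ z ∈ K, c ≤ (ω * z).re → R z = Complex.exp (h z)) ∧
    ∀ z ∈ K, (ω * z).re = c → g z = h z + m (ω * z).im * (2 * Real.pi * Complex.I)

namespace HasLogJump

variable {K A : Set ℂ} {ω : ℂ} {c : ℝ} {m m' : ℝ → ℤ}

theorem const (n : ℤ) : HasLogJump K A ω c fun _ => n :=
  ⟨fun _ => 1, fun _ => n * (2 * Real.pi * Complex.I), fun _ => 0, .one, continuousOn_const,
    fun z _ _ => by rw [Complex.exp_int_mul_two_pi_mul_I], continuousOn_const, by simp, by simp⟩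

theorem add (hm : HasLogJump K A ω c m) (hm' : HasLogJump K A ω c m') :
    HasLogJump K A ω c fun y => m y + m' y := by
  obtain ⟨R, g, h, hR, hg, hRg, hh, hRh, hgh⟩ := hm
  obtain ⟨R', g', h', hR', hg', hRg', hh', hRh', hgh'⟩ := hm'
  refine ⟨_, _, _, hR.mul hR', hg.add hg', fun z hz hle => ?_, hh.add hh', fun z hz hle => ?_,
    fun z hz heq => ?_⟩
  · rw [Pi.add_apply, Complex.exp_add, ← hRg z hz hle, ← hRg' z hz hle]
  · rw [Pi.add_apply, Complex.exp_add, ← hRh z hz hle, ← hRh' z hz hle]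
  · rw [Pi.add_apply, Pi.add_apply, hgh z hz heq, hgh' z hz heq]
    push_cast
    ring

theorem const_mul (hm : HasLogJump K A ω c m) (n : ℤ) :
    HasLogJump K A ω c fun y => n * m y := by
  obtain ⟨R, g, h, hR, hg, hRg, hh, hRh, hgh⟩ := hm
  refine ⟨_, _, _, hR.zpow n, hg.const_mul (n : ℂ), fun z hz hle => ?_, hh.const_mul (n : ℂ),
    fun z hz hle => ?_, fun z hz heq => ?_⟩
  · rw [Complex.exp_int_mul, ← hRg z hz hle]
  · rw [Complex.exp_int_mul, ← hRh z hz hle]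
  · rw [hgh z hz heq]
    push_cast
    ring

/-- The logarithms of `w = ω (z - a)` are `log (-w) - πi` and `log w`: they agree below `a` and
differ by `2πi` above it. -/
theorem sub (hω : ω ≠ 0) {a : ℂ} (haA : a ∈ A) (haK : a ∉ K) (hac : (ω * a).re = c) :
    HasLogJump K A ω c fun y => if y < (ω * a).im then 0 else -1 := by
  have hne : ∀ z ∈ K, ω * (z - a) ≠ 0 := fun z hz =>
    mul_ne_zero hω (sub_ne_zero.2 fun h => haK (h ▸ hz))
  have hre : ∀ z, (ω * (z - a)).re = (ω * z).re - c := fun z => by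
    rw [mul_sub, Complex.sub_re, hac]
  have hexp : Complex.exp (Complex.log ω⁻¹) = ω⁻¹ := Complex.exp_log (inv_ne_zero hω)
  refine ⟨fun z => z - a,
    fun z => Complex.log (-(ω * (z - a))) - Real.pi * Complex.I + Complex.log ω⁻¹,
    fun z => Complex.log (ω * (z - a)) + Complex.log ω⁻¹, .sub a haA, ?_, fun z hz _ => ?_, ?_,
    fun z hz _ => ?_, fun z hz heq => ?_⟩
  · refine ((ContinuousOn.clog (by fun_prop) fun z hz => ?_).sub continuousOn_const).add
      continuousOn_const
    refine mem_slitPlane_of_re_nonneg (neg_ne_zero.2 (hne z hz.1)) ?_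
    rw [Complex.neg_re, hre, neg_sub]
    exact sub_nonneg.2 hz.2
  · rw [Complex.exp_add, Complex.exp_sub, Complex.exp_log (neg_ne_zero.2 (hne z hz)),
      Complex.exp_pi_mul_I, hexp]
    field_simp
  · refine (ContinuousOn.clog (by fun_prop) fun z hz => ?_).add continuousOn_const
    refine mem_slitPlane_of_re_nonneg (hne z hz.1) ?_
    rw [hre]
    exact sub_nonneg.2 hz.2
  · rw [Complex.exp_add, Complex.exp_log (hne z hz), hexp]
    field_simp
  · have him : (ω * (z - a)).im = (ω * z).im - (ω * a).im := by rw [mul_sub, Complex.sub_im]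
    have him0 : (ω * (z - a)).im ≠ 0 := fun h0 =>
      hne z hz (Complex.ext (by rw [hre, heq, sub_self, Complex.zero_re]) h0)
    beta_reduce
    rw [log_neg_sub_pi_mul_I him0, him]
    simp only [sub_neg]
    ring

end HasLogJump

theorem interval_induction {P : ℝ → ℝ → Prop} {δ : ℝ} (hδ : 0 < δ)
    (hshort : ∀ a b, a ≤ b → b ≤ a + δ → P a b)
    (hunion : ∀ a b c, a ≤ b → b ≤ c → P a b → P b c → P a c) {a b : ℝ} (hab : a ≤ b) :
    P a b := by
  have hall : ∀ n : ℕ, ∀ b, a ≤ b → b ≤ a + n * δ → P a b := by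
    intro n
    induction n with
    | zero => exact fun b hab hb => hshort a b hab (by simp at hb; linarith)
    | succ n ih =>
      intro b hab hb
      push_cast at hb
      have hn : 0 ≤ (n : ℝ) * δ := by positivity
      have hmax : max a (b - δ) ≤ b := max_le hab (by linarith)
      refine hunion a _ b (le_max_left _ _) hmax
        (ih _ (le_max_left _ _) (max_le (by linarith) (by linarith))) (hshort _ _ hmax ?_)
      linarith [le_max_right a (b - δ)]
  obtain ⟨n, hn⟩ := exists_nat_gt ((b - a) / δ)
  rw [div_lt_iff₀ hδ] at hn
  exact hall n b hab (by linarith)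

theorem exists_dist_le_imp_eq {X : Type*} [PseudoMetricSpace X] {A : Set X} (hA : IsCompact A)
    {m : X → ℤ} (hm : ContinuousOn m A) :
    ∃ δ > 0, ∀ x ∈ A, ∀ y ∈ A, dist x y ≤ δ → m x = m y := by
  obtain ⟨ε, hε, h⟩ := Metric.uniformContinuousOn_iff.1
    (hA.uniformContinuousOn_of_continuous hm) 1 one_pos
  refine ⟨ε / 2, half_pos hε, fun x hx y hy hxy => ?_⟩
  have hlt := h x hx y hy (hxy.trans_lt (half_lt_self hε))
  rw [Int.dist_eq] at hlt
  exact sub_eq_zero.1 (Int.abs_lt_one_iff.1 (by exact_mod_cast hlt))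

theorem exists_step_function_eqOn {A : Set ℝ} {p q : ℝ} (hA : IsCompact A)
    (hAp : ∀ x ∈ A, p ≤ x) (hpq : p ≤ q) {m : ℝ → ℤ} (hm : ContinuousOn m A)
    {P : (ℝ → ℤ) → Prop} (hconst : ∀ n, P fun _ => n)
    (hstep : ∀ f s n, P f → s ∈ Set.Icc p q → s ∉ A → P fun x => f x + if x < s then 0 else n) :
    ∃ f, P f ∧ Set.EqOn f m (A ∩ Set.Iic q) := by
  obtain ⟨δ, hδ, hmδ⟩ := exists_dist_le_imp_eq hA hm
  let Good : ℝ → Prop := fun t => ∃ f v, P f ∧ Set.EqOn f m (A ∩ Set.Iic t) ∧ ∀ x, t ≤ x → f x = v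
  suffices hgood : Good q by
    obtain ⟨f, -, hf, heq, -⟩ := hgood
    exact ⟨f, hf, heq⟩
  have hadvance : p ≤ p → q ≤ q → Good p → Good q := by
    refine interval_induction (P := fun s t => p ≤ s → t ≤ q → Good s → Good t) hδ ?_ ?_ hpq
    · rintro s t hst htδ hps htq ⟨f, v, hf, heq, hv⟩
      by_cases hex : ∃ x₀ ∈ A, s ≤ x₀ ∧ x₀ ≤ t ∧ m x₀ ≠ v
      · obtain ⟨x₀, hx₀, hsx₀, hx₀t, hne⟩ := hex
        have hval : ∀ x ∈ A, s ≤ x → x ≤ t → m x = m x₀ := fun x hx hsx hxt =>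
          hmδ x hx x₀ hx₀ (abs_le.2 ⟨by linarith, by linarith⟩)
        have hsA : s ∉ A := fun hs => hne (by
          rw [← hval s hs le_rfl hst, ← heq ⟨hs, Set.self_mem_Iic⟩, hv s le_rfl])
        refine ⟨_, m x₀, hstep f s (m x₀ - v) hf ⟨hps, hst.trans htq⟩ hsA, ?_, fun x hx => ?_⟩
        · rintro x ⟨hx, hxt⟩
          beta_reduce
          split_ifs with hxs
          · rw [add_zero, heq ⟨hx, hxs.le⟩]
          · rw [hv x (not_lt.1 hxs), hval x hx (not_lt.1 hxs) hxt, add_sub_cancel]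
        · rw [if_neg (hst.trans hx).not_gt, hv x (hst.trans hx), add_sub_cancel]
      · push Not at hex
        refine ⟨f, v, hf, fun x ⟨hx, hxt⟩ => ?_, fun x hx => hv x (hst.trans hx)⟩
        rcases le_total x s with hxs | hsx
        · exact heq ⟨hx, hxs⟩
        · rw [hv x hsx, hex x hx hsx hxt]
    · exact fun a b c hab hbc h₁ h₂ hpa hcq ha =>
        h₂ (hpa.trans hab) hcq (h₁ hpa (hbc.trans hcq) ha)
  exact hadvance le_rfl le_rfl ⟨fun _ => m p, m p, hconst _,
    fun x hx => congrArg m (le_antisymm (hAp x hx.1) hx.2), fun _ _ => rfl⟩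

theorem exists_hasLogJump_eq {K A : Set ℂ} (hK : IsCompact K) {ω : ℂ} (hω : ω ≠ 0) {c p q : ℝ}
    (hpq : p ≤ q) {m : ℝ → ℤ}
    (hm : ContinuousOn m {y | y ∈ Set.Icc p q ∧ ω⁻¹ * (c + y * Complex.I) ∈ K})
    (hA : ∀ y ∈ Set.Icc p q, ω⁻¹ * (c + y * Complex.I) ∉ K → ω⁻¹ * (c + y * Complex.I) ∈ A) :
    ∃ f, HasLogJump K A ω c f ∧
      ∀ y ∈ Set.Icc p q, ω⁻¹ * (c + y * Complex.I) ∈ K → f y = m y := by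
  have hcompact : IsCompact {y : ℝ | y ∈ Set.Icc p q ∧ ω⁻¹ * (c + y * Complex.I) ∈ K} :=
    isCompact_Icc.inter_right (hK.isClosed.preimage (by fun_prop))
  suffices hstep : ∀ (f : ℝ → ℤ) s n, HasLogJump K A ω c f → s ∈ Set.Icc p q →
      s ∉ {y : ℝ | y ∈ Set.Icc p q ∧ ω⁻¹ * (c + y * Complex.I) ∈ K} →
      HasLogJump K A ω c fun x => f x + if x < s then 0 else n by
    obtain ⟨f, hf, heq⟩ :=
      exists_step_function_eqOn hcompact (fun y hy => hy.1.1) hpq hm HasLogJump.const hstep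
    exact ⟨f, hf, fun y hy hyK => heq ⟨⟨hy, hyK⟩, hy.2⟩⟩
  intro f s n hf hs hsK
  have hsK' : ω⁻¹ * (c + s * Complex.I) ∉ K := fun h => hsK ⟨hs, h⟩
  have hjump := (HasLogJump.sub (c := c) hω (hA s hs hsK') hsK'
    (by simp [mul_inv_cancel_left₀ hω])).const_mul (-n)
  simpa [mul_inv_cancel_left₀ hω] using hf.add hjump

/-- On `K ∩ Q`, the function `φ` is a rational function with zeros and poles in `Q \ K`, up to a
factor with a logarithm. -/
def RationalUpToExp (K : Set ℂ) (φ : ℂ → ℂ) (Q : Set ℂ) : Prop :=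
  ∃ R, RationalWith (Q \ K) R ∧ HasLogOn (K ∩ Q) fun z => φ z / R z

namespace RationalUpToExp

variable {K Q₁ Q₂ : Set ℂ} {φ : ℂ → ℂ}

theorem exists_rational_div_hasLogOn {ω : ℂ} (hω : ω ≠ 0) {c : ℝ}
    (h₁ : RationalUpToExp K φ Q₁) (h₂ : RationalUpToExp K φ Q₂)
    (hle : ∀ z ∈ Q₁, (ω * z).re ≤ c) (hge : ∀ z ∈ Q₂, c ≤ (ω * z).re) :
    ∃ R, RationalWith ((Q₁ ∪ Q₂) \ K) R ∧
      HasLogOn (K ∩ Q₁) (fun z => φ z / R z) ∧ HasLogOn (K ∩ Q₂) fun z => φ z / R z := by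
  obtain ⟨R₁, hR₁, hlog₁⟩ := h₁
  obtain ⟨R₂, hR₂, hlog₂⟩ := h₂
  have hR₂log : HasLogOn (K ∩ Q₁) R₂ := hR₂.hasLogOn fun a ha =>
    HasLogOn.sub_of_re_le hω (fun h => ha.2 h.1) fun z hz => (hle z hz.2).trans (hge a ha.1)
  have hR₁log : HasLogOn (K ∩ Q₂) R₁ := hR₁.hasLogOn fun a ha =>
    HasLogOn.sub_of_le_re hω (fun h => ha.2 h.1) fun z hz => (hle a ha.1).trans (hge z hz.2)
  refine ⟨_, (hR₁.mono (Set.sdiff_subset_sdiff_left Set.subset_union_left)).mul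
    (hR₂.mono (Set.sdiff_subset_sdiff_left Set.subset_union_right)), ?_, ?_⟩
  · exact (hlog₁.div hR₂log).congr fun z _ => by rw [div_div]
  · exact (hlog₂.div hR₁log).congr fun z _ => by rw [div_div, mul_comm (R₁ z)]

/-- The two logarithms differ on the common segment by a continuous integer function, which is the
jump of a rational function. -/
theorem union (hK : IsCompact K) (hQ₁ : IsClosed Q₁) (hQ₂ : IsClosed Q₂)
    (h₁ : RationalUpToExp K φ Q₁) (h₂ : RationalUpToExp K φ Q₂) {ω : ℂ} (hω : ω ≠ 0) {c p q : ℝ}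
    (hpq : p ≤ q) (hle : ∀ z ∈ Q₁, (ω * z).re ≤ c) (hge : ∀ z ∈ Q₂, c ≤ (ω * z).re)
    (hmem : ∀ y ∈ Set.Icc p q, ω⁻¹ * (c + y * Complex.I) ∈ Q₁ ∩ Q₂)
    (him : ∀ z ∈ Q₁ ∩ Q₂, (ω * z).im ∈ Set.Icc p q) :
    RationalUpToExp K φ (Q₁ ∪ Q₂) := by
  obtain ⟨R, hR, ⟨g, hg, hRg⟩, h, hh, hRh⟩ := h₁.exists_rational_div_hasLogOn hω h₂ hle hge
  obtain ⟨m, hm, hgm⟩ := exists_int_discrepancy (K := K ∩ Q₁ ∩ (K ∩ Q₂))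
    (hg.mono Set.inter_subset_left) (hh.mono Set.inter_subset_right)
    (fun z hz => by rw [← hRg z hz.1, ← hRh z hz.2])
  obtain ⟨f, ⟨S, g', h', hS, hg', hSg', hh', hSh', hgh'⟩, hfm⟩ :=
    exists_hasLogJump_eq (A := (Q₁ ∪ Q₂) \ K) (m := fun y => m (ω⁻¹ * (c + y * Complex.I))) hK hω
      hpq (hm.comp (by fun_prop) fun y hy => ⟨⟨hy.2, (hmem y hy.1).1⟩, hy.2, (hmem y hy.1).2⟩)
      fun y hy hyK => ⟨Or.inl (hmem y hy).1, hyK⟩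
  refine ⟨_, hR.mul hS, ?_⟩
  rw [Set.inter_union_distrib_left]
  refine HasLogOn.union (hK.isClosed.inter hQ₁) (hK.isClosed.inter hQ₂)
    (hg.sub (hg'.mono fun z hz => ⟨hz.1, hle z hz.2⟩)) (fun z hz => ?_)
    (hh.sub (hh'.mono fun z hz => ⟨hz.1, hge z hz.2⟩)) (fun z hz => ?_) fun z hz => ?_
  · rw [Pi.sub_apply, Complex.exp_sub, ← hRg z hz, ← hSg' z hz.1 (hle z hz.2), div_div]
  · rw [Pi.sub_apply, Complex.exp_sub, ← hRh z hz, ← hSh' z hz.1 (hge z hz.2), div_div]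
  · have hre : (ω * z).re = c := le_antisymm (hle z hz.1.2) (hge z hz.2.2)
    have hz' : ω⁻¹ * (c + (ω * z).im * Complex.I) = z := by
      rw [← hre, Complex.re_add_im, inv_mul_cancel_left₀ hω]
    have hf := hfm _ (him z ⟨hz.1.2, hz.2.2⟩) (hz'.symm ▸ hz.1.1)
    rw [hz'] at hf
    rw [Pi.sub_apply, Pi.sub_apply, hgm z hz, hgh' z hz.1.1 hre, hf]
    ring

theorem horizontal_union (hK : IsCompact K) {a b e c d : ℝ} (hab : a ≤ b) (hbe : b ≤ e)
    (hcd : c ≤ d) (h₁ : RationalUpToExp K φ (Set.Icc a b ×ℂ Set.Icc c d))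
    (h₂ : RationalUpToExp K φ (Set.Icc b e ×ℂ Set.Icc c d)) :
    RationalUpToExp K φ (Set.Icc a e ×ℂ Set.Icc c d) := by
  have hunion : Set.Icc a e ×ℂ Set.Icc c d =
      (Set.Icc a b ×ℂ Set.Icc c d) ∪ (Set.Icc b e ×ℂ Set.Icc c d) := by
    rw [← Set.Icc_union_Icc_eq_Icc hab hbe]
    exact Set.union_inter_distrib_right ..
  rw [hunion]
  refine union hK (isClosed_Icc.reProdIm isClosed_Icc) (isClosed_Icc.reProdIm isClosed_Icc) h₁ h₂
    one_ne_zero hcd (c := b) (fun z hz => by simpa using hz.1.2) (fun z hz => by simpa using hz.1.1)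
    (fun y hy => ?_) fun z hz => by simpa using hz.1.2
  simpa [Complex.mem_reProdIm, hab, hbe] using hy

theorem vertical_union (hK : IsCompact K) {a b c d e : ℝ} (hab : a ≤ b) (hcd : c ≤ d)
    (hde : d ≤ e) (h₁ : RationalUpToExp K φ (Set.Icc a b ×ℂ Set.Icc c d))
    (h₂ : RationalUpToExp K φ (Set.Icc a b ×ℂ Set.Icc d e)) :
    RationalUpToExp K φ (Set.Icc a b ×ℂ Set.Icc c e) := by
  have hunion : Set.Icc a b ×ℂ Set.Icc c e =
      (Set.Icc a b ×ℂ Set.Icc c d) ∪ (Set.Icc a b ×ℂ Set.Icc d e) := by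
    rw [← Set.Icc_union_Icc_eq_Icc hcd hde]
    exact Set.inter_union_distrib_left ..
  rw [hunion]
  refine union hK (isClosed_Icc.reProdIm isClosed_Icc) (isClosed_Icc.reProdIm isClosed_Icc) h₁ h₂
    (neg_ne_zero.2 Complex.I_ne_zero) (neg_le_neg hab) (c := d)
    (fun z hz => by simpa using hz.2.2) (fun z hz => by simpa using hz.2.1)
    (fun y hy => ?_) fun z hz => ?_
  · have hy' := And.intro (le_neg.1 hy.2) (neg_le.1 hy.1)
    simpa [Complex.mem_reProdIm, Complex.inv_I, hcd, hde] using hy'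
  · simpa [and_comm] using hz.1.1

theorem of_norm_sub_lt {w : ℂ} (hw : φ w ≠ 0) (hφ : ContinuousOn φ (K ∩ Q₁))
    (h : ∀ z ∈ K ∩ Q₁, ‖φ z - φ w‖ < ‖φ w‖) : RationalUpToExp K φ Q₁ := by
  have hlog : HasLogOn (K ∩ Q₁) fun z => φ z / φ w := by
    refine HasLogOn.of_norm_sub_one_lt (hφ.div_const _) fun z hz => ?_
    rw [div_sub_one hw, norm_div, div_lt_one (norm_pos_iff.2 hw)]
    exact h z hz
  refine ⟨_, .one, (hlog.mul (HasLogOn.const _ hw)).congr fun z _ => ?_⟩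
  rw [div_one, div_mul_cancel₀ _ hw]

theorem exists_small (hK : IsCompact K) (hφ : ContinuousOn φ K) (h0 : ∀ z ∈ K, φ z ≠ 0) :
    ∃ δ > 0, ∀ Q : Set ℂ, (∀ z ∈ Q, ∀ w ∈ Q, dist z w < δ) → RationalUpToExp K φ Q := by
  rcases K.eq_empty_or_nonempty with rfl | hne
  · exact ⟨1, one_pos, fun Q _ => ⟨_, .one, fun _ => 0, by simp, by simp⟩⟩
  obtain ⟨z₀, hz₀, hmin⟩ := hK.exists_isMinOn hne hφ.norm
  obtain ⟨δ, hδ, huc⟩ := Metric.uniformContinuousOn_iff.1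
    (hK.uniformContinuousOn_of_continuous hφ) _ (norm_pos_iff.2 (h0 z₀ hz₀))
  refine ⟨δ, hδ, fun Q hQ => ?_⟩
  rcases (K ∩ Q).eq_empty_or_nonempty with hempty | ⟨w, hw⟩
  · exact ⟨_, .one, fun _ => 0, by simp [hempty], by simp [hempty]⟩
  refine of_norm_sub_lt (h0 w hw.1) (hφ.mono Set.inter_subset_left) fun z hz => ?_
  rw [← dist_eq_norm]
  exact (huc z hz.1 w hw.1 (hQ z hz.2 w hw.2)).trans_le (hmin hw.1)

theorem rectangle (hK : IsCompact K) (hφ : ContinuousOn φ K) (h0 : ∀ z ∈ K, φ z ≠ 0)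
    {a b c d : ℝ} (hab : a ≤ b) (hcd : c ≤ d) :
    RationalUpToExp K φ (Set.Icc a b ×ℂ Set.Icc c d) := by
  obtain ⟨δ, hδ, hsmall⟩ := exists_small hK hφ h0
  have hδ' : 0 < δ / 3 := by positivity
  refine interval_induction (P := fun c d => RationalUpToExp K φ (Set.Icc a b ×ℂ Set.Icc c d)) hδ'
    (fun c d hcd hd => ?_) (fun _ _ _ h h' => vertical_union hK hab h h') hcd
  refine interval_induction (P := fun a b => RationalUpToExp K φ (Set.Icc a b ×ℂ Set.Icc c d)) hδ'
    (fun a b _ hb => ?_) (fun _ _ _ h h' => horizontal_union hK h h' hcd) hab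
  refine hsmall _ fun z hz w hw => ?_
  have hre : |(z - w).re| ≤ δ / 3 := by
    rw [Complex.sub_re, abs_le]
    constructor <;> linarith [hz.1.1, hz.1.2, hw.1.1, hw.1.2]
  have him : |(z - w).im| ≤ δ / 3 := by
    rw [Complex.sub_im, abs_le]
    constructor <;> linarith [hz.2.1, hz.2.2, hw.2.1, hw.2.2]
  rw [dist_eq_norm]
  linarith [Complex.norm_le_abs_re_add_abs_im (z - w)]

end RationalUpToExp

theorem exists_rational_hasLogOn {K : Set ℂ} (hK : IsCompact K) {φ : ℂ → ℂ}
    (hφ : ContinuousOn φ K) (h0 : ∀ z ∈ K, φ z ≠ 0) :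
    ∃ R, RationalWith Kᶜ R ∧ HasLogOn K fun z => φ z / R z := by
  obtain ⟨M, hM, hKM⟩ := hK.isBounded.exists_pos_norm_le
  obtain ⟨R, hR, hlog⟩ :=
    RationalUpToExp.rectangle hK hφ h0 (neg_le_self hM.le) (neg_le_self hM.le)
  refine ⟨R, hR.mono fun z hz => hz.2, hlog.mono fun z hz => ⟨hz, ?_⟩⟩
  exact ⟨abs_le.1 ((Complex.abs_re_le_norm z).trans (hKM z hz)),
    abs_le.1 ((Complex.abs_im_le_norm z).trans (hKM z hz))⟩

/-! ### Drawings, faces and the density of planar graphs -/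

/-- A drawing in the complex plane of a multigraph without loops, with vertex set `V` and edge set
`E`: the edge `e` is drawn as an arc from the vertex `src e` to the vertex `tgt e`. -/
structure ComplexDrawing (V E : Type*) where
  pos : V → ℂ
  arc : E → ℝ → ℂ
  src : E → V
  tgt : E → V
  pos_injective : Function.Injective pos
  arc_continuousOn : ∀ e, ContinuousOn (arc e) (Set.Icc 0 1)
  arc_injOn : ∀ e, Set.InjOn (arc e) (Set.Icc 0 1)
  arc_zero : ∀ e, arc e 0 = pos (src e)
  arc_one : ∀ e, arc e 1 = pos (tgt e)
  arc_ne_pos : ∀ e, ∀ t ∈ Set.Ioo (0 : ℝ) 1, ∀ v, arc e t ≠ pos v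
  arc_ne_arc : ∀ e f, e ≠ f → ∀ s ∈ Set.Ioo (0 : ℝ) 1, ∀ t ∈ Set.Ioo (0 : ℝ) 1, arc e s ≠ arc f t

theorem prod_zpow_eq_zpow_sum {ι α : Type*} [CommGroupWithZero α] {x : α} (hx : x ≠ 0)
    (s : Finset ι) (n : ι → ℤ) : ∏ i ∈ s, x ^ n i = x ^ ∑ i ∈ s, n i := by
  classical
  induction s using Finset.induction_on with
  | empty => simp
  | insert i s hi ih => rw [Finset.prod_insert hi, Finset.sum_insert hi, zpow_add₀ hx, ih]

theorem HasLogOn.prod_zpow_of_sum_eq_zero {X E ι : Type*} [TopologicalSpace X] [Fintype E]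
    {K : Set X} {P : Finset ι} {u : ι → X → ℂ} (hu : ∀ p ∈ P, ∀ z ∈ K, u p z ≠ 0)
    {φ : E → X → ℂ} {n : E → ι → ℤ} (hn : ∀ e, HasLogOn K fun z => φ e z / ∏ p ∈ P, u p z ^ n e p)
    {c : E → ℤ} (hc : ∀ p ∈ P, ∑ e, n e p * c e = 0) : HasLogOn K fun z => ∏ e, φ e z ^ c e := by
  refine (HasLogOn.prod Finset.univ fun e _ => (hn e).zpow (c e)).congr fun z hz => ?_
  have hone : ∏ e, (∏ p ∈ P, u p z ^ n e p) ^ c e = 1 := by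
    simp only [← Finset.prod_zpow, ← zpow_mul]
    rw [Finset.prod_comm]
    refine Finset.prod_eq_one fun p hp => ?_
    rw [prod_zpow_eq_zpow_sum (hu p hp z hz), hc p hp, zpow_zero]
  simp only [div_zpow, Finset.prod_div_distrib, hone, div_one]

theorem finrank_lt_add_of_ker_le_range {R M N L : Type*} [CommRing R] [IsDomain R]
    [IsNoetherianRing R] [AddCommGroup M] [Module R M] [Module.Finite R M] [AddCommGroup N]
    [Module R N] [Module.Finite R N] [AddCommGroup L] [Module R L] [Module.Finite R L]
    [Module.IsTorsionFree R L] {ψ : M →ₗ[R] N} {d : L →ₗ[R] M}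
    (h : LinearMap.ker ψ ≤ LinearMap.range d) (hd : LinearMap.ker d ≠ ⊥) :
    Module.finrank R M < Module.finrank R N + Module.finrank R L := by
  have hψ := (LinearMap.ker ψ).finrank_quotient_add_finrank
  have hdL := (LinearMap.ker d).finrank_quotient_add_finrank
  rw [ψ.quotKerEquivRange.finrank_eq] at hψ
  rw [d.quotKerEquivRange.finrank_eq] at hdL
  have hrange : Module.finrank R (LinearMap.range ψ) ≤ Module.finrank R N := Submodule.finrank_le _
  have hker := Submodule.finrank_mono h
  have : Nontrivial (LinearMap.ker d) := Submodule.nontrivial_iff_ne_bot.2 hd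
  have hpos : 0 < Module.finrank R (LinearMap.ker d) := Module.finrank_pos
  omega

theorem card_lt_add_of_forall_exists_potential {V E ι : Type*} [Fintype V] [Nonempty V]
    [Fintype E] {P : Finset ι} {src tgt : E → V} {n : E → ι → ℤ}
    (h : ∀ c : E → ℤ, (∀ p ∈ P, ∑ e, n e p * c e = 0) →
      ∃ m : V → ℤ, ∀ e, m (tgt e) - m (src e) = c e) :
    Fintype.card E < P.card + Fintype.card V := by
  let ψ : (E → ℤ) →ₗ[ℤ] (P → ℤ) :=
    LinearMap.pi fun p => ∑ e, n e p • LinearMap.proj (R := ℤ) (φ := fun _ : E => ℤ) e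
  let d : (V → ℤ) →ₗ[ℤ] (E → ℤ) :=
    LinearMap.funLeft ℤ ℤ tgt - LinearMap.funLeft ℤ ℤ src
  have hker : LinearMap.ker ψ ≤ LinearMap.range d := by
    intro c hc
    obtain ⟨m, hm⟩ := h c fun p hp => by
      simpa [ψ] using congrFun (LinearMap.mem_ker.1 hc) ⟨p, hp⟩
    exact ⟨m, funext hm⟩
  have hd : LinearMap.ker d ≠ ⊥ := by
    refine (Submodule.ne_bot_iff _).2 ⟨fun _ => 1, ?_, one_ne_zero⟩
    exact LinearMap.mem_ker.2 (funext fun _ => sub_self (1 : ℤ))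
  simpa using finrank_lt_add_of_ker_le_range hker hd

namespace ComplexDrawing

variable {V E : Type*} (D : ComplexDrawing V E)

/-- The subset of the plane drawn by all vertices and the edges in `A`. -/
def carrier (A : Finset E) : Set ℂ :=
  Set.range D.pos ∪ ⋃ e ∈ A, D.arc e '' Set.Icc 0 1

theorem pos_mem_carrier (A : Finset E) (v : V) : D.pos v ∈ D.carrier A :=
  Or.inl ⟨v, rfl⟩

theorem arc_mem_carrier {A : Finset E} {e : E} (he : e ∈ A) {t : ℝ} (ht : t ∈ Set.Icc (0 : ℝ) 1) :
    D.arc e t ∈ D.carrier A :=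
  Or.inr (Set.mem_biUnion (Finset.mem_coe.2 he) ⟨t, ht, rfl⟩)

theorem arc_zero_mem_carrier (A : Finset E) (e : E) : D.arc e 0 ∈ D.carrier A :=
  D.arc_zero e ▸ D.pos_mem_carrier A _

theorem arc_one_mem_carrier (A : Finset E) (e : E) : D.arc e 1 ∈ D.carrier A :=
  D.arc_one e ▸ D.pos_mem_carrier A _

theorem carrier_mono {A B : Finset E} (h : A ⊆ B) : D.carrier A ⊆ D.carrier B :=
  Set.union_subset_union_right _ (Set.biUnion_subset_biUnion_left h)

theorem carrier_insert [DecidableEq E] (A : Finset E) (e : E) :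
    D.carrier (insert e A) = D.carrier A ∪ D.arc e '' Set.Icc 0 1 := by
  simp only [carrier, Finset.set_biUnion_insert]
  rw [Set.union_comm (D.arc e '' _), Set.union_assoc]

theorem isCompact_carrier [Finite V] (A : Finset E) : IsCompact (D.carrier A) :=
  (Set.finite_range _).isCompact.union <| A.isCompact_biUnion fun e _ =>
    isCompact_Icc.image_of_continuousOn (D.arc_continuousOn e)

theorem exists_eq_pos_or_exists_eq_arc {A : Finset E} {z : ℂ} (hz : z ∈ D.carrier A) :
    (∃ v, z = D.pos v) ∨ ∃ e ∈ A, ∃ t ∈ Set.Ioo (0 : ℝ) 1, z = D.arc e t := by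
  rcases hz with ⟨v, rfl⟩ | hz
  · exact Or.inl ⟨v, rfl⟩
  obtain ⟨e, he, t, ht, rfl⟩ := Set.mem_iUnion₂.1 hz
  rcases eq_or_lt_of_le ht.1 with rfl | h0
  · exact Or.inl ⟨_, D.arc_zero e⟩
  rcases eq_or_lt_of_le ht.2 with rfl | h1
  · exact Or.inl ⟨_, D.arc_one e⟩
  exact Or.inr ⟨e, he, t, ⟨h0, h1⟩, rfl⟩

theorem arc_notMem_carrier {A : Finset E} {e : E} (he : e ∉ A) {t : ℝ}
    (ht : t ∈ Set.Ioo (0 : ℝ) 1) : D.arc e t ∉ D.carrier A := by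
  intro h
  rcases D.exists_eq_pos_or_exists_eq_arc h with ⟨v, hv⟩ | ⟨f, hf, s, hs, hst⟩
  · exact D.arc_ne_pos e t ht v hv
  · exact D.arc_ne_arc e f (fun h => he (h ▸ hf)) t ht s hs hst

theorem src_ne_tgt (e : E) : D.src e ≠ D.tgt e := by
  intro h
  have h1 : D.arc e 0 = D.arc e 1 := by rw [D.arc_zero, D.arc_one, h]
  exact zero_ne_one (D.arc_injOn e (by simp) (by simp) h1)

theorem isConnected_compl_carrier_empty [Finite V] : IsConnected (D.carrier ∅)ᶜ := by
  have hrange : D.carrier ∅ = Set.range D.pos := by simp [carrier]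
  rw [hrange]
  exact (Set.finite_range _).countable.isConnected_compl_of_one_lt_rank (by simp)

theorem exists_finite_representatives [Finite V] (A : Finset E) :
    ∃ P : Set ℂ, P.Finite ∧ RepresentsComponents (D.carrier A) P := by
  classical
  induction A using Finset.induction_on with
  | empty =>
    obtain ⟨p, hp⟩ := D.isConnected_compl_carrier_empty.nonempty
    exact ⟨{p}, Set.finite_singleton p, by simpa using hp, fun z hz => ⟨p, rfl,
      D.isConnected_compl_carrier_empty.isPreconnected.subset_connectedComponentIn hp
        subset_rfl hz⟩⟩
  | insert e A he ih =>
    obtain ⟨P, hfin, hP⟩ := ih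
    rw [D.carrier_insert]
    exact hP.union_arc (D.isCompact_carrier A) (D.arc_continuousOn e) (D.arc_injOn e)
      (fun t => D.arc_notMem_carrier he) (D.arc_zero_mem_carrier A e) (D.arc_one_mem_carrier A e)
      hfin

/-- A function on the drawing which winds once around zero along the edge `e` and is equal to `1`
on the rest of the drawing. -/
structure IsWindingFunction [Fintype E] [DecidableEq E] (e : E) (φ : ℂ → ℂ) : Prop where
  continuousOn : ContinuousOn φ (D.carrier Finset.univ)
  eq_one : ∀ z ∈ D.carrier (Finset.univ.erase e), φ z = 1
  arc : ∀ t ∈ Set.Icc (0 : ℝ) 1, φ (D.arc e t) = Complex.exp (t * (2 * Real.pi * Complex.I))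

section Euler

variable [Fintype E] [DecidableEq E] {D}

theorem carrier_univ_eq (e : E) :
    D.carrier Finset.univ = D.carrier (Finset.univ.erase e) ∪ D.arc e '' Set.Icc 0 1 := by
  rw [← D.carrier_insert, Finset.insert_erase (Finset.mem_univ e)]

theorem IsWindingFunction.ne_zero {e : E} {φ : ℂ → ℂ} (hφ : D.IsWindingFunction e φ) {z : ℂ}
    (hz : z ∈ D.carrier Finset.univ) : φ z ≠ 0 := by
  rw [carrier_univ_eq e] at hz
  rcases hz with hz | ⟨t, ht, rfl⟩
  · exact hφ.eq_one z hz ▸ one_ne_zero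
  · exact hφ.arc t ht ▸ Complex.exp_ne_zero _

theorem exists_isWindingFunction [Finite V] (e : E) : ∃ φ, D.IsWindingFunction e φ := by
  obtain ⟨φ, hφ, hφ1, hφe⟩ := exists_winding_function
    (D.isCompact_carrier (Finset.univ.erase e)).isClosed (D.arc_continuousOn e) (D.arc_injOn e)
    fun t => D.arc_notMem_carrier (Finset.notMem_erase e _)
  exact ⟨φ, carrier_univ_eq (D := D) e ▸ hφ, hφ1, hφe⟩

/-- Along the edge `e`, a logarithm of the product grows by `2πi` times the exponent `c e`. -/
theorem exists_potential_of_hasLogOn_prod {φ : E → ℂ → ℂ} (hφ : ∀ e, D.IsWindingFunction e (φ e))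
    {c : E → ℤ} (hlog : HasLogOn (D.carrier Finset.univ) fun z => ∏ e, φ e z ^ c e) :
    ∃ m : V → ℤ, ∀ e, m (D.tgt e) - m (D.src e) = c e := by
  obtain ⟨g, hg, hge⟩ := hlog
  have hvertex : ∀ v, ∃ m : ℤ, g (D.pos v) = m * (2 * Real.pi * Complex.I) := by
    intro v
    have hv := hge _ (D.pos_mem_carrier _ v)
    simp only [fun e => (hφ e).eq_one _ (D.pos_mem_carrier _ v), one_zpow,
      Finset.prod_const_one] at hv
    exact Complex.exp_eq_one_iff.1 hv.symm
  choose m hm using hvertex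
  refine ⟨m, fun e => ?_⟩
  have harc : ∀ t ∈ Set.Icc (0 : ℝ) 1, D.arc e t ∈ D.carrier Finset.univ := fun t =>
    D.arc_mem_carrier (Finset.mem_univ e)
  have hexp : ∀ t ∈ Set.Icc (0 : ℝ) 1, Complex.exp (g (D.arc e t)) =
      Complex.exp (c e * (t * (2 * Real.pi * Complex.I))) := by
    intro t ht
    rw [← hge _ (harc t ht), Complex.exp_int_mul, ← (hφ e).arc t ht]
    refine Finset.prod_eq_single e (fun f _ hf => ?_) fun h => absurd (Finset.mem_univ e) h
    rw [(hφ f).eq_one _ (D.arc_mem_carrier (by simpa using hf.symm) ht), one_zpow]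
  have hdiff := sub_eq_sub_of_exp_eq_exp isPreconnected_Icc
    (hg.comp (D.arc_continuousOn e) harc)
    (h := fun t : ℝ => c e * (t * (2 * Real.pi * Complex.I))) (by fun_prop) hexp
    (x := 1) (y := 0) (by simp) (by simp)
  simp only [Function.comp_apply, D.arc_zero, D.arc_one, hm] at hdiff
  refine Int.cast_injective (α := ℂ) (mul_right_cancel₀ Complex.two_pi_I_ne_zero ?_)
  push_cast at hdiff ⊢
  linear_combination hdiff

end Euler

theorem card_edges_lt [Fintype V] [Nonempty V] [Fintype E] {P : Finset ℂ}
    (hP : RepresentsComponents (D.carrier Finset.univ) P) :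
    Fintype.card E < P.card + Fintype.card V := by
  classical
  have hK := D.isCompact_carrier Finset.univ
  choose φ hφ using exists_isWindingFunction (D := D)
  have hexp : ∀ e, ∃ n : ℂ → ℤ,
      HasLogOn (D.carrier Finset.univ) fun z => φ e z / ∏ p ∈ P, (z - p) ^ n p := by
    intro e
    obtain ⟨R, hR, hlog⟩ :=
      exists_rational_hasLogOn hK (hφ e).continuousOn fun z => (hφ e).ne_zero
    obtain ⟨n, hn⟩ := hR.exists_exponents hK.isClosed hP
    refine ⟨n, (hlog.mul hn).congr fun z hz => ?_⟩
    rw [div_mul_div_cancel₀ (hR.ne_zero fun h => h hz)]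
  choose n hn using hexp
  exact card_lt_add_of_forall_exists_potential fun c hc => exists_potential_of_hasLogOn_prod hφ <|
    HasLogOn.prod_zpow_of_sum_eq_zero (u := fun p z => z - p)
      (fun p hp z hz h => hP.1 hp (sub_eq_zero.1 h ▸ hz)) hn hc

end ComplexDrawing

namespace ComplexDrawing

variable {V E : Type*} (D : ComplexDrawing V E)

/-- The unordered pair of end vertices of an edge of a drawing. -/
def ends (e : E) : Sym2 V := s(D.src e, D.tgt e)

/-- The simple graph spanned by the edges in `A`. -/
def graph (A : Finset E) : SimpleGraph V := SimpleGraph.fromEdgeSet (D.ends '' A)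

theorem graph_mono {A B : Finset E} (h : A ⊆ B) : D.graph A ≤ D.graph B :=
  SimpleGraph.fromEdgeSet_mono (Set.image_mono (Finset.coe_subset.2 h))

theorem graph_adj {A : Finset E} {e : E} (he : e ∈ A) : (D.graph A).Adj (D.src e) (D.tgt e) := by
  rw [graph, SimpleGraph.fromEdgeSet_adj]
  exact ⟨⟨e, he, rfl⟩, D.src_ne_tgt e⟩

theorem edgeSet_graph_subset (A : Finset E) : (D.graph A).edgeSet ⊆ D.ends '' A := by
  rw [graph, SimpleGraph.edgeSet_fromEdgeSet]
  exact Set.sdiff_subset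

section Forest

variable {D}

theorem not_reachable_of_isAcyclic_insert [DecidableEq E] (hD : Function.Injective D.ends)
    {A : Finset E} {e : E} (he : e ∉ A) (hA : (D.graph (insert e A)).IsAcyclic) :
    ¬ (D.graph A).Reachable (D.src e) (D.tgt e) := by
  have hbridge := SimpleGraph.isAcyclic_iff_forall_adj_isBridge.1 hA
    (D.graph_adj (Finset.mem_insert_self e A))
  rw [SimpleGraph.isBridge_iff] at hbridge
  refine fun h => hbridge (h.mono fun u v huv => ?_)
  refine (SimpleGraph.deleteEdges_adj ..).2
    ⟨D.graph_mono (Finset.subset_insert e A) huv, fun huve => ?_⟩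
  obtain ⟨f, hf, hfe⟩ := D.edgeSet_graph_subset A ((D.graph A).mem_edgeSet.2 huv)
  exact he (hD (hfe.trans huve) ▸ hf)

theorem exists_potential_of_isAcyclic (hD : Function.Injective D.ends) {A : Finset E}
    (hA : (D.graph A).IsAcyclic) (c : E → ℤ) :
    ∃ m : V → ℤ, ∀ e ∈ A, m (D.tgt e) - m (D.src e) = c e := by
  classical
  induction A using Finset.induction_on with
  | empty => exact ⟨0, by simp⟩
  | insert e A he ih =>
    obtain ⟨m, hm⟩ := ih (hA.anti (D.graph_mono (Finset.subset_insert e A)))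
    have hsep : ¬ (D.graph A).Reachable (D.tgt e) (D.src e) := fun h =>
      not_reachable_of_isAcyclic_insert hD he hA h.symm
    refine ⟨fun v => m v + if (D.graph A).Reachable (D.tgt e) v then
      c e - (m (D.tgt e) - m (D.src e)) else 0, fun f hf => ?_⟩
    rcases Finset.mem_insert.1 hf with rfl | hf
    · simp only [SimpleGraph.Reachable.refl, if_true, if_neg hsep]
      ring
    · have hiff : (D.graph A).Reachable (D.tgt e) (D.tgt f) ↔
          (D.graph A).Reachable (D.tgt e) (D.src f) :=
        ⟨fun h => h.trans (D.graph_adj hf).symm.reachable,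
          fun h => h.trans (D.graph_adj hf).reachable⟩
      simp only [hiff, ← hm f hf]
      ring

theorem exists_log_of_forall_edge [Finite V] {A : Finset E} {φ : ℂ → ℂ} {l : V → ℂ}
    (hl : ∀ v, φ (D.pos v) = Complex.exp (l v))
    (h : ∀ e ∈ A, ∃ h : ℂ → ℂ, ContinuousOn h (D.arc e '' Set.Icc 0 1) ∧
      (∀ z ∈ D.arc e '' Set.Icc 0 1, φ z = Complex.exp (h z)) ∧
      h (D.pos (D.src e)) = l (D.src e) ∧ h (D.pos (D.tgt e)) = l (D.tgt e)) :
    ∃ g : ℂ → ℂ, ContinuousOn g (D.carrier A) ∧ (∀ z ∈ D.carrier A, φ z = Complex.exp (g z)) ∧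
      ∀ v, g (D.pos v) = l v := by
  classical
  induction A using Finset.induction_on with
  | empty =>
    have hrange : D.carrier ∅ = Set.range D.pos := by simp [carrier]
    refine ⟨Function.extend D.pos l 0, ?_, ?_, D.pos_injective.extend_apply _ _⟩
    · exact hrange ▸ (Set.finite_range _).continuousOn _
    · rw [hrange]
      rintro _ ⟨v, rfl⟩
      rw [D.pos_injective.extend_apply, hl]
  | insert e A he ih =>
    obtain ⟨g, hg, hgφ, hgl⟩ := ih fun f hf => h f (Finset.mem_insert_of_mem hf)
    obtain ⟨k, hk, hkφ, hk0, hk1⟩ := h e (Finset.mem_insert_self e A)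
    have hagree : Set.EqOn g k (D.carrier A ∩ D.arc e '' Set.Icc 0 1) := by
      rintro _ ⟨hzA, t, ht, rfl⟩
      rcases eq_zero_or_one_of_arc_mem (fun t => D.arc_notMem_carrier he) ht hzA with rfl | rfl
      · rw [D.arc_zero, hgl, hk0]
      · rw [D.arc_one, hgl, hk1]
    obtain ⟨j, hj, hjg, hjk⟩ := exists_continuousOn_union (D.isCompact_carrier A).isClosed
      (isCompact_Icc.image_of_continuousOn (D.arc_continuousOn e)).isClosed hg hk hagree
    rw [D.carrier_insert]
    refine ⟨j, hj, ?_, fun v => by rw [hjg (D.pos_mem_carrier A v), hgl]⟩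
    rintro z (hz | hz)
    · rw [hjg hz, hgφ z hz]
    · rw [hjk hz, hkφ z hz]

theorem exists_log_arc {e : E} {φ : ℂ → ℂ} (hφ : ContinuousOn φ (D.arc e '' Set.Icc 0 1))
    (h0 : ∀ z ∈ D.arc e '' Set.Icc 0 1, φ z ≠ 0) {l : V → ℂ}
    (hl : ∀ v, φ (D.pos v) = Complex.exp (l v)) :
    ∃ (c : ℤ) (h : ℂ → ℂ), ContinuousOn h (D.arc e '' Set.Icc 0 1) ∧
      (∀ z ∈ D.arc e '' Set.Icc 0 1, φ z = Complex.exp (h z)) ∧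
      h (D.pos (D.src e)) = l (D.src e) ∧
      h (D.pos (D.tgt e)) = l (D.tgt e) + c * (2 * Real.pi * Complex.I) := by
  obtain ⟨h, hh, hhφ, hsrc⟩ := (HasLogOn.arc (D.arc_continuousOn e) (D.arc_injOn e) hφ
    h0).exists_eq_at ⟨0, by simp, D.arc_zero e⟩ (hl (D.src e))
  obtain ⟨c, hc⟩ := Complex.exp_eq_exp_iff_exists_int.1
    ((hhφ _ ⟨1, by simp, D.arc_one e⟩).symm.trans (hl (D.tgt e)))
  exact ⟨c, h, hh, hhφ, hsrc, hc⟩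

/-- Logarithms along the edges are correct at the vertices up to multiples of `2πi`, and these
errors are removed by a vertex potential. -/
theorem hasLogOn_carrier_of_isAcyclic [Finite V] (hD : Function.Injective D.ends) {A : Finset E}
    (hA : (D.graph A).IsAcyclic) {φ : ℂ → ℂ} (hφ : ContinuousOn φ (D.carrier A))
    (h0 : ∀ z ∈ D.carrier A, φ z ≠ 0) : HasLogOn (D.carrier A) φ := by
  set l := fun v => Complex.log (φ (D.pos v))
  have hl : ∀ v, φ (D.pos v) = Complex.exp (l v) := fun v =>
    (Complex.exp_log (h0 _ (D.pos_mem_carrier A v))).symm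
  have hsub : ∀ e ∈ A, D.arc e '' Set.Icc 0 1 ⊆ D.carrier A := by
    rintro e he _ ⟨t, ht, rfl⟩
    exact D.arc_mem_carrier he ht
  choose! c h hh hhφ hsrc htgt using fun e (he : e ∈ A) =>
    exists_log_arc (hφ.mono (hsub e he)) (fun z hz => h0 z (hsub e he hz)) hl
  obtain ⟨m, hm⟩ := exists_potential_of_isAcyclic hD hA c
  obtain ⟨g, hg, hgφ, -⟩ := exists_log_of_forall_edge (D := D) (A := A) (φ := φ)
    (l := fun v => l v + m v * (2 * Real.pi * Complex.I))
    (fun v => by rw [Complex.exp_add, Complex.exp_int_mul_two_pi_mul_I, mul_one, hl]) fun e he => by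
      refine ⟨fun z => h e z + m (D.src e) * (2 * Real.pi * Complex.I),
        (hh e he).add continuousOn_const, fun z hz => ?_, by simp only [hsrc e he], ?_⟩
      · rw [Complex.exp_add, Complex.exp_int_mul_two_pi_mul_I, mul_one, hhφ e he z hz]
      · simp only [htgt e he, ← hm e he]
        push_cast
        ring
  exact ⟨g, hg, hgφ⟩

theorem mem_component_of_isAcyclic [Finite V] (hD : Function.Injective D.ends) {A : Finset E}
    (hA : (D.graph A).IsAcyclic) {a b : ℂ} (ha : a ∉ D.carrier A) (hb : b ∉ D.carrier A) :
    b ∈ connectedComponentIn (D.carrier A)ᶜ a := by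
  have hna : ∀ z ∈ D.carrier A, z - a ≠ 0 := fun z hz h => ha (sub_eq_zero.1 h ▸ hz)
  have hnb : ∀ z ∈ D.carrier A, z - b ≠ 0 := fun z hz h => hb (sub_eq_zero.1 h ▸ hz)
  exact mem_component_of_hasLogOn (D.isCompact_carrier A) ha hb <|
    hasLogOn_carrier_of_isAcyclic hD hA
      ((continuousOn_id.sub continuousOn_const).div (continuousOn_id.sub continuousOn_const) hnb)
      fun z hz => div_ne_zero (hna z hz) (hnb z hz)

end Forest

section Faces

variable [Fintype E]

/-- The component of `p` in the complement of the drawing, that is, the face containing `p`. -/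
def face (p : ℂ) : Set ℂ := connectedComponentIn (D.carrier Finset.univ)ᶜ p

/-- The edge `e` lies on the boundary of the face containing `p`. It suffices here that a single
interior point of `e` is in the closure of the face. -/
def Borders (p : ℂ) (e : E) : Prop := ∃ t ∈ Set.Ioo (0 : ℝ) 1, D.arc e t ∈ closure (D.face p)

variable {D}

theorem not_isAcyclic_of_borders [Finite V] (hD : Function.Injective D.ends) {p q : ℂ}
    (hp : p ∉ D.carrier Finset.univ) (hq : q ∉ D.carrier Finset.univ) (hpq : q ∉ D.face p)
    {A : Finset E} (hA : ∀ e, D.Borders p e → e ∈ A) : ¬ (D.graph A).IsAcyclic := by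
  intro hacyc
  have hK := (D.isCompact_carrier Finset.univ).isClosed
  have hsub : D.carrier A ⊆ D.carrier Finset.univ := D.carrier_mono (Finset.subset_univ A)
  have hp' : p ∉ D.carrier A := fun h => hp (hsub h)
  suffices hface : connectedComponentIn (D.carrier A)ᶜ p ⊆ D.face p from
    hpq (hface (mem_component_of_isAcyclic hD hacyc hp' fun h => hq (hsub h)))
  refine isPreconnected_connectedComponentIn.subset_of_closure_inter_subset
    hK.isOpen_compl.connectedComponentIn
    ⟨p, mem_connectedComponentIn hp', mem_connectedComponentIn hp⟩ ?_
  rintro x ⟨hx, hxA⟩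
  refine (closure_component_subset hK p hx).resolve_right fun hxK => ?_
  have hxA' := connectedComponentIn_subset _ _ hxA
  rcases D.exists_eq_pos_or_exists_eq_arc hxK with ⟨v, rfl⟩ | ⟨e, -, t, ht, rfl⟩
  · exact hxA' (D.pos_mem_carrier A v)
  · exact hxA' (D.arc_mem_carrier (hA e ⟨t, ht, hx⟩) (Set.Ioo_subset_Icc_self ht))

theorem Borders.mem_component_erase [Finite V] [DecidableEq E] {p : ℂ}
    (hp : p ∉ D.carrier Finset.univ) {e : E} (h : D.Borders p e) :
    p ∈ connectedComponentIn (D.carrier (Finset.univ.erase e))ᶜ (D.arc e (1 / 2)) := by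
  obtain ⟨t, ht, het⟩ := h
  set K := D.carrier (Finset.univ.erase e)
  have hKU : K ⊆ D.carrier Finset.univ := D.carrier_mono (Finset.subset_univ _)
  have hnot : ∀ s ∈ Set.Ioo (0 : ℝ) 1, D.arc e s ∉ K := fun s =>
    D.arc_notMem_carrier (Finset.notMem_erase e _)
  have hface : D.face p ⊆ connectedComponentIn Kᶜ p :=
    connectedComponentIn_mono p (Set.compl_subset_compl.2 hKU)
  have htp : D.arc e t ∈ connectedComponentIn Kᶜ p :=
    (closure_component_subset (D.isCompact_carrier _).isClosed p
      (closure_mono hface het)).resolve_right (hnot t ht)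
  have harc : IsPreconnected (D.arc e '' Set.Ioo 0 1) :=
    isPreconnected_Ioo.image _ ((D.arc_continuousOn e).mono Set.Ioo_subset_Icc_self)
  have htmid : D.arc e t ∈ connectedComponentIn Kᶜ (D.arc e (1 / 2)) := by
    refine harc.subset_connectedComponentIn ⟨1 / 2, by norm_num, rfl⟩ ?_ ⟨t, ht, rfl⟩
    rintro _ ⟨s, hs, rfl⟩
    exact hnot s hs
  rw [connectedComponentIn_eq htmid, ← connectedComponentIn_eq htp]
  exact mem_connectedComponentIn fun h => hp (hKU h)

theorem mem_face_or_of_borders [Finite V] {a b c : ℂ} (ha : a ∉ D.carrier Finset.univ)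
    (hb : b ∉ D.carrier Finset.univ) (hc : c ∉ D.carrier Finset.univ) {e : E}
    (hae : D.Borders a e) (hbe : D.Borders b e) (hce : D.Borders c e) :
    b ∈ D.face a ∨ c ∈ D.face a ∨ c ∈ D.face b := by
  classical
  have hae' := hae.mem_component_erase ha
  unfold face
  rw [D.carrier_univ_eq e] at ha hb hc ⊢
  exact component_union_arc (D.isCompact_carrier _) (D.arc_continuousOn e) (D.arc_injOn e)
    (fun t => D.arc_notMem_carrier (Finset.notMem_erase e _)) (D.arc_zero_mem_carrier _ e)
    (D.arc_one_mem_carrier _ e) ha hb hc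
    (connectedComponentIn_eq hae' ▸ hbe.mem_component_erase (D.carrier_univ_eq e ▸ hb))
    (connectedComponentIn_eq hae' ▸ hce.mem_component_erase (D.carrier_univ_eq e ▸ hc))

end Faces

end ComplexDrawing

theorem egirth_le_card_edgeFinset {V : Type*} {G : SimpleGraph V} [Fintype G.edgeSet]
    (hG : ¬ G.IsAcyclic) : G.egirth ≤ G.edgeFinset.card := by
  obtain ⟨v, w, hw, hlen⟩ := SimpleGraph.exists_egirth_eq_length.2 hG
  rw [hlen]
  exact_mod_cast hw.isTrail.length_le_card_edgeFinset

namespace ComplexDrawing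

variable {V E : Type*} {D : ComplexDrawing V E}

section Density

variable [Finite V] [Fintype E] [DecidableRel D.Borders]

theorem le_card_borders (hD : Function.Injective D.ends) {g : ℕ}
    (hg : (g : ℕ∞) ≤ (D.graph Finset.univ).egirth) {p q : ℂ} (hp : p ∉ D.carrier Finset.univ)
    (hq : q ∉ D.carrier Finset.univ) (hpq : q ∉ D.face p) :
    g ≤ (Finset.univ.bipartiteAbove D.Borders p).card := by
  classical
  have := Fintype.ofFinite V
  set A := Finset.univ.bipartiteAbove D.Borders p
  have hcycle : ¬ (D.graph A).IsAcyclic := not_isAcyclic_of_borders hD hp hq hpq fun e he =>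
    (Finset.mem_bipartiteAbove _).2 ⟨Finset.mem_univ e, he⟩
  have hgirth : g ≤ (D.graph A).edgeFinset.card := by
    exact_mod_cast (hg.trans (SimpleGraph.egirth_anti (D.graph_mono (Finset.subset_univ A)))).trans
      (egirth_le_card_edgeFinset hcycle)
  have hsub : (D.graph A).edgeFinset ⊆ A.image D.ends := by
    intro x hx
    obtain ⟨e, he, rfl⟩ := D.edgeSet_graph_subset A (SimpleGraph.mem_edgeFinset.1 hx)
    exact Finset.mem_image_of_mem _ he
  exact (hgirth.trans (Finset.card_le_card hsub)).trans Finset.card_image_le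

theorem card_bordered_faces_le_two {P : Finset ℂ} (hP : (P : Set ℂ) ⊆ (D.carrier Finset.univ)ᶜ)
    (hdist : ∀ p ∈ P, ∀ q ∈ P, q ∈ D.face p → p = q) (e : E) :
    (P.bipartiteBelow D.Borders e).card ≤ 2 := by
  by_contra! hlt
  obtain ⟨a, ha, b, hb, c, hc, hab, hac, hbc⟩ := Finset.two_lt_card.1 hlt
  rw [Finset.mem_bipartiteBelow] at ha hb hc
  rcases mem_face_or_of_borders (hP ha.1) (hP hb.1) (hP hc.1) ha.2 hb.2 hc.2 with h | h | h
  · exact hab (hdist a ha.1 b hb.1 h)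
  · exact hac (hdist a ha.1 c hc.1 h)
  · exact hbc (hdist b hb.1 c hc.1 h)

end Density

/-- Count the incidences between edges and faces. -/
theorem girth_mul_card_edges_lt [Fintype V] [Nonempty V] [Fintype E]
    (hD : Function.Injective D.ends) {g : ℕ} (hg0 : 0 < g)
    (hg : (g : ℕ∞) ≤ (D.graph Finset.univ).egirth) :
    g * Fintype.card E < 2 * Fintype.card E + g * Fintype.card V := by
  classical
  obtain ⟨P₀, hfin, hP₀⟩ := D.exists_finite_representatives Finset.univ
  obtain ⟨P, hP, hdist⟩ := hP₀.exists_distinct hfin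
  have heuler := D.card_edges_lt hP
  rcases le_or_gt P.card 1 with hP1 | hP1
  · have hEV : Fintype.card E ≤ Fintype.card V := by omega
    have hVpos : 0 < g * Fintype.card V := Nat.mul_pos hg0 Fintype.card_pos
    have := Nat.mul_le_mul_left g hEV
    rcases Nat.eq_zero_or_pos (Fintype.card E) with hE | hE
    · simpa [hE] using hVpos
    · omega
  have hlow : ∀ p ∈ P, g ≤ (Finset.univ.bipartiteAbove D.Borders p).card := by
    intro p hp
    obtain ⟨q, hq, hqp⟩ := Finset.exists_mem_ne hP1 p
    exact le_card_borders hD hg (hP.1 hp) (hP.1 hq) fun h => hqp (hdist p hp q hq h).symm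
  have hfaces := (Finset.card_nsmul_le_sum P _ g hlow).trans_eq
    (Finset.sum_card_bipartiteAbove_eq_sum_card_bipartiteBelow _)
  have hedges := hfaces.trans <| Finset.sum_le_card_nsmul Finset.univ _ 2 fun e _ =>
    card_bordered_faces_le_two hP.1 hdist e
  simp only [smul_eq_mul, Finset.card_univ] at hedges
  nlinarith

end ComplexDrawing

theorem PlaneEmbedding.exists_complexDrawing {V : Type*} {G : SimpleGraph V} (P : PlaneEmbedding G)
    (S : Set V) : ∃ D : ComplexDrawing S (G.induce S).edgeSet, ∀ e, D.ends e = e := by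
  let ε : (G.induce S).edgeSet ↪ G.edgeSet := (SimpleGraph.Embedding.induce S).mapEdgeSet
  have hends : ∀ e : (G.induce S).edgeSet, ∃ u v : S, (e : Sym2 S) = s(u, v) ∧
      P.arc (ε e) 0 = P.pos u ∧ P.arc (ε e) 1 = P.pos v := by
    intro e
    obtain ⟨u, v, huv, h0, h1⟩ := P.arc_ends (ε e)
    obtain ⟨u', -, rfl⟩ := Sym2.mem_map.1 (huv ▸ Sym2.mem_mk_left u v : u ∈ (ε e : Sym2 V))
    obtain ⟨v', -, rfl⟩ := Sym2.mem_map.1 (huv ▸ Sym2.mem_mk_right _ v : v ∈ (ε e : Sym2 V))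
    exact ⟨u', v', Sym2.map.injective Subtype.val_injective huv, h0, h1⟩
  choose src tgt hst h0 h1 using hends
  let ψ := Complex.equivRealProdCLM.symm
  exact ⟨{
    pos := fun v => ψ (P.pos v)
    arc := fun e t => ψ (P.arc (ε e) t)
    src := src
    tgt := tgt
    pos_injective := ψ.injective.comp (P.inj.comp Subtype.val_injective)
    arc_continuousOn := fun e => ψ.continuous.comp_continuousOn (P.arc_cont (ε e))
    arc_injOn := fun e => ψ.injective.comp_injOn (P.arc_inj (ε e))
    arc_zero := fun e => congrArg ψ (h0 e)
    arc_one := fun e => congrArg ψ (h1 e)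
    arc_ne_pos := fun e t ht v h => P.arc_avoid (ε e) t ht ⟨v, (ψ.injective h).symm⟩
    arc_ne_arc := fun e f hef s hs t ht h => P.arc_disjoint (ε e) (ε f)
      (fun h' => hef (ε.injective h')) s hs t ht (ψ.injective h) },
    fun e => (hst e).symm⟩

/-- The neighbours of `v` in `G` which belong to `S`. -/
def nbrsIn {V : Type*} (G : SimpleGraph V) [DecidableRel G.Adj] (S : Finset V) (v : V) :
    Finset V :=
  S.filter (G.Adj v)

/-- The degree of `v` into `S`. -/
abbrev degIn {V : Type*} (G : SimpleGraph V) [DecidableRel G.Adj] (S : Finset V) (v : V) : ℕ :=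
  (nbrsIn G S v).card

theorem mem_nbrsIn {V : Type*} {G : SimpleGraph V} [DecidableRel G.Adj] {S : Finset V} {v w : V} :
    w ∈ nbrsIn G S v ↔ w ∈ S ∧ G.Adj v w :=
  Finset.mem_filter

theorem degree_induce_eq_degIn {V : Type*} (G : SimpleGraph V) [DecidableRel G.Adj]
    {S : Finset V} (v : (S : Set V)) [Fintype ((G.induce (S : Set V)).neighborSet v)] :
    (G.induce (S : Set V)).degree v = degIn G S v := by
  rw [← SimpleGraph.card_neighborFinset_eq_degree, ← Finset.card_map ⟨_, Subtype.val_injective⟩]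
  congr 1
  ext w
  simp [mem_nbrsIn, and_comm]

theorem sum_degIn {V : Type*} (G : SimpleGraph V) [DecidableRel G.Adj] (S : Finset V) :
    ∑ v ∈ S, degIn G S v = 2 * Fintype.card (G.induce (S : Set V)).edgeSet := by
  classical
  rw [← SimpleGraph.edgeFinset_card, ← SimpleGraph.sum_degrees_eq_twice_card_edges,
    ← Finset.sum_coe_sort]
  exact Finset.sum_congr rfl fun v _ => (degree_induce_eq_degIn G v).symm

theorem girth_mul_card_edges_induce_lt {V : Type*} {G : SimpleGraph V} (hG : G.IsPlanar) {g : ℕ}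
    (hg0 : 0 < g) (hg : (g : ℕ∞) ≤ G.egirth) {S : Finset V} (hS : S.Nonempty)
    [Fintype (G.induce (S : Set V)).edgeSet] :
    g * Fintype.card (G.induce (S : Set V)).edgeSet <
      2 * Fintype.card (G.induce (S : Set V)).edgeSet + g * S.card := by
  obtain ⟨P⟩ := hG
  obtain ⟨D, hD⟩ := P.exists_complexDrawing (S : Set V)
  have : Nonempty (S : Set V) := hS.coe_sort
  have hinj : Function.Injective D.ends := fun e f h => Subtype.ext (by rwa [hD, hD] at h)
  have hle : D.graph Finset.univ ≤ G.induce (S : Set V) := by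
    rw [← SimpleGraph.edgeSet_subset_edgeSet]
    rintro _ hx
    obtain ⟨e, -, rfl⟩ := D.edgeSet_graph_subset _ hx
    exact hD e ▸ e.2
  have hgirth : (g : ℕ∞) ≤ (D.graph Finset.univ).egirth :=
    (hg.trans (SimpleGraph.Copy.induce G (S : Set V)).isContained.egirth_le).trans
      (SimpleGraph.egirth_anti hle)
  simpa using D.girth_mul_card_edges_lt hinj hg0 hgirth

theorem five_mul_sum_degIn_lt {V : Type*} {G : SimpleGraph V} [DecidableRel G.Adj]
    (hG : G.IsPlanar) (hgirth : 7 ≤ G.egirth) {S : Finset V} (hS : S.Nonempty) :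
    5 * ∑ v ∈ S, degIn G S v < 14 * S.card := by
  classical
  have := girth_mul_card_edges_induce_lt hG (g := 7) (by norm_num) (by exact_mod_cast hgirth) hS
  rw [sum_degIn]
  omega

/-! ### Strong list colouring -/

section Transversal

variable {ι α : Type*} [Fintype ι] [DecidableEq ι] [Fintype α] [DecidableEq α]

/-- The independent sets of `H` which contain exactly one vertex from each part `O z`, `z ∈ Z`. They
are encoded as functions on the whole index set, with the dummy value `a₀` outside `Z`. -/
def independentTransversals (H : SimpleGraph α) [DecidableRel H.Adj] (O : ι → Finset α) (a₀ : α)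
    (Z : Finset ι) : Finset (ι → α) :=
  Finset.univ.filter fun p => (∀ z ∈ Z, p z ∈ O z) ∧ (∀ z ∉ Z, p z = a₀) ∧
    ∀ y ∈ Z, ∀ z ∈ Z, y ≠ z → ¬ H.Adj (p y) (p z)

variable {H : SimpleGraph α} [DecidableRel H.Adj] {O : ι → Finset α} {a₀ : α} {Z : Finset ι}
  {d : ℕ}

theorem mem_independentTransversals {p : ι → α} :
    p ∈ independentTransversals H O a₀ Z ↔ (∀ z ∈ Z, p z ∈ O z) ∧ (∀ z ∉ Z, p z = a₀) ∧
      ∀ y ∈ Z, ∀ z ∈ Z, y ≠ z → ¬ H.Adj (p y) (p z) := by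
  simp [independentTransversals]

theorem card_filter_apply_eq_le (z : ι) (b : α) :
    ((independentTransversals H O a₀ Z).filter fun p => p z = b).card ≤
      (independentTransversals H O a₀ (Z.erase z)).card := by
  refine Finset.card_le_card_of_injOn (fun p => Function.update p z a₀) ?_ ?_
  · intro p hp
    rw [Finset.mem_coe, Finset.mem_filter, mem_independentTransversals] at hp
    obtain ⟨⟨hO, hout, hind⟩, -⟩ := hp
    rw [Finset.mem_coe, mem_independentTransversals]
    refine ⟨fun y hy => ?_, fun y hy => ?_, fun y hy w hw hyw => ?_⟩
    · rw [Finset.mem_erase] at hy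
      simpa [hy.1] using hO y hy.2
    · by_cases hyz : y = z
      · simp [hyz]
      · simpa [hyz] using hout y fun h => hy (Finset.mem_erase.2 ⟨hyz, h⟩)
    · rw [Finset.mem_erase] at hy hw
      simpa [hy.1, hw.1] using hind y hy.2 w hw.2 hyw
  · intro p hp q hq hpq
    rw [Finset.mem_coe, Finset.mem_filter] at hp hq
    funext y
    by_cases hyz : y = z
    · rw [hyz, hp.2, hq.2]
    · simpa [hyz] using congrFun hpq y

theorem mul_card_filter_exists_apply_eq_le (hdisj : Pairwise (Function.onFun Disjoint O))
    (hZ : ∀ z ∈ Z, d * (independentTransversals H O a₀ (Z.erase z)).card ≤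
      (independentTransversals H O a₀ Z).card) (b : α) :
    d * ((independentTransversals H O a₀ Z).filter fun p => ∃ z ∈ Z, p z = b).card ≤
      (independentTransversals H O a₀ Z).card := by
  set T := independentTransversals H O a₀ Z
  by_cases hb : ∃ z ∈ Z, b ∈ O z
  · obtain ⟨z, hz, hbz⟩ := hb
    have hsub : (T.filter fun p => ∃ z ∈ Z, p z = b) ⊆ T.filter fun p => p z = b := by
      refine Finset.monotone_filter_right T fun p hpT => ?_
      rintro ⟨y, hy, rfl⟩
      have hyO := (mem_independentTransversals.1 hpT).1 y hy
      by_cases hyz : y = z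
      · rw [hyz]
      · exact absurd hbz (Finset.disjoint_left.1 (hdisj hyz) hyO)
    exact (Nat.mul_le_mul_left d
      ((Finset.card_le_card hsub).trans (card_filter_apply_eq_le z b))).trans (hZ z hz)
  · have hempty : (T.filter fun p => ∃ z ∈ Z, p z = b) = ∅ := by
      refine Finset.filter_eq_empty_iff.2 fun p hp => ?_
      rintro ⟨z, hz, rfl⟩
      exact hb ⟨z, hz, (mem_independentTransversals.1 hp).1 z hz⟩
    simp [hempty]

theorem card_le_two_mul_card_filter_forall_not_adj (hd : 0 < d) {T : Finset (ι → α)}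
    (hT : ∀ b, 2 * d * (T.filter fun p => ∃ z ∈ Z, p z = b).card ≤ T.card) {w : α}
    (hdeg : H.degree w ≤ d) :
    T.card ≤ 2 * (T.filter fun p => ∀ z ∈ Z, ¬ H.Adj w (p z)).card := by
  have hcover : (T.filter fun p => ¬ ∀ z ∈ Z, ¬ H.Adj w (p z)) ⊆
      (H.neighborFinset w).biUnion fun b => T.filter fun p => ∃ z ∈ Z, p z = b := by
    intro p hp
    obtain ⟨hpT, hp⟩ := Finset.mem_filter.1 hp
    push Not at hp
    obtain ⟨z, hz, hwz⟩ := hp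
    exact Finset.mem_biUnion.2 ⟨p z, (H.mem_neighborFinset w _).2 hwz,
      Finset.mem_filter.2 ⟨hpT, z, hz, rfl⟩⟩
  have hbad : 2 * d * (T.filter fun p => ¬ ∀ z ∈ Z, ¬ H.Adj w (p z)).card ≤ d * T.card := calc
    _ ≤ 2 * d * ∑ b ∈ H.neighborFinset w, (T.filter fun p => ∃ z ∈ Z, p z = b).card :=
      Nat.mul_le_mul_left _ ((Finset.card_le_card hcover).trans Finset.card_biUnion_le)
    _ ≤ H.degree w * T.card := by
      rw [Finset.mul_sum, ← smul_eq_mul, ← H.card_neighborFinset_eq_degree w]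
      exact Finset.sum_le_card_nsmul _ _ _ fun b _ => hT b
    _ ≤ d * T.card := Nat.mul_le_mul_right _ hdeg
  have hhalf : 2 * (T.filter fun p => ¬ ∀ z ∈ Z, ¬ H.Adj w (p z)).card ≤ T.card :=
    Nat.le_of_mul_le_mul_left (by linarith) hd
  have := Finset.card_filter_add_card_filter_not (s := T) fun p => ∀ z ∈ Z, ¬ H.Adj w (p z)
  omega

theorem update_mem_independentTransversals {y : ι} (hy : y ∉ Z) {p : ι → α}
    (hp : p ∈ independentTransversals H O a₀ Z) {w : α} (hw : w ∈ O y)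
    (hwp : ∀ z ∈ Z, ¬ H.Adj w (p z)) :
    Function.update p y w ∈ independentTransversals H O a₀ (insert y Z) := by
  obtain ⟨hO, hout, hind⟩ := mem_independentTransversals.1 hp
  have hne : ∀ z ∈ Z, z ≠ y := fun z hz h => hy (h ▸ hz)
  refine mem_independentTransversals.2 ⟨fun z hz => ?_, fun z hz => ?_, fun z hz z' hz' hzz => ?_⟩
  · rcases Finset.mem_insert.1 hz with rfl | hz
    · simpa using hw
    · simpa [hne z hz] using hO z hz
  · rw [Finset.mem_insert, not_or] at hz
    simpa [hz.1] using hout z hz.2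
  · rcases Finset.mem_insert.1 hz with rfl | hzZ <;> rcases Finset.mem_insert.1 hz' with rfl | hz'
    · exact absurd rfl hzz
    · simpa [hne z' hz'] using hwp z' hz'
    · simpa [hne z hzZ] using fun h => hwp z hzZ h.symm
    · simpa [hne z hzZ, hne z' hz'] using hind z hzZ z' hz' hzz

theorem sum_card_filter_forall_not_adj_le {y : ι} (hy : y ∉ Z) :
    ∑ w ∈ O y, ((independentTransversals H O a₀ Z).filter
        fun p => ∀ z ∈ Z, ¬ H.Adj w (p z)).card ≤
      (independentTransversals H O a₀ (insert y Z)).card := by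
  rw [← Finset.card_sigma]
  refine Finset.card_le_card_of_injOn (fun x => Function.update x.2 y x.1) ?_ ?_
  · rintro ⟨w, p⟩ hx
    rw [Finset.mem_coe, Finset.mem_sigma, Finset.mem_filter] at hx
    exact update_mem_independentTransversals hy hx.2.1 hx.1 hx.2.2
  · rintro ⟨w, p⟩ hx ⟨w', p'⟩ hx' h
    rw [Finset.mem_coe, Finset.mem_sigma, Finset.mem_filter, mem_independentTransversals] at hx hx'
    obtain rfl : w = w' := by simpa using congrFun h y
    have hpp : p = p' := by
      funext z
      by_cases hzy : z = y
      · exact hzy ▸ (hx.2.1.2.1 y hy).trans (hx'.2.1.2.1 y hy).symm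
      · simpa [hzy] using congrFun h z
    rw [hpp]

/-- Rosenfeld's counting argument: by induction, each value is taken by at most a `2d`-th of the
transversals, so at least half of them extend by any given vertex of the new part. -/
theorem two_mul_mul_card_independentTransversals_le (hd : 0 < d) (hdeg : ∀ a, H.degree a ≤ d)
    (hO : ∀ z, 4 * d ≤ (O z).card) (hdisj : Pairwise (Function.onFun Disjoint O)) {y : ι}
    (hy : y ∉ Z) :
    2 * d * (independentTransversals H O a₀ Z).card ≤
      (independentTransversals H O a₀ (insert y Z)).card := by
  induction hn : Z.card using Nat.strong_induction_on generalizing Z y with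
  | _ n ih =>
    have hZ : ∀ z ∈ Z, 2 * d * (independentTransversals H O a₀ (Z.erase z)).card ≤
        (independentTransversals H O a₀ Z).card := fun z hz => by
      have := ih (Z.erase z).card (hn ▸ Finset.card_erase_lt_of_mem hz)
        (Finset.notMem_erase z Z) rfl
      rwa [Finset.insert_erase hz] at this
    have hvalue := mul_card_filter_exists_apply_eq_le hdisj hZ
    have hextend := fun w => card_le_two_mul_card_filter_forall_not_adj hd hvalue (hdeg w)
    have hsum := Finset.card_nsmul_le_sum (O y) _ _ fun w _ => hextend w
    rw [← Finset.mul_sum, smul_eq_mul] at hsum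
    have hnew := sum_card_filter_forall_not_adj_le (H := H) (O := O) (a₀ := a₀) hy
    have := Nat.mul_le_mul_right (independentTransversals H O a₀ Z).card (hO y)
    linarith

end Transversal

theorem exists_independent_transversal {ι α : Type*} [Finite ι] [Fintype α] {H : SimpleGraph α}
    [DecidableRel H.Adj] {O : ι → Finset α} {d : ℕ} (hd : 0 < d) (hdeg : ∀ a, H.degree a ≤ d)
    (hO : ∀ z, 4 * d ≤ (O z).card) (hdisj : Pairwise (Function.onFun Disjoint O)) :
    ∃ p : ι → α, (∀ z, p z ∈ O z) ∧ ∀ y z, y ≠ z → ¬ H.Adj (p y) (p z) := by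
  classical
  have := Fintype.ofFinite ι
  rcases isEmpty_or_nonempty ι with hι | ⟨⟨z₀⟩⟩
  · exact ⟨isEmptyElim, isEmptyElim, isEmptyElim⟩
  obtain ⟨a₀, -⟩ : (O z₀).Nonempty := Finset.card_pos.1 (by have := hO z₀; omega)
  have hpos : ∀ Z : Finset ι, 0 < (independentTransversals H O a₀ Z).card := by
    intro Z
    induction Z using Finset.induction_on with
    | empty => exact Finset.card_pos.2 ⟨fun _ => a₀, mem_independentTransversals.2 (by simp)⟩
    | insert y Z hy ih =>
      exact (Nat.mul_pos (by omega) ih).trans_le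
        (two_mul_mul_card_independentTransversals_le hd hdeg hO hdisj hy)
  obtain ⟨p, hp⟩ := Finset.card_pos.1 (hpos Finset.univ)
  obtain ⟨hpO, -, hind⟩ := mem_independentTransversals.1 hp
  exact ⟨p, fun z => hpO z (Finset.mem_univ z),
    fun y z => hind y (Finset.mem_univ y) z (Finset.mem_univ z)⟩

section StrongColouring

variable {ι α κ : Type*}

/-- A colouring of the vertices from lists `L`, one list for each part, which is injective on each
part. The part of the vertex `u` is `part u`. -/
structure IsPartColouring (part : α → ι) (L : ι → Finset κ) (g : α → κ) : Prop where
  mem : ∀ u, g u ∈ L (part u)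
  eq_of_eq : ∀ u w, part u = part w → g u = g w → u = w

/-- In the part `i` the colours `a` and `c i` can be interchanged, and no edge becomes
monochromatic by doing so in all parts. The choice `c i = a` leaves the part `i` unchanged. -/
structure IsRecolouring (H : SimpleGraph α) (part : α → ι) (g : α → κ) (a : κ) (c : ι → κ) :
    Prop where
  eq_or_exists : ∀ i, c i = a ∨ (∃ u, part u = i ∧ g u = a) ∧ ∃ w, part w = i ∧ g w = c i
  ne_of_adj_of_eq : ∀ u v, H.Adj u v → g u = a → g v ≠ c (part u)
  not_eq_and_eq : ∀ v w, H.Adj v w → ¬ (g v = c (part v) ∧ g w = c (part w))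

/-- The edges between the parts `i` and `j` joining vertices of the same colour. -/
def sameColourBetween (part : α → ι) (g : α → κ) (i j : ι) : SimpleGraph α :=
  SimpleGraph.fromRel fun x y => g x = g y ∧ part x = i ∧ part y = j

variable {H : SimpleGraph α} {part : α → ι} {L : ι → Finset κ} {g : α → κ}
  {a : κ} {c : ι → κ}

theorem exists_isPartColouring [Fintype α] [DecidableEq ι]
    (hL : ∀ i, (Finset.univ.filter fun w => part w = i).card ≤ (L i).card) :
    ∃ g, IsPartColouring part L g := by
  have hemb : ∀ i, Nonempty ({u // part u = i} ↪ L i) := fun i =>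
    Function.Embedding.nonempty_of_card_le (by
      rw [Fintype.card_subtype, Fintype.card_coe]
      exact hL i)
  let e := fun i => (hemb i).some
  have he : ∀ u i (h : part u = i), (e i ⟨u, h⟩ : κ) = e (part u) ⟨u, rfl⟩ := by
    rintro u _ rfl
    rfl
  refine ⟨fun u => e (part u) ⟨u, rfl⟩, fun u => (e _ _).2, fun u w huw h => ?_⟩
  have h' : e (part w) ⟨u, huw⟩ = e (part w) ⟨w, rfl⟩ := Subtype.ext ((he u _ huw).trans h)
  exact congrArg Subtype.val ((e _).injective h')

theorem IsPartColouring.degree_sup_sameColourBetween_le [Fintype α] [DecidableRel H.Adj]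
    (hg : IsPartColouring part L g) {i j : ι} (hij : i ≠ j)
    [DecidableRel (H ⊔ sameColourBetween part g i j).Adj] (x : α) :
    (H ⊔ sameColourBetween part g i j).degree x ≤ H.degree x + 1 := by
  classical
  have hone : ((sameColourBetween part g i j).neighborFinset x).card ≤ 1 := by
    refine Finset.card_le_one.2 fun y hy z hz => ?_
    rw [SimpleGraph.mem_neighborFinset, sameColourBetween, SimpleGraph.fromRel_adj] at hy hz
    exact hg.eq_of_eq y z (by grind) (by grind)
  refine (Finset.card_le_card fun y hy => ?_).trans
    ((Finset.card_union_le (H.neighborFinset x) _).trans (Nat.add_le_add_left hone _))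
  simpa using hy

section Recolouring

variable [DecidableEq κ]

theorem IsPartColouring.swap (hg : IsPartColouring part L g) (hc : IsRecolouring H part g a c) :
    IsPartColouring part L fun v => Equiv.swap a (c (part v)) (g v) where
  mem v := by
    have hv := hg.mem v
    rcases hc.eq_or_exists (part v) with h | ⟨⟨u, hu, hua⟩, w, hw, hwc⟩
    · simpa [h] using hv
    · rw [Equiv.swap_apply_def]
      split_ifs
      · exact hwc ▸ hw ▸ hg.mem w
      · exact hua ▸ hu ▸ hg.mem u
      · exact hv
  eq_of_eq u w huw h := by
    rw [huw] at h
    exact hg.eq_of_eq u w huw ((Equiv.swap a _).injective h)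

theorem IsRecolouring.eq_of_swap_eq (hc : IsRecolouring H part g a c) {v w : α} (hvw : H.Adj v w)
    (h : Equiv.swap a (c (part v)) (g v) = Equiv.swap a (c (part w)) (g w)) : g v = g w := by
  have hv := hc.ne_of_adj_of_eq v w hvw
  have hw := hc.ne_of_adj_of_eq w v hvw.symm
  have hne := hc.not_eq_and_eq v w hvw
  grind

/-- The ordered pairs of adjacent vertices which receive the same colour. -/
def monochromaticPairs [Fintype α] (H : SimpleGraph α) [DecidableRel H.Adj] (g : α → κ) :
    Finset (α × α) :=
  Finset.univ.filter fun x => H.Adj x.1 x.2 ∧ g x.1 = g x.2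

theorem IsRecolouring.monochromaticPairs_ssubset [Fintype α] [DecidableRel H.Adj] {u₀ w₀ : α}
    (hadj : H.Adj u₀ w₀) (hg₀ : g u₀ = g w₀) (hc : IsRecolouring H part g (g u₀) c)
    (hc₀ : c (part u₀) ≠ c (part w₀)) :
    monochromaticPairs H (fun v => Equiv.swap (g u₀) (c (part v)) (g v)) ⊂
      monochromaticPairs H g := by
  refine (Finset.ssubset_iff_of_subset ?_).2
    ⟨(u₀, w₀), by simp [monochromaticPairs, hadj, hg₀], by simp [monochromaticPairs, ← hg₀, hc₀]⟩
  intro x hx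
  simp only [monochromaticPairs, Finset.mem_filter, Finset.mem_univ, true_and] at hx ⊢
  exact ⟨hx.1, hc.eq_of_swap_eq hx.1 hx.2⟩

theorem IsPartColouring.card_filter_eq_le [Fintype α] [DecidableEq ι] [DecidableRel H.Adj]
    (hg : IsPartColouring part L g) (i : ι) (u : α) :
    (Finset.univ.filter fun w => part w = i).card ≤
      (Finset.univ.filter fun w => part w = i ∧ ∀ v, H.Adj u v → g w ≠ g v).card + H.degree u := by
  have hsplit := Finset.card_filter_add_card_filter_not
    (s := Finset.univ.filter fun w => part w = i) fun w => ∀ v, H.Adj u v → g w ≠ g v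
  have hbad : ((Finset.univ.filter fun w => part w = i).filter
      fun w => ¬ ∀ v, H.Adj u v → g w ≠ g v).card ≤ H.degree u := by
    refine le_trans (Finset.card_le_card_of_injOn g ?_ ?_)
      (Finset.card_image_le (s := H.neighborFinset u) (f := g))
    · intro w hw
      simp only [Finset.coe_filter, Finset.mem_filter, Set.mem_ofPred_eq] at hw
      push Not at hw
      obtain ⟨-, v, huv, hwv⟩ := hw
      exact hwv ▸ Finset.mem_image_of_mem g ((H.mem_neighborFinset u v).2 huv)
    · intro w hw w' hw' h
      simp only [Finset.coe_filter, Finset.mem_filter, Finset.mem_univ, true_and,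
        Set.mem_ofPred_eq] at hw hw'
      exact hg.eq_of_eq w w' (hw.1.trans hw'.1.symm) h
  rw [Finset.filter_filter] at hsplit
  omega

end Recolouring

variable [Fintype α] [DecidableEq ι] [DecidableRel H.Adj] {d : ℕ}

theorem IsPartColouring.exists_transversal (hg : IsPartColouring part L g)
    (hdeg : ∀ u, H.degree u ≤ d)
    (hpart : ∀ u, 5 * d + 4 ≤ (Finset.univ.filter fun w => part w = part u).card) (a : κ) {i j : ι}
    (hij : i ≠ j) :
    ∃ p : {u // g u = a} → α, (∀ z, part (p z) = part z) ∧
      (∀ (z : {u // g u = a}) v, H.Adj z v → g (p z) ≠ g v) ∧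
      ∀ y z, y ≠ z → ¬ (H ⊔ sameColourBetween part g i j).Adj (p y) (p z) := by
  classical
  obtain ⟨p, hpO, hp⟩ := exists_independent_transversal (d := d + 1)
    (H := H ⊔ sameColourBetween part g i j)
    (O := fun u : {u // g u = a} =>
      Finset.univ.filter fun w => part w = part u ∧ ∀ v, H.Adj u v → g w ≠ g v)
    d.succ_pos
    (fun x => (hg.degree_sup_sameColourBetween_le hij x).trans (Nat.succ_le_succ (hdeg x)))
    (fun u => by
      have := hg.card_filter_eq_le (H := H) (part u) u
      have := hpart u
      have := hdeg u
      omega)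
    (fun y z hyz => Finset.disjoint_left.2 fun w hwy hwz => by
      rw [Finset.mem_filter] at hwy hwz
      exact hyz (Subtype.ext
        (hg.eq_of_eq _ _ (hwy.2.1.symm.trans hwz.2.1) (y.2.trans z.2.symm))))
  simp only [Finset.mem_filter, Finset.mem_univ, true_and] at hpO
  exact ⟨p, fun z => (hpO z).1, fun z => (hpO z).2, hp⟩

theorem IsPartColouring.exists_isRecolouring (hg : IsPartColouring part L g)
    (hdeg : ∀ u, H.degree u ≤ d)
    (hpart : ∀ u, 5 * d + 4 ≤ (Finset.univ.filter fun w => part w = part u).card) {u₀ w₀ : α}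
    (hpart₀ : part u₀ ≠ part w₀) (hg₀ : g u₀ = g w₀) :
    ∃ c, IsRecolouring H part g (g u₀) c ∧ c (part u₀) ≠ c (part w₀) := by
  classical
  obtain ⟨p, hpp, hpne, hp⟩ := hg.exists_transversal hdeg hpart (g u₀) hpart₀
  let c : ι → κ := fun i =>
    if h : ∃ u, part u = i ∧ g u = g u₀ then g (p ⟨h.choose, h.choose_spec.2⟩) else g u₀
  have hcp : ∀ z : {u // g u = g u₀}, c (part z) = g (p z) := by
    intro z
    have h : ∃ u, part u = part z ∧ g u = g u₀ := ⟨z, rfl, z.2⟩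
    have hz : (⟨h.choose, h.choose_spec.2⟩ : {u // g u = g u₀}) = z := Subtype.ext
      (hg.eq_of_eq _ _ h.choose_spec.1 (h.choose_spec.2.trans z.2.symm))
    exact (dif_pos h).trans (by rw [hz])
  have heq : ∀ v, g v = c (part v) → ∃ z, p z = v := by
    intro v hv
    by_cases h : ∃ u, part u = part v ∧ g u = g u₀
    · obtain ⟨u, huv, hu⟩ := h
      refine ⟨⟨u, hu⟩, hg.eq_of_eq _ _ ((hpp _).trans huv) ?_⟩
      rw [hv, ← huv, hcp ⟨u, hu⟩]
    · exact absurd ⟨v, rfl, hv.trans (dif_neg h)⟩ h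
  refine ⟨c, ⟨fun i => ?_, fun u v huv hu => ?_, fun v w hvw h => ?_⟩, fun h => ?_⟩
  · by_cases h : ∃ u, part u = i ∧ g u = g u₀
    · obtain ⟨u, rfl, hu⟩ := h
      exact Or.inr ⟨⟨u, rfl, hu⟩, p ⟨u, hu⟩, hpp _, (hcp ⟨u, hu⟩).symm⟩
    · exact Or.inl (dif_neg h)
  · exact fun h => hpne ⟨u, hu⟩ v huv ((hcp ⟨u, hu⟩).symm.trans h.symm)
  · obtain ⟨y, rfl⟩ := heq v h.1
    obtain ⟨z, rfl⟩ := heq w h.2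
    exact hp y z (fun hyz => H.irrefl (hyz ▸ hvw)) (Or.inl hvw)
  · have hne : p ⟨u₀, rfl⟩ ≠ p ⟨w₀, hg₀.symm⟩ := fun h => hpart₀ <| by
      rw [← hpp ⟨u₀, rfl⟩, ← hpp ⟨w₀, hg₀.symm⟩, h]
    rw [hcp ⟨u₀, rfl⟩, hcp ⟨w₀, hg₀.symm⟩] at h
    exact hp ⟨u₀, rfl⟩ ⟨w₀, hg₀.symm⟩ (fun h => hne (congrArg p h))
      (Or.inr ((SimpleGraph.fromRel_adj _ _ _).2 ⟨hne, Or.inl ⟨h, hpp _, hpp _⟩⟩))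

theorem exists_strong_colouring (hdeg : ∀ u, H.degree u ≤ d)
    (hpart : ∀ u, 5 * d + 4 ≤ (Finset.univ.filter fun w => part w = part u).card)
    (hL : ∀ i, (Finset.univ.filter fun w => part w = i).card ≤ (L i).card) :
    ∃ g, IsPartColouring part L g ∧ ∀ u w, H.Adj u w → g u ≠ g w := by
  classical
  obtain ⟨g, hg⟩ := exists_isPartColouring hL
  induction hn : (monochromaticPairs H g).card using Nat.strong_induction_on generalizing g with
  | _ n ih =>
    by_cases hproper : ∀ u w, H.Adj u w → g u ≠ g w
    · exact ⟨g, hg, hproper⟩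
    · push Not at hproper
      obtain ⟨u, w, huw, hguw⟩ := hproper
      obtain ⟨c, hc, hne⟩ := hg.exists_isRecolouring hdeg hpart
        (fun h => huw.ne (hg.eq_of_eq u w h hguw)) hguw
      exact ih _ (hn ▸ Finset.card_lt_card (hc.monochromaticPairs_ssubset huw hguw hne)) _
        (hg.swap hc) rfl

theorem exists_strong_colouring_on [Inhabited κ] {V : Type*} {H : SimpleGraph V}
    [DecidableRel H.Adj] {U : Finset V} {x : V → ι} {L : ι → Finset κ}
    (hdeg : ∀ u ∈ U, degIn H U u ≤ d)
    (hx : ∀ u ∈ U, 5 * d + 4 ≤ (U.filter fun w => x w = x u).card)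
    (hL : ∀ i, (U.filter fun w => x w = i).card ≤ (L i).card) :
    ∃ g : V → κ, (∀ u ∈ U, g u ∈ L (x u)) ∧
      (∀ u ∈ U, ∀ w ∈ U, x u = x w → g u = g w → u = w) ∧
      ∀ u ∈ U, ∀ w ∈ U, H.Adj u w → g u ≠ g w := by
  classical
  have hcard : ∀ i, (Finset.univ.filter fun w : (U : Set V) => x w = i).card =
      (U.filter fun w => x w = i).card := fun i => by
    rw [← Finset.card_map (Function.Embedding.subtype _)]
    congr 1
    ext w
    simp [and_comm]
  obtain ⟨g, hg, hproper⟩ := exists_strong_colouring (H := H.induce (U : Set V))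
    (part := fun u => x u) (fun u => (degree_induce_eq_degIn H u).trans_le (hdeg u u.2))
    (fun u => (hx u u.2).trans (hcard (x u)).ge) (fun i => (hcard i).trans_le (hL i))
  obtain ⟨f, hf⟩ : ∃ f : V → κ, ∀ u : (U : Set V), f u = g u :=
    ⟨Function.extend Subtype.val g default, Subtype.val_injective.extend_apply g default⟩
  refine ⟨f, fun u hu => ?_, fun u hu w hw hxuw hfuw => ?_, fun u hu w hw huw => ?_⟩
  · exact hf ⟨u, hu⟩ ▸ hg.mem ⟨u, hu⟩
  · rw [hf ⟨u, hu⟩, hf ⟨w, hw⟩] at hfuw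
    exact congrArg Subtype.val (hg.eq_of_eq ⟨u, hu⟩ ⟨w, hw⟩ hxuw hfuw)
  · rw [hf ⟨u, hu⟩, hf ⟨w, hw⟩]
    exact hproper ⟨u, hu⟩ ⟨w, hw⟩ huw

end StrongColouring

/-! ### Partial labellings and critical sets -/

section PartialLabelling

variable {V : Type*} {G : SimpleGraph V} {k M : ℕ} {S C U F : Finset V} {f g : V → ℤ}

/-- An `L(k,1)`-labelling of the vertices in `C` with labels `1, …, M`. Vertices of `C` count as
having distance two only if they have a common neighbour in `S`. -/
structure IsPartialLabelling (G : SimpleGraph V) (k M : ℕ) (S C : Finset V) (f : V → ℤ) :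
    Prop where
  mem_Icc : ∀ v ∈ C, f v ∈ Finset.Icc (1 : ℤ) M
  le_abs_sub : ∀ u ∈ C, ∀ v ∈ C, G.Adj u v → (k : ℤ) ≤ |f u - f v|
  ne : ∀ u ∈ C, ∀ v ∈ C, u ≠ v → (∃ w ∈ S, G.Adj u w ∧ G.Adj w v) → f u ≠ f v

/-- The labels which a new vertex with labelled neighbours `A` can receive if the vertices in `B`
are at distance two from it. -/
noncomputable def availableLabels (k M : ℕ) (f : V → ℤ) (A B : Finset V) : Finset ℤ :=
  Finset.Icc 1 M \ ((A.biUnion fun w => Finset.Ioo (f w - k) (f w + k)) ∪ B.image f)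

theorem mem_availableLabels {A B : Finset V} {a : ℤ} :
    a ∈ availableLabels k M f A B ↔ a ∈ Finset.Icc (1 : ℤ) M ∧
      (∀ w ∈ A, (k : ℤ) ≤ |a - f w|) ∧ ∀ w ∈ B, a ≠ f w := by
  have hIoo : ∀ w, a ∉ Finset.Ioo (f w - k) (f w + k) ↔ (k : ℤ) ≤ |a - f w| := fun w => by
    rw [Finset.mem_Ioo, ← not_lt, abs_lt]
    exact not_congr (by omega)
  simp only [availableLabels, Finset.mem_sdiff, Finset.mem_union, Finset.mem_biUnion,
    Finset.mem_image, not_or, not_exists, not_and, hIoo, eq_comm (a := a), ne_eq]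

theorem le_card_availableLabels (k M : ℕ) (f : V → ℤ) (A B : Finset V) :
    M ≤ (availableLabels k M f A B).card + (2 * k - 1) * A.card + B.card := by
  have hA : (A.biUnion fun w => Finset.Ioo (f w - k) (f w + k)).card ≤ A.card * (2 * k - 1) :=
    Finset.card_biUnion_le_card_mul _ _ _ fun w _ => by
      rw [Int.card_Ioo]
      omega
  have hB : (B.image f).card ≤ B.card := Finset.card_image_le
  have hunion := Finset.card_union_le
    (A.biUnion fun w => Finset.Ioo (f w - k) (f w + k)) (B.image f)
  have hsdiff := Finset.le_card_sdiff
    ((A.biUnion fun w => Finset.Ioo (f w - k) (f w + k)) ∪ B.image f) (Finset.Icc (1 : ℤ) M)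
  rw [Int.card_Icc, ← availableLabels] at hsdiff
  rw [mul_comm] at hA
  omega

theorem nbrsIn_subset_nbrsIn [DecidableRel G.Adj] (hCS : C ⊆ S) (v : V) :
    nbrsIn G C v ⊆ nbrsIn G S v :=
  Finset.filter_subset_filter _ hCS

variable [DecidableEq V]

namespace IsPartialLabelling

theorem union (hf : IsPartialLabelling G k M S C f) (hg : IsPartialLabelling G k M S U g)
    (hdisj : Disjoint C U)
    (hadj : ∀ u ∈ U, ∀ v ∈ C, G.Adj u v → (k : ℤ) ≤ |g u - f v|)
    (hne : ∀ u ∈ U, ∀ v ∈ C, (∃ w ∈ S, G.Adj u w ∧ G.Adj w v) → g u ≠ f v) :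
    IsPartialLabelling G k M S (C ∪ U) (U.piecewise g f) := by
  have hC : ∀ v ∈ C, U.piecewise g f v = f v := fun v hv =>
    U.piecewise_eq_of_notMem _ _ (Finset.disjoint_left.1 hdisj hv)
  have hU : ∀ v ∈ U, U.piecewise g f v = g v := fun v hv => U.piecewise_eq_of_mem _ _ hv
  refine ⟨fun v hv => ?_, fun u hu v hv huv => ?_, fun u hu v hv huv hw => ?_⟩
  · rcases Finset.mem_union.1 hv with hv | hv
    · exact hC v hv ▸ hf.mem_Icc v hv
    · exact hU v hv ▸ hg.mem_Icc v hv
  · rcases Finset.mem_union.1 hu with hu | hu <;> rcases Finset.mem_union.1 hv with hv | hv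
    · rw [hC u hu, hC v hv]
      exact hf.le_abs_sub u hu v hv huv
    · rw [hC u hu, hU v hv, abs_sub_comm]
      exact hadj v hv u hu huv.symm
    · rw [hU u hu, hC v hv]
      exact hadj u hu v hv huv
    · rw [hU u hu, hU v hv]
      exact hg.le_abs_sub u hu v hv huv
  · rcases Finset.mem_union.1 hu with hu | hu <;> rcases Finset.mem_union.1 hv with hv | hv
    · rw [hC u hu, hC v hv]
      exact hf.ne u hu v hv huv hw
    · obtain ⟨w, hw, huw, hwv⟩ := hw
      rw [hC u hu, hU v hv]
      exact (hne v hv u hu ⟨w, hw, hwv.symm, huw.symm⟩).symm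
    · rw [hU u hu, hC v hv]
      exact hne u hu v hv hw
    · rw [hU u hu, hU v hv]
      exact hg.ne u hu v hv huv hw

variable [DecidableRel G.Adj]

theorem restrict (hf : IsPartialLabelling G k M (S \ F) (S \ F) f) (hC : C ⊆ S \ F)
    (hF : ∀ w ∈ F, degIn G C w ≤ 1) : IsPartialLabelling G k M S C f where
  mem_Icc v hv := hf.mem_Icc v (hC hv)
  le_abs_sub u hu v hv := hf.le_abs_sub u (hC hu) v (hC hv)
  ne u hu v hv huv := by
    rintro ⟨w, hw, huw, hwv⟩
    by_cases hwF : w ∈ F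
    · exact absurd (Finset.card_le_one.1 (hF w hwF) u (mem_nbrsIn.2 ⟨hu, huw.symm⟩) v
        (mem_nbrsIn.2 ⟨hv, hwv⟩)) huv
    · exact hf.ne u (hC hu) v (hC hv) huv ⟨w, Finset.mem_sdiff.2 ⟨hw, hwF⟩, huw, hwv⟩

theorem exists_insert (hf : IsPartialLabelling G k M S C f) {y : V} (hy : y ∉ C)
    (hcount : (2 * k - 1) * degIn G C y + ∑ z ∈ nbrsIn G S y, degIn G C z < M) :
    ∃ f', IsPartialLabelling G k M S (insert y C) f' := by
  set B := (nbrsIn G S y).biUnion fun z => nbrsIn G C z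
  have hB : B.card ≤ ∑ z ∈ nbrsIn G S y, degIn G C z := Finset.card_biUnion_le
  have hcard : M ≤ (availableLabels k M f (nbrsIn G C y) B).card +
      (2 * k - 1) * degIn G C y + B.card := le_card_availableLabels k M f _ B
  obtain ⟨a, ha⟩ : (availableLabels k M f (nbrsIn G C y) B).Nonempty :=
    Finset.card_pos.1 (by omega)
  obtain ⟨haM, hadj, hne⟩ := mem_availableLabels.1 ha
  have hsingle : IsPartialLabelling G k M S {y} fun _ => a := by
    refine ⟨fun _ _ => haM, fun u hu v hv huv => ?_, fun u hu v hv huv => ?_⟩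
    all_goals rw [Finset.mem_singleton.1 hu, Finset.mem_singleton.1 hv] at huv
    · exact absurd huv G.irrefl
    · exact absurd rfl huv
  rw [Finset.insert_eq, Finset.union_comm]
  refine ⟨_, hf.union hsingle (Finset.disjoint_singleton_right.2 hy)
    (fun u hu v hv huv => ?_) fun u hu v hv => ?_⟩
  all_goals obtain rfl := Finset.mem_singleton.1 hu
  · exact hadj v (mem_nbrsIn.2 ⟨hv, huv⟩)
  · rintro ⟨w, hw, huw, hwv⟩
    exact hne v (Finset.mem_biUnion.2 ⟨w, mem_nbrsIn.2 ⟨hw, huw⟩, mem_nbrsIn.2 ⟨hv, hwv⟩⟩)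

theorem exists_union (hf : IsPartialLabelling G k M S C f) (hCS : C ⊆ S) (hFS : F ⊆ S)
    (hcount : ∀ y ∈ F, (2 * k - 1) * degIn G S y + ∑ z ∈ nbrsIn G S y, degIn G S z < M) :
    ∃ f', IsPartialLabelling G k M S (C ∪ F) f' := by
  induction F using Finset.induction_on with
  | empty => exact ⟨f, by rwa [Finset.union_empty]⟩
  | insert y F _ ih =>
    obtain ⟨-, hFS⟩ := Finset.insert_subset_iff.1 hFS
    obtain ⟨f', hf'⟩ := ih hFS fun v hv => hcount v (Finset.mem_insert_of_mem hv)
    rw [Finset.union_insert]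
    by_cases hyC : y ∈ C ∪ F
    · exact ⟨f', by rwa [Finset.insert_eq_of_mem hyC]⟩
    · have hmono : ∀ v, degIn G (C ∪ F) v ≤ degIn G S v := fun v =>
        Finset.card_le_card (nbrsIn_subset_nbrsIn (Finset.union_subset hCS hFS) v)
      exact hf'.exists_insert hyC ((Nat.add_le_add (Nat.mul_le_mul_left _ (hmono y))
        (Finset.sum_le_sum fun z _ => hmono z)).trans_lt (hcount y (Finset.mem_insert_self y F)))

end IsPartialLabelling

end PartialLabelling

section Critical

variable {V : Type*} {G : SimpleGraph V} [DecidableRel G.Adj] {k D : ℕ} {S C F : Finset V}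

/-- The vertices of degree two all of whose neighbours have degree at most `13`. They can be
labelled last. -/
def thin (G : SimpleGraph V) [DecidableRel G.Adj] (S : Finset V) : Finset V :=
  S.filter fun v => degIn G S v = 2 ∧ ∀ w ∈ nbrsIn G S v, degIn G S w ≤ 13

/-- The neighbours of degree at least `14`. -/
def bigNbrs (G : SimpleGraph V) [DecidableRel G.Adj] (S : Finset V) (v : V) : Finset V :=
  (nbrsIn G S v).filter fun w => 14 ≤ degIn G S w

theorem mem_thin {v : V} :
    v ∈ thin G S ↔ v ∈ S ∧ degIn G S v = 2 ∧ ∀ w ∈ nbrsIn G S v, degIn G S w ≤ 13 :=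
  Finset.mem_filter

theorem mem_bigNbrs {v w : V} : w ∈ bigNbrs G S v ↔ w ∈ nbrsIn G S v ∧ 14 ≤ degIn G S w :=
  Finset.mem_filter

theorem thin_subset : thin G S ⊆ S :=
  Finset.filter_subset _ _

theorem notMem_thin_of_le_degIn {w : V} (hw : 14 ≤ degIn G S w) : w ∉ thin G S := fun h => by
  have := (mem_thin.1 h).2.1
  omega

section Erase

variable [DecidableEq V]

theorem nbrsIn_subset_erase (hCS : C ⊆ S) {u : V} (hu : u ∉ C) (v : V) :
    nbrsIn G C v ⊆ (nbrsIn G S v).erase u :=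
  Finset.subset_erase.2 ⟨nbrsIn_subset_nbrsIn hCS v, fun h => hu (mem_nbrsIn.1 h).1⟩

theorem card_nbrsIn_erase {u v : V} (hu : u ∈ S) (hvu : G.Adj v u) :
    ((nbrsIn G S v).erase u).card = degIn G S v - 1 :=
  Finset.card_erase_of_mem (mem_nbrsIn.2 ⟨hu, hvu⟩)

theorem card_nbrsIn_erase_of_mem_thin {u v : V} (hv : v ∈ thin G S) (hu : u ∈ S)
    (hvu : G.Adj v u) : ((nbrsIn G S v).erase u).card = 1 := by
  rw [card_nbrsIn_erase hu hvu, (mem_thin.1 hv).2.1]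

end Erase

theorem degIn_le_one_of_mem_thin (hCS : C ⊆ S) {u v : V} (hu : u ∈ S) (huC : u ∉ C)
    (hv : v ∈ thin G S) (hvu : G.Adj v u) : degIn G C v ≤ 1 := by
  classical
  exact (Finset.card_le_card (nbrsIn_subset_erase hCS huC v)).trans
    (card_nbrsIn_erase_of_mem_thin hv hu hvu).le

variable [DecidableEq V]

theorem sum_degIn_le_sum_sdiff_thin (hCS : C ⊆ S) {u : V} (hu : u ∈ S) (huC : u ∉ C) :
    ∑ z ∈ nbrsIn G S u, degIn G C z ≤
      ∑ z ∈ nbrsIn G S u \ thin G S, degIn G S z + (nbrsIn G S u ∩ thin G S).card := by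
  rw [← Finset.sum_inter_add_sum_sdiff (nbrsIn G S u) (thin G S), add_comm]
  refine Nat.add_le_add (Finset.sum_le_sum fun z _ =>
    Finset.card_le_card (nbrsIn_subset_nbrsIn hCS z)) ?_
  refine (Finset.sum_le_card_nsmul _ _ 1 fun z hz => ?_).trans_eq (by simp)
  obtain ⟨hz, hzT⟩ := Finset.mem_inter.1 hz
  exact degIn_le_one_of_mem_thin hCS hu huC hzT (mem_nbrsIn.1 hz).2.symm

/-- A minimal vertex set without a labelling. The bound `D` plays the role of the maximum degree,
so that the number of labels is `D + 2k - 1`. -/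
structure IsCritical (G : SimpleGraph V) [DecidableRel G.Adj] (k D : ℕ) (S : Finset V) :
    Prop where
  one_le : 1 ≤ k
  le_bound : 190 + 2 * k ≤ D
  degIn_le : ∀ v, degIn G S v ≤ D
  exists_of_subset : ∀ F ⊆ S, F.Nonempty →
    ∃ f, IsPartialLabelling G k (D + 2 * k - 1) (S \ F) (S \ F) f
  not_exists : ¬ ∃ f, IsPartialLabelling G k (D + 2 * k - 1) S S f

namespace IsCritical

theorem two_le_degIn (h : IsCritical G k D S) {v : V} (hv : v ∈ S) : 2 ≤ degIn G S v := by
  by_contra! hlt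
  have hle : degIn G S v ≤ 1 := Nat.le_of_lt_succ hlt
  have hvC : v ∉ S \ {v} := by simp
  have hle' : degIn G (S \ {v}) v ≤ 1 :=
    (Finset.card_le_card (nbrsIn_subset_nbrsIn Finset.sdiff_subset v)).trans hle
  obtain ⟨f, hf⟩ := h.exists_of_subset {v} (Finset.singleton_subset_iff.2 hv)
    (Finset.singleton_nonempty v)
  have hfS := hf.restrict subset_rfl fun w hw => Finset.mem_singleton.1 hw ▸ hle'
  have hsum : ∑ z ∈ nbrsIn G S v, degIn G (S \ {v}) z ≤ degIn G S v * (D - 1) := by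
    refine Finset.sum_le_card_nsmul _ _ _ fun z hz => ?_
    refine (Finset.card_le_card (nbrsIn_subset_erase Finset.sdiff_subset hvC z)).trans ?_
    rw [card_nbrsIn_erase hv (mem_nbrsIn.1 hz).2.symm]
    exact Nat.sub_le_sub_right (h.degIn_le z) 1
  have hcount : (2 * k - 1) * degIn G (S \ {v}) v + ∑ z ∈ nbrsIn G S v, degIn G (S \ {v}) z <
      D + 2 * k - 1 := calc
    _ ≤ (2 * k - 1) * 1 + 1 * (D - 1) :=
      Nat.add_le_add (Nat.mul_le_mul_left _ hle') (hsum.trans (Nat.mul_le_mul_right _ hle))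
    _ < D + 2 * k - 1 := by
      have := h.one_le
      have := h.le_bound
      omega
  obtain ⟨f', hf'⟩ := hfS.exists_insert hvC hcount
  rw [← Finset.erase_eq, Finset.insert_erase hv] at hf'
  exact h.not_exists ⟨f', hf'⟩

theorem not_exists_sdiff_thin (h : IsCritical G k D S) (hF : F ⊆ thin G S) :
    ¬ ∃ f, IsPartialLabelling G k (D + 2 * k - 1) S (S \ F) f := by
  rintro ⟨f, hf⟩
  have hFS : F ⊆ S := hF.trans thin_subset
  obtain ⟨f', hf'⟩ := hf.exists_union Finset.sdiff_subset hFS fun y hy => by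
    obtain ⟨-, h2, h13⟩ := mem_thin.1 (hF hy)
    have hsum : ∑ z ∈ nbrsIn G S y, degIn G S z ≤ degIn G S y * 13 :=
      Finset.sum_le_card_nsmul _ _ _ h13
    rw [h2] at hsum ⊢
    have := h.one_le
    have := h.le_bound
    omega
  rw [Finset.sdiff_union_of_subset hFS] at hf'
  exact h.not_exists ⟨f', hf'⟩

/-- Otherwise remove the thin neighbours of `u`, relabel `u`, and then label them last. -/
theorem le_sum_degIn_sdiff_thin (h : IsCritical G k D S) {u : V} (hu : u ∈ S)
    (hne : (nbrsIn G S u ∩ thin G S).Nonempty) :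
    D + 2 * k - 1 ≤ (2 * k - 1) * (nbrsIn G S u \ thin G S).card +
      (∑ z ∈ nbrsIn G S u \ thin G S, degIn G S z + (nbrsIn G S u ∩ thin G S).card) := by
  by_contra! hlt
  set F := nbrsIn G S u ∩ thin G S
  have hFT : F ⊆ thin G S := Finset.inter_subset_right
  have hFadj : ∀ w ∈ F, G.Adj u w := fun w hw => (mem_nbrsIn.1 (Finset.mem_inter.1 hw).1).2
  have huF : u ∈ S \ F := Finset.mem_sdiff.2 ⟨hu, fun h => G.irrefl (hFadj u h)⟩
  set C := (S \ F).erase u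
  have hCS : C ⊆ S := (Finset.erase_subset _ _).trans Finset.sdiff_subset
  have huC : u ∉ C := Finset.notMem_erase u _
  obtain ⟨f, hf⟩ := h.exists_of_subset F (hFT.trans thin_subset) hne
  have hfC := hf.restrict (Finset.erase_subset u _) fun w hw =>
    degIn_le_one_of_mem_thin hCS hu huC (hFT hw) (hFadj w hw).symm
  have hdeg : degIn G C u ≤ (nbrsIn G S u \ thin G S).card := by
    refine Finset.card_le_card fun w hw => ?_
    obtain ⟨hw, huw⟩ := mem_nbrsIn.1 hw
    have hwN : w ∈ nbrsIn G S u := mem_nbrsIn.2 ⟨hCS hw, huw⟩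
    exact Finset.mem_sdiff.2 ⟨hwN, fun hwT =>
      (Finset.mem_sdiff.1 (Finset.mem_of_mem_erase hw)).2 (Finset.mem_inter.2 ⟨hwN, hwT⟩)⟩
  obtain ⟨f', hf'⟩ := hfC.exists_insert huC ((Nat.add_le_add (Nat.mul_le_mul_left _ hdeg)
    (sum_degIn_le_sum_sdiff_thin hCS hu huC)).trans_lt hlt)
  rw [Finset.insert_erase huF] at hf'
  exact h.not_exists_sdiff_thin hFT ⟨f', hf'⟩

theorem three_le_card_sdiff_thin (h : IsCritical G k D S) {u : V} (hu : u ∈ S)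
    (hu13 : degIn G S u ≤ 13) (hbig : bigNbrs G S u = ∅)
    (hne : (nbrsIn G S u ∩ thin G S).Nonempty) : 3 ≤ (nbrsIn G S u \ thin G S).card := by
  by_contra! hlt
  have hcount := h.le_sum_degIn_sdiff_thin hu hne
  have hsum : ∑ z ∈ nbrsIn G S u \ thin G S, degIn G S z ≤
      (nbrsIn G S u \ thin G S).card * 13 := by
    refine Finset.sum_le_card_nsmul _ _ _ fun z hz => ?_
    have := Finset.filter_eq_empty_iff.1 hbig (Finset.mem_sdiff.1 hz).1
    omega
  have hthin : (nbrsIn G S u ∩ thin G S).card ≤ 13 :=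
    (Finset.card_le_card Finset.inter_subset_left).trans hu13
  have hmul : (2 * k - 1) * (nbrsIn G S u \ thin G S).card ≤ (2 * k - 1) * 2 :=
    Nat.mul_le_mul_left _ (by omega)
  have := h.one_le
  have := h.le_bound
  omega

theorem not_adj_of_mem_thin (h : IsCritical G k D S) {u v : V} (hu : u ∈ thin G S)
    (hv : v ∈ thin G S) : ¬ G.Adj u v := by
  intro huv
  obtain ⟨huS, hu2, hu13⟩ := mem_thin.1 hu
  have hbig : bigNbrs G S u = ∅ := Finset.filter_eq_empty_iff.2 fun w hw => by
    have := hu13 w hw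
    omega
  have hthree := h.three_le_card_sdiff_thin huS (by omega) hbig
    ⟨v, Finset.mem_inter.2 ⟨mem_nbrsIn.2 ⟨thin_subset hv, huv⟩, hv⟩⟩
  have : 3 ≤ degIn G S u := hthree.trans (Finset.card_le_card Finset.sdiff_subset)
  omega

end IsCritical

end Critical

section Light

variable {V : Type*} {G : SimpleGraph V} [DecidableRel G.Adj]
  {k D M : ℕ} {S C U : Finset V} {f g : V → ℤ} {x : V → V}

theorem hub_mem_bigNbrs (hx : ∀ u ∈ U, bigNbrs G S u = {x u}) {u : V} (hu : u ∈ U) :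
    x u ∈ bigNbrs G S u :=
  hx u hu ▸ Finset.mem_singleton_self _

variable [DecidableEq V]

/-- The vertices of degree at most five with exactly one neighbour of degree at least `14`, their
hub, all of whose other neighbours are thin. -/
def light (G : SimpleGraph V) [DecidableRel G.Adj] (S : Finset V) : Finset V :=
  S.filter fun v => degIn G S v ≤ 5 ∧ (bigNbrs G S v).card = 1 ∧
    nbrsIn G S v \ thin G S = bigNbrs G S v

theorem mem_light {v : V} : v ∈ light G S ↔ v ∈ S ∧ degIn G S v ≤ 5 ∧
    (bigNbrs G S v).card = 1 ∧ nbrsIn G S v \ thin G S = bigNbrs G S v :=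
  Finset.mem_filter

theorem light_subset : light G S ⊆ S :=
  Finset.filter_subset _ _

theorem notMem_light_of_le_degIn {w : V} (hw : 14 ≤ degIn G S w) : w ∉ light G S := fun h => by
  have := (mem_light.1 h).2.1
  omega

theorem notMem_light_of_mem_thin {w : V} (hw : w ∈ thin G S) : w ∉ light G S := fun h => by
  obtain ⟨z, hz⟩ := Finset.card_pos.1 ((mem_light.1 h).2.2.1 ▸ one_pos)
  obtain ⟨hz, hz14⟩ := mem_bigNbrs.1 hz
  have := (mem_thin.1 hw).2.2 z hz
  omega

theorem card_inter_thin_add_one {u : V} (hu : u ∈ light G S) :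
    (nbrsIn G S u ∩ thin G S).card + 1 = degIn G S u := by
  obtain ⟨-, -, hone, hsdiff⟩ := mem_light.1 hu
  rw [← hone, ← hsdiff, add_comm, Finset.card_sdiff_add_card_inter]

theorem IsCritical.le_degIn_of_light (h : IsCritical G k D S) {u y : V} (hu : u ∈ light G S)
    (hy : bigNbrs G S u = {y}) : D ≤ degIn G S y + 4 := by
  obtain ⟨huS, hu5, -, hsdiff⟩ := mem_light.1 hu
  have hcard := card_inter_thin_add_one hu
  have hdeg := h.two_le_degIn huS
  have hcount := h.le_sum_degIn_sdiff_thin huS (Finset.card_pos.1 (by omega))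
  rw [hsdiff, hy, Finset.card_singleton, Finset.sum_singleton] at hcount
  have := h.one_le
  omega

/-- The graph joining distinct vertices which have a common thin neighbour. -/
def thinLink (G : SimpleGraph V) [DecidableRel G.Adj] (S : Finset V) : SimpleGraph V where
  Adj u w := u ≠ w ∧ ∃ v ∈ thin G S, G.Adj v u ∧ G.Adj v w
  symm := ⟨fun _ _ ⟨hne, v, hv, hvu, hvw⟩ => ⟨hne.symm, v, hv, hvw, hvu⟩⟩
  loopless := ⟨fun _ h => h.1 rfl⟩

theorem degIn_thinLink_le [DecidableRel (thinLink G S).Adj] (hUS : U ⊆ S) {u : V} (hu : u ∈ S) :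
    degIn (thinLink G S) U u ≤ (nbrsIn G S u ∩ thin G S).card := by
  have hsub : nbrsIn (thinLink G S) U u ⊆
      (nbrsIn G S u ∩ thin G S).biUnion fun v => (nbrsIn G S v).erase u := by
    intro w hw
    obtain ⟨hwU, huw, v, hv, hvu, hvw⟩ := mem_nbrsIn.1 hw
    exact Finset.mem_biUnion.2 ⟨v,
      Finset.mem_inter.2 ⟨mem_nbrsIn.2 ⟨thin_subset hv, hvu.symm⟩, hv⟩,
      Finset.mem_erase.2 ⟨huw.symm, mem_nbrsIn.2 ⟨hUS hwU, hvw⟩⟩⟩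
  refine (Finset.card_le_card hsub).trans
    ((Finset.card_biUnion_le_card_mul _ _ 1 fun v hv => ?_).trans_eq (mul_one _))
  obtain ⟨hvu, hv⟩ := Finset.mem_inter.1 hv
  exact (card_nbrsIn_erase_of_mem_thin hv hu (mem_nbrsIn.1 hvu).2.symm).le

theorem eq_hub_or_mem_thin (hU : U ⊆ light G S) (hx : ∀ u ∈ U, bigNbrs G S u = {x u})
    {u w : V} (hu : u ∈ U) (hw : w ∈ S) (huw : G.Adj u w) : w = x u ∨ w ∈ thin G S := by
  refine or_iff_not_imp_right.2 fun hwT => ?_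
  rw [← Finset.mem_singleton, ← hx u hu, ← (mem_light.1 (hU hu)).2.2.2]
  exact Finset.mem_sdiff.2 ⟨mem_nbrsIn.2 ⟨hw, huw⟩, hwT⟩

theorem not_adj_of_mem_light {u w : V} (hu : u ∈ light G S) (hw : w ∈ light G S) :
    ¬ G.Adj u w := fun huw => by
  by_cases hwT : w ∈ thin G S
  · exact notMem_light_of_mem_thin hwT hw
  · have hbig : w ∈ bigNbrs G S u := (mem_light.1 hu).2.2.2 ▸
      Finset.mem_sdiff.2 ⟨mem_nbrsIn.2 ⟨light_subset hw, huw⟩, hwT⟩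
    exact notMem_light_of_le_degIn (mem_bigNbrs.1 hbig).2 hw

theorem isPartialLabelling_of_forall_thinLink (hU : U ⊆ light G S)
    (hx : ∀ u ∈ U, bigNbrs G S u = {x u}) (hg : ∀ u ∈ U, g u ∈ Finset.Icc (1 : ℤ) M)
    (hhub : ∀ u ∈ U, ∀ w ∈ U, x u = x w → g u = g w → u = w)
    (hlink : ∀ u ∈ U, ∀ w ∈ U, (thinLink G S).Adj u w → g u ≠ g w) :
    IsPartialLabelling G k M S U g where
  mem_Icc := hg
  le_abs_sub u hu v hv huv := absurd huv (not_adj_of_mem_light (hU hu) (hU hv))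
  ne u hu v hv huv := by
    rintro ⟨w, hw, huw, hwv⟩
    by_cases hwT : w ∈ thin G S
    · exact hlink u hu v hv ⟨huv, w, hwT, huw.symm, hwv⟩
    · have hwu := (eq_hub_or_mem_thin hU hx hu hw huw).resolve_right hwT
      have hwv := (eq_hub_or_mem_thin hU hx hv hw hwv.symm).resolve_right hwT
      exact fun hguv => huv (hhub u hu v hv (hwu.symm.trans hwv) hguv)

theorem card_fibre_le_card_availableLabels (hk : 1 ≤ k) (hD : ∀ v, degIn G S v ≤ D)
    (hCS : C ⊆ S) (hUS : U ⊆ S) (hCU : Disjoint C U) (hx : ∀ u ∈ U, bigNbrs G S u = {x u})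
    (y : V) : (U.filter fun w => x w = y).card ≤
      (availableLabels k (D + 2 * k - 1) f {y} (nbrsIn G C y)).card := by
  have hlabels := le_card_availableLabels k (D + 2 * k - 1) f {y} (nbrsIn G C y)
  have hdisj : Disjoint (nbrsIn G C y) (U.filter fun w => x w = y) :=
    hCU.mono (Finset.filter_subset _ _) (Finset.filter_subset _ _)
  have hsub : nbrsIn G C y ∪ (U.filter fun w => x w = y) ⊆ nbrsIn G S y := by
    refine Finset.union_subset (nbrsIn_subset_nbrsIn hCS y) fun w hw => ?_
    obtain ⟨hw, hwy⟩ := Finset.mem_filter.1 hw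
    have hwx := mem_nbrsIn.1 (mem_bigNbrs.1 (hub_mem_bigNbrs hx hw)).1
    exact mem_nbrsIn.2 ⟨hUS hw, hwy ▸ hwx.2.symm⟩
  have hle := (Finset.card_le_card hsub).trans (hD y)
  rw [Finset.card_union_of_disjoint hdisj] at hle
  rw [Finset.card_singleton] at hlabels
  omega

/-- Vertices with the same hub need pairwise distinct labels, which have to be compatible with the
labels around the hub, and vertices with a common thin neighbour need distinct labels: this is a
strong list colouring problem. -/
theorem IsPartialLabelling.exists_union_light
    (hf : IsPartialLabelling G k (D + 2 * k - 1) S C f) (hk : 1 ≤ k) (hD : ∀ v, degIn G S v ≤ D)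
    (hCS : C ⊆ S) (hCU : Disjoint C U) (hU : U ⊆ light G S)
    (hx : ∀ u ∈ U, bigNbrs G S u = {x u})
    (hclosed : ∀ u ∈ U, ∀ v ∈ thin G S, G.Adj v u → v ∉ C ∧ nbrsIn G S v ⊆ U)
    (hcard : ∀ u ∈ U, 24 ≤ (U.filter fun w => x w = x u).card) :
    ∃ f', IsPartialLabelling G k (D + 2 * k - 1) S (C ∪ U) f' := by
  classical
  have hUS : U ⊆ S := hU.trans light_subset
  have hdeg : ∀ u ∈ U, degIn (thinLink G S) U u ≤ 4 := fun u hu => by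
    have hle := degIn_thinLink_le (G := G) hUS (hUS hu)
    have := card_inter_thin_add_one (hU hu)
    have := (mem_light.1 (hU hu)).2.1
    omega
  obtain ⟨g, hgL, hghub, hglink⟩ := exists_strong_colouring_on hdeg hcard
    (card_fibre_le_card_availableLabels (f := f) hk hD hCS hUS hCU hx)
  have hg : ∀ u ∈ U, g u ∈ Finset.Icc (1 : ℤ) _ ∧ (∀ w ∈ {x u}, (k : ℤ) ≤ |g u - f w|) ∧
      ∀ w ∈ nbrsIn G C (x u), g u ≠ f w := fun u hu => mem_availableLabels.1 (hgL u hu)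
  refine ⟨_, hf.union (isPartialLabelling_of_forall_thinLink hU hx (fun u hu => (hg u hu).1)
    hghub hglink) hCU (fun u hu v hv huv => ?_) fun u hu v hv => ?_⟩
  · rcases eq_hub_or_mem_thin hU hx hu (hCS hv) huv with rfl | hvT
    · exact (hg u hu).2.1 _ (Finset.mem_singleton_self _)
    · exact absurd hv (hclosed u hu v hvT huv.symm).1
  · rintro ⟨w, hw, huw, hwv⟩
    rcases eq_hub_or_mem_thin hU hx hu hw huw with rfl | hwT
    · exact (hg u hu).2.2 v (mem_nbrsIn.2 ⟨hv, hwv⟩)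
    · exact absurd ((hclosed u hu w hwT huw.symm).2 (mem_nbrsIn.2 ⟨hCS hv, hwv⟩))
        (Finset.disjoint_left.1 hCU hv)

theorem IsCritical.exists_card_hub_le (h : IsCritical G k D S) (hU : U ⊆ light G S)
    (hne : U.Nonempty) (hx : ∀ u ∈ U, bigNbrs G S u = {x u})
    (hclosed : ∀ u ∈ U, ∀ v ∈ thin G S, G.Adj v u → nbrsIn G S v ⊆ U) :
    ∃ u ∈ U, (U.filter fun w => x w = x u).card ≤ 23 := by
  by_contra! hcard
  set F := (thin G S).filter fun v => ∃ u ∈ U, G.Adj v u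
  have hFT : F ⊆ thin G S := Finset.filter_subset _ _
  have hFU : ∀ w ∈ F, nbrsIn G S w ⊆ U := fun w hw => by
    obtain ⟨hw, u, hu, hwu⟩ := Finset.mem_filter.1 hw
    exact hclosed u hu w hw hwu
  have hFne : F.Nonempty := by
    obtain ⟨u, hu⟩ := hne
    have hdeg := h.two_le_degIn (light_subset (hU hu))
    have hinter := card_inter_thin_add_one (hU hu)
    obtain ⟨v, hv⟩ := Finset.card_pos.1 (show 0 < (nbrsIn G S u ∩ thin G S).card by omega)
    obtain ⟨hv, hvT⟩ := Finset.mem_inter.1 hv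
    exact ⟨v, Finset.mem_filter.2 ⟨hvT, u, hu, (mem_nbrsIn.1 hv).2.symm⟩⟩
  have hCS : (S \ F) \ U ⊆ S := Finset.sdiff_subset.trans Finset.sdiff_subset
  have hdeg : ∀ w ∈ F, degIn G ((S \ F) \ U) w ≤ 1 := fun w hw => by
    have hempty : nbrsIn G ((S \ F) \ U) w = ∅ := Finset.eq_empty_of_forall_notMem fun p hp =>
      (Finset.mem_sdiff.1 (mem_nbrsIn.1 hp).1).2 (hFU w hw (nbrsIn_subset_nbrsIn hCS w hp))
    simp [degIn, hempty]
  obtain ⟨f, hf⟩ := h.exists_of_subset F (hFT.trans thin_subset) hFne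
  obtain ⟨f', hf'⟩ := (hf.restrict Finset.sdiff_subset hdeg).exists_union_light h.one_le
    h.degIn_le hCS Finset.sdiff_disjoint hU hx
    (fun u hu v hv hvu => ⟨fun hvC => (Finset.mem_sdiff.1 (Finset.mem_sdiff.1 hvC).1).2
      (Finset.mem_filter.2 ⟨hv, u, hu, hvu⟩), hclosed u hu v hv hvu⟩)
    fun u hu => hcard u hu
  rw [Finset.sdiff_union_of_subset fun u hu => Finset.mem_sdiff.2 ⟨light_subset (hU hu),
    fun huF => notMem_light_of_mem_thin (hFT huF) (hU hu)⟩] at hf'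
  exact h.not_exists_sdiff_thin hFT ⟨f', hf'⟩

end Light

/-! ### Discharging -/

section Discharging

variable {V : Type*} [DecidableEq V] {G : SimpleGraph V} [DecidableRel G.Adj]
  {k D : ℕ} {S U W : Finset V} {x : V → V}

/-- The thin vertices all of whose neighbours are in `U`. -/
def enclosedThin (G : SimpleGraph V) [DecidableRel G.Adj] (S U : Finset V) : Finset V :=
  (thin G S).filter fun v => nbrsIn G S v ⊆ U

theorem mem_enclosedThin {v : V} : v ∈ enclosedThin G S U ↔ v ∈ thin G S ∧ nbrsIn G S v ⊆ U :=
  Finset.mem_filter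

theorem enclosedThin_empty : enclosedThin G S ∅ = ∅ :=
  Finset.filter_eq_empty_iff.2 fun v hv hsub => by
    have hdeg := (mem_thin.1 hv).2.1
    rw [degIn, Finset.subset_empty.1 hsub, Finset.card_empty] at hdeg
    omega

theorem enclosedThin_subset_union (G : SimpleGraph V) [DecidableRel G.Adj] (S U W : Finset V) :
    enclosedThin G S U ⊆
      enclosedThin G S (U \ W) ∪ W.biUnion fun w => nbrsIn G S w ∩ thin G S := by
  intro v hv
  obtain ⟨hvT, hvU⟩ := mem_enclosedThin.1 hv
  by_cases hW : nbrsIn G S v ⊆ U \ W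
  · exact Finset.mem_union_left _ (mem_enclosedThin.2 ⟨hvT, hW⟩)
  · obtain ⟨w, hw, hwU⟩ := Finset.not_subset.1 hW
    have hwW : w ∈ W := by_contra fun hwW => hwU (Finset.mem_sdiff.2 ⟨hvU hw, hwW⟩)
    have hvw : v ∈ nbrsIn G S w := mem_nbrsIn.2 ⟨thin_subset hvT, (mem_nbrsIn.1 hw).2.symm⟩
    exact Finset.mem_union_right _
      (Finset.mem_biUnion.2 ⟨w, hwW, Finset.mem_inter.2 ⟨hvw, hvT⟩⟩)

theorem card_enclosedThin_lt {u v : V} (hv : v ∈ nbrsIn G S u ∩ thin G S)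
    (hvU : ¬ nbrsIn G S v ⊆ U) : (enclosedThin G S U).card <
      (enclosedThin G S (U \ {u})).card + (nbrsIn G S u ∩ thin G S).card := by
  have hsub : insert v (enclosedThin G S U) ⊆
      enclosedThin G S (U \ {u}) ∪ (nbrsIn G S u ∩ thin G S) :=
    Finset.insert_subset (Finset.mem_union_right _ hv)
      ((enclosedThin_subset_union G S U {u}).trans_eq (by rw [Finset.singleton_biUnion]))
  have hcard := (Finset.card_le_card hsub).trans (Finset.card_union_le _ _)
  rwa [Finset.card_insert_of_notMem fun h => hvU (mem_enclosedThin.1 h).2] at hcard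

theorem card_image_sdiff_fibre_lt {α β : Type*} [DecidableEq α] [DecidableEq β] {s : Finset α}
    (f : α → β) {a : α} (ha : a ∈ s) :
    ((s \ s.filter fun b => f b = f a).image f).card < (s.image f).card := by
  refine Finset.card_lt_card (Finset.ssubset_iff_of_subset
    (Finset.image_subset_image Finset.sdiff_subset) |>.2
    ⟨f a, Finset.mem_image_of_mem f ha, fun h => ?_⟩)
  obtain ⟨b, hb, hba⟩ := Finset.mem_image.1 h
  obtain ⟨hb, hbf⟩ := Finset.mem_sdiff.1 hb
  exact hbf (Finset.mem_filter.2 ⟨hb, hba⟩)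

namespace IsCritical

theorem four_mul_card_inter_thin_le (h : IsCritical G k D S) {u : V} (hu : u ∈ light G S) :
    4 * ((nbrsIn G S u ∩ thin G S).card : ℤ) ≤ 5 * ((degIn G S u : ℤ) - 2) + 4 := by
  have hcard := card_inter_thin_add_one hu
  have hdeg := h.two_le_degIn (light_subset hu)
  omega

theorem four_mul_card_enclosedThin_le_add (h : IsCritical G k D S) (hW : W ⊆ light G S) :
    4 * ((enclosedThin G S U).card : ℤ) ≤
      4 * ((enclosedThin G S (U \ W)).card : ℤ) + ∑ u ∈ W, 5 * ((degIn G S u : ℤ) - 2) +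
        4 * W.card := by
  have hcard : (enclosedThin G S U).card ≤
      (enclosedThin G S (U \ W)).card + ∑ w ∈ W, (nbrsIn G S w ∩ thin G S).card :=
    (Finset.card_le_card (enclosedThin_subset_union G S U W)).trans <|
      (Finset.card_union_le _ _).trans (Nat.add_le_add_left Finset.card_biUnion_le _)
  have hsum := Finset.sum_le_sum fun u hu => h.four_mul_card_inter_thin_le (hW hu)
  rw [← Finset.mul_sum, Finset.sum_add_distrib, Finset.sum_const, nsmul_eq_mul] at hsum
  zify at hcard
  linarith

/-- By induction on `U`: a light vertex with a thin neighbour which is not enclosed can be removed,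
and otherwise all vertices with a hub which has at most `23` neighbours in `U`; `92 = 4 * 23`. -/
theorem four_mul_card_enclosedThin_le (h : IsCritical G k D S) (hU : U ⊆ light G S)
    (hx : ∀ u ∈ U, bigNbrs G S u = {x u}) :
    4 * ((enclosedThin G S U).card : ℤ) ≤
      ∑ u ∈ U, 5 * ((degIn G S u : ℤ) - 2) + 92 * (U.image x).card := by
  induction U using Finset.strongInduction with
  | H U ih =>
  have ih' : ∀ W ⊆ U, W.Nonempty → 4 * ((enclosedThin G S (U \ W)).card : ℤ) +
      ∑ u ∈ W, 5 * ((degIn G S u : ℤ) - 2) ≤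
        ∑ u ∈ U, 5 * ((degIn G S u : ℤ) - 2) + 92 * ((U \ W).image x).card := by
    intro W hW hWne
    have := ih (U \ W) (Finset.sdiff_ssubset hW hWne) (Finset.sdiff_subset.trans hU)
      fun u hu => hx u (Finset.mem_sdiff.1 hu).1
    rw [← Finset.sum_sdiff hW]
    linarith
  rcases U.eq_empty_or_nonempty with rfl | hne
  · simp [enclosedThin_empty]
  by_cases hclosed : ∀ u ∈ U, ∀ v ∈ thin G S, G.Adj v u → nbrsIn G S v ⊆ U
  · obtain ⟨u, hu, hcard⟩ := h.exists_card_hub_le hU hne hx hclosed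
    have hWU : (U.filter fun w => x w = x u) ⊆ U := Finset.filter_subset _ _
    have hremove := h.four_mul_card_enclosedThin_le_add (U := U) (hWU.trans hU)
    have hrest := ih' _ hWU ⟨u, Finset.mem_filter.2 ⟨hu, rfl⟩⟩
    have himage := card_image_sdiff_fibre_lt x hu
    omega
  · push Not at hclosed
    obtain ⟨u, hu, v, hv, hvu, hvU⟩ := hclosed
    have hrest := ih' {u} (Finset.singleton_subset_iff.2 hu) (Finset.singleton_nonempty u)
    have hremove := card_enclosedThin_lt
      (Finset.mem_inter.2 ⟨mem_nbrsIn.2 ⟨thin_subset hv, hvu.symm⟩, hv⟩) hvU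
    have hinter := h.four_mul_card_inter_thin_le (hU hu)
    have himage : ((U \ {u}).image x).card ≤ (U.image x).card :=
      Finset.card_le_card (Finset.image_subset_image Finset.sdiff_subset)
    rw [Finset.sum_singleton] at hrest
    omega

end IsCritical

/-- The discharging rule: `u` sends charge `4` to its neighbour `v`. -/
def Sends (G : SimpleGraph V) [DecidableRel G.Adj] (S : Finset V) (u v : V) : Prop :=
  14 ≤ degIn G S u ∨ (u ∉ light G S ∧ u ∉ thin G S ∧ v ∈ thin G S)

instance (S : Finset V) : DecidableRel (Sends G S) := fun _ _ =>
  inferInstanceAs (Decidable (_ ∨ _))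

/-- The charge of `v` after discharging, starting with the charge `5 * degIn G S v - 14`. -/
def finalCharge (G : SimpleGraph V) [DecidableRel G.Adj] (S : Finset V) (v : V) : ℤ :=
  5 * degIn G S v - 14 - 4 * ((nbrsIn G S v).filter fun w => Sends G S v w).card +
    4 * ((nbrsIn G S v).filter fun w => Sends G S w v).card

theorem sum_finalCharge (G : SimpleGraph V) [DecidableRel G.Adj] (S : Finset V) :
    ∑ v ∈ S, finalCharge G S v = 5 * ∑ v ∈ S, (degIn G S v : ℤ) - 14 * S.card := by
  have hswap : ∑ v ∈ S, (((nbrsIn G S v).filter fun w => Sends G S v w).card : ℤ) =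
      ∑ v ∈ S, (((nbrsIn G S v).filter fun w => Sends G S w v).card : ℤ) := by
    simp only [nbrsIn, Finset.filter_filter, Finset.card_filter, Nat.cast_sum]
    rw [Finset.sum_comm]
    simp only [G.adj_comm]
  simp only [finalCharge, Finset.sum_add_distrib, Finset.sum_sub_distrib, ← Finset.mul_sum, hswap,
    Finset.sum_const, nsmul_eq_mul]
  ring

theorem card_bigNbrs_le_card_sends (v : V) :
    (bigNbrs G S v).card ≤ ((nbrsIn G S v).filter fun w => Sends G S w v).card :=
  Finset.card_le_card (Finset.monotone_filter_right _ fun _ _ hw => Or.inl hw)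

theorem card_sends_le_card_inter_thin {v : V} (hv : degIn G S v ≤ 13) :
    ((nbrsIn G S v).filter fun w => Sends G S v w).card ≤ (nbrsIn G S v ∩ thin G S).card :=
  Finset.card_le_card fun w hw => by
    obtain ⟨hw, hs | hs⟩ := Finset.mem_filter.1 hw
    · omega
    · exact Finset.mem_inter.2 ⟨hw, hs.2.2⟩

theorem filter_sends_eq_empty {v : V} (hv : degIn G S v ≤ 13)
    (hv' : v ∈ light G S ∨ v ∈ thin G S) :
    ((nbrsIn G S v).filter fun w => Sends G S v w) = ∅ :=
  Finset.filter_eq_empty_iff.2 fun w _ hs => by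
    rcases hs with hs | ⟨hL, hT, -⟩
    · omega
    · exact hv'.elim hL hT

theorem degIn_sub_le_finalCharge (G : SimpleGraph V) [DecidableRel G.Adj] (S : Finset V) (v : V) :
    (degIn G S v : ℤ) - 14 ≤ finalCharge G S v := by
  have hsent : ((nbrsIn G S v).filter fun w => Sends G S v w).card ≤ degIn G S v :=
    Finset.card_le_card (Finset.filter_subset _ _)
  rw [finalCharge]
  omega

theorem le_finalCharge_of_mem_light {v : V} (hv : v ∈ light G S) :
    5 * ((degIn G S v : ℤ) - 2) ≤ finalCharge G S v := by
  obtain ⟨-, hdeg, hone, -⟩ := mem_light.1 hv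
  have hreceived := card_bigNbrs_le_card_sends (G := G) (S := S) v
  rw [finalCharge, filter_sends_eq_empty (by omega) (Or.inl hv), Finset.card_empty]
  omega

theorem neg_four_le_finalCharge_of_mem_thin {v : V} (hv : v ∈ thin G S) :
    -4 ≤ finalCharge G S v := by
  have hdeg := (mem_thin.1 hv).2.1
  rw [finalCharge, filter_sends_eq_empty (by omega) (Or.inr hv), Finset.card_empty]
  omega

namespace IsCritical

theorem finalCharge_nonneg_of_mem_thin (h : IsCritical G k D S) {v : V} (hv : v ∈ thin G S)
    (hv' : v ∉ enclosedThin G S (light G S)) : 0 ≤ finalCharge G S v := by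
  have hdeg := (mem_thin.1 hv).2.1
  obtain ⟨w, hw, hwL⟩ := Finset.not_subset.1 fun hs => hv' (mem_enclosedThin.2 ⟨hv, hs⟩)
  have hwT : w ∉ thin G S := fun hwT => h.not_adj_of_mem_thin hv hwT (mem_nbrsIn.1 hw).2
  have hreceived : 0 < ((nbrsIn G S v).filter fun w => Sends G S w v).card :=
    Finset.card_pos.2 ⟨w, Finset.mem_filter.2 ⟨hw, Or.inr ⟨hwL, hwT, hv⟩⟩⟩
  rw [finalCharge, filter_sends_eq_empty (by omega) (Or.inr hv), Finset.card_empty]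
  omega

theorem fourteen_add_four_mul_card_inter_thin_le (h : IsCritical G k D S) {v : V} (hv : v ∈ S)
    (hdeg : degIn G S v ≤ 13) (hL : v ∉ light G S) (hT : v ∉ thin G S) :
    14 + 4 * (nbrsIn G S v ∩ thin G S).card ≤ 5 * degIn G S v + 4 * (bigNbrs G S v).card := by
  have hsplit : (nbrsIn G S v \ thin G S).card + (nbrsIn G S v ∩ thin G S).card = degIn G S v :=
    Finset.card_sdiff_add_card_inter _ _
  have hsub : bigNbrs G S v ⊆ nbrsIn G S v \ thin G S := fun w hw => by
    obtain ⟨hw, hw14⟩ := mem_bigNbrs.1 hw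
    exact Finset.mem_sdiff.2 ⟨hw, notMem_thin_of_le_degIn hw14⟩
  have hle := Finset.card_le_card hsub
  rcases (bigNbrs G S v).eq_empty_or_nonempty with hbig | hbig
  · suffices 3 ≤ (nbrsIn G S v \ thin G S).card by omega
    rcases (nbrsIn G S v ∩ thin G S).eq_empty_or_nonempty with hempty | hne
    · have htwo : degIn G S v ≠ 2 := fun htwo => hT (mem_thin.2 ⟨hv, htwo, fun w hw => by
        have := Finset.filter_eq_empty_iff.1 hbig hw
        omega⟩)
      have := h.two_le_degIn hv
      rw [hempty, Finset.card_empty] at hsplit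
      omega
    · exact h.three_le_card_sdiff_thin hv hdeg hbig hne
  · have hpos := Finset.card_pos.2 hbig
    by_cases hone : (nbrsIn G S v \ thin G S).card = 1
    · have hsix : ¬ degIn G S v ≤ 5 := fun hfive => hL (mem_light.2 ⟨hv, hfive, by omega,
        (Finset.eq_of_subset_of_card_le hsub (by omega)).symm⟩)
      omega
    · omega

theorem finalCharge_nonneg_of_notMem_light (h : IsCritical G k D S) {v : V} (hv : v ∈ S)
    (hdeg : degIn G S v ≤ 13) (hL : v ∉ light G S) (hT : v ∉ thin G S) :
    0 ≤ finalCharge G S v := by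
  have hbound := h.fourteen_add_four_mul_card_inter_thin_le hv hdeg hL hT
  have hsent := card_sends_le_card_inter_thin hdeg
  have hreceived := card_bigNbrs_le_card_sends (G := G) (S := S) v
  rw [finalCharge]
  omega

theorem le_finalCharge (h : IsCritical G k D S) {v : V} (hv : v ∈ S) :
    (if 14 ≤ degIn G S v then (degIn G S v : ℤ) - 14 else 0) +
      (if v ∈ light G S then 5 * ((degIn G S v : ℤ) - 2) else 0) -
      (if v ∈ enclosedThin G S (light G S) then 4 else 0) ≤ finalCharge G S v := by
  by_cases h14 : 14 ≤ degIn G S v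
  · have hnot : v ∉ enclosedThin G S (light G S) := fun hE =>
      notMem_thin_of_le_degIn h14 (mem_enclosedThin.1 hE).1
    simpa [h14, notMem_light_of_le_degIn h14, hnot] using degIn_sub_le_finalCharge G S v
  by_cases hT : v ∈ thin G S
  · rw [if_neg h14, if_neg (notMem_light_of_mem_thin hT)]
    split_ifs with hE
    · exact neg_four_le_finalCharge_of_mem_thin hT
    · exact h.finalCharge_nonneg_of_mem_thin hT hE
  have hnot : v ∉ enclosedThin G S (light G S) := fun hE => hT (mem_enclosedThin.1 hE).1
  rw [if_neg h14, if_neg hnot, zero_add, sub_zero]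
  split_ifs with hL
  · exact le_finalCharge_of_mem_light hL
  · exact h.finalCharge_nonneg_of_notMem_light hv (by omega) hL hT

theorem ninetyTwo_mul_card_image_hub_le (h : IsCritical G k D S)
    (hx : ∀ u ∈ light G S, bigNbrs G S u = {x u}) :
    92 * (((light G S).image x).card : ℤ) ≤
      ∑ v ∈ S with 14 ≤ degIn G S v, ((degIn G S v : ℤ) - 14) := by
  have hhub : ∀ y ∈ (light G S).image x, y ∈ S ∧ D ≤ degIn G S y + 4 := fun y hy => by
    obtain ⟨u, hu, rfl⟩ := Finset.mem_image.1 hy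
    exact ⟨(mem_nbrsIn.1 (mem_bigNbrs.1 (hub_mem_bigNbrs hx hu)).1).1,
      h.le_degIn_of_light hu (hx u hu)⟩
  have hbound := h.le_bound
  rw [mul_comm, ← nsmul_eq_mul]
  refine (Finset.card_nsmul_le_sum _ (fun v => (degIn G S v : ℤ) - 14) _ fun y hy => ?_).trans
    (Finset.sum_le_sum_of_subset_of_nonneg (fun y hy => ?_) fun v hv _ => ?_)
  · have := (hhub y hy).2
    omega
  · obtain ⟨hyS, hyD⟩ := hhub y hy
    exact Finset.mem_filter.2 ⟨hyS, by omega⟩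
  · have := (Finset.mem_filter.1 hv).2
    omega

theorem le_sum_degIn (h : IsCritical G k D S) : 14 * S.card ≤ 5 * ∑ v ∈ S, degIn G S v := by
  have hexists : ∀ u, ∃ y, u ∈ light G S → bigNbrs G S u = {y} := fun u => by
    by_cases hu : u ∈ light G S
    · obtain ⟨y, hy⟩ := Finset.card_eq_one.1 (mem_light.1 hu).2.2.1
      exact ⟨y, fun _ => hy⟩
    · exact ⟨u, fun hu' => absurd hu' hu⟩
  choose x hx using hexists
  have henclosed := h.four_mul_card_enclosedThin_le subset_rfl hx
  have hhub := h.ninetyTwo_mul_card_image_hub_le hx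
  have hcharge := Finset.sum_le_sum fun v hv => h.le_finalCharge (v := v) hv
  have hES : enclosedThin G S (light G S) ⊆ S := (Finset.filter_subset _ _).trans thin_subset
  rw [sum_finalCharge, Finset.sum_sub_distrib, Finset.sum_add_distrib, Finset.sum_ite_mem,
    Finset.sum_ite_mem, Finset.inter_eq_right.2 light_subset, Finset.inter_eq_right.2 hES,
    ← Finset.sum_filter, Finset.sum_const, nsmul_eq_mul] at hcharge
  zify
  linarith

end IsCritical

end Discharging

section Main

variable {V : Type*} {G : SimpleGraph V} {k D : ℕ}

theorem IsPartialLabelling.lambdaNumber_le [Fintype V] {M : ℕ} {f : V → ℤ}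
    (hf : IsPartialLabelling G k M Finset.univ Finset.univ f) : G.lambdaNumber k 1 ≤ M := by
  refine Nat.sInf_le ⟨f, ⟨fun u v huv => ?_, fun u v huv _ ⟨w, huw, hwv⟩ => ?_⟩, fun v => ?_⟩
  · exact hf.le_abs_sub u (Finset.mem_univ u) v (Finset.mem_univ v) huv
  · exact Int.one_le_abs (sub_ne_zero.2 (hf.ne u (Finset.mem_univ u) v (Finset.mem_univ v) huv
      ⟨w, Finset.mem_univ w, huw, hwv⟩))
  · exact hf.mem_Icc v (Finset.mem_univ v)

variable [DecidableRel G.Adj]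

theorem exists_isPartialLabelling
    (hsparse : ∀ S : Finset V, S.Nonempty → 5 * ∑ v ∈ S, degIn G S v < 14 * S.card)
    (hk : 1 ≤ k) (hD : 190 + 2 * k ≤ D) {S : Finset V} (hdeg : ∀ v, degIn G S v ≤ D) :
    ∃ f, IsPartialLabelling G k (D + 2 * k - 1) S S f := by
  classical
  induction S using Finset.strongInduction with
  | H S ih =>
    by_contra hnot
    have hcritical : IsCritical G k D S := by
      refine ⟨hk, hD, hdeg, fun F hF hne => ih _ (Finset.sdiff_ssubset hF hne) fun v => ?_, hnot⟩
      exact (Finset.card_le_card (nbrsIn_subset_nbrsIn Finset.sdiff_subset v)).trans (hdeg v)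
    rcases S.eq_empty_or_nonempty with rfl | hne
    · exact hnot ⟨0, by simp, by simp, by simp⟩
    · exact (hsparse S hne).not_ge hcritical.le_sum_degIn

theorem lambdaNumber_girth_seven_general [Fintype V]
    (hsparse : ∀ S : Finset V, S.Nonempty → 5 * ∑ v ∈ S, degIn G S v < 14 * S.card)
    (hk : 1 ≤ k) (hD : 190 + 2 * k ≤ D) (hΔ : G.maxDegree ≤ D) :
    G.lambdaNumber k 1 ≤ D + 2 * k - 1 := by
  obtain ⟨f, hf⟩ := exists_isPartialLabelling (S := Finset.univ) hsparse hk hD fun v => by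
    rw [degIn, nbrsIn, ← SimpleGraph.neighborFinset_eq_filter,
      SimpleGraph.card_neighborFinset_eq_degree]
    exact (G.degree_le_maxDegree v).trans hΔ
  exact hf.lambdaNumber_le

end Main

/-- Dvořák et al.: for a planar graph `G` of girth at least `7` with `Δ(G) ≥ 190 + 2k`,
`λ_{k,1}(G) ≤ Δ(G) + 2k - 1`. -/
theorem lambdaNumber_girth_seven {V : Type*} [Fintype V] (G : SimpleGraph V)
    [DecidableRel G.Adj] (hG : G.IsPlanar) (k : ℕ) (hk : 1 ≤ k)
    (hgirth : (7 : ℕ∞) ≤ G.egirth) (hΔ : 190 + 2 * k ≤ G.maxDegree) :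
    G.lambdaNumber k 1 ≤ G.maxDegree + 2 * k - 1 :=
  lambdaNumber_girth_seven_general (fun _ => five_mul_sum_degIn_lt hG hgirth) hk hΔ le_rfl
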